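/- Let α ∈ [0,d] and p ∈ [1, 2d/(2d−α)]. There exists a compact set E ⊆ ℝ^d of Hausdorff dimension α such that p_res(E) = p. -/

import Mathlib

open MeasureTheory
open scoped FourierTransform ENNReal NNReal

/-- `p_res(E)`: the supremum of the exponents `p ∈ [1,2]` for which there are a Borel measure
`μ` with `μ(E) > 0`, an exponent `q ∈ [1,∞]` and a finite constant `C` such that
`‖f̂‖_{L^q(μ)} ≤ C ‖f‖_{L^p(ℝ^d)}` for every Schwartz function `f`. -/
noncomputable def pres {d : ℕ} (E : Set (EuclideanSpace ℝ (Fin d))) : ℝ :=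
  sSup {p : ℝ | p ∈ Set.Icc (1 : ℝ) 2 ∧
    ∃ (μ : Measure (EuclideanSpace ℝ (Fin d))) (q : ℝ≥0∞) (C : ℝ≥0),
      0 < μ E ∧ 1 ≤ q ∧
      ∀ f : SchwartzMap (EuclideanSpace ℝ (Fin d)) ℂ,
        eLpNorm (𝓕 ⇑f) q μ ≤ (C : ℝ≥0∞) * eLpNorm (⇑f) (ENNReal.ofReal p) volume}

/-!
Take `E = E₁ ∪ E₂`, where `E₁` has `p_res(E₁) = p` and the small dimension `β = 2d (1 - 1/p) ≤ α`,
while `E₂` has dimension `α` and satisfies no restriction estimate with exponent larger than `1`.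
A measure charging the union charges one of the two sets, so `p_res(E) = p`.

`E₁` is a Cantor set obtained by repeatedly cutting cubes and keeping a random selection of about
`N ^ β` cubes of side `1 / N`. By Bernstein's inequality and Maurey's empirical method, a random
sample of points has the restricted isometry property for the characters of `(ℤ/N)^d`. In the
limit this gives a measure `μ` with `∫ |f̂|² dμ ≲ |A| ^ (1 - β / d + ε) ‖f‖₂²` for all `f`
supported in a finite set `A ⊆ ℤ^d`. Decomposing `f` into its level sets turns this into a bound
`ℓ^y → L¹(μ)` for every `y < p`, which transfers from `ℤ^d` to `ℝ^d` by integrating over the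
cosets of `ℤ^d`. Conversely, covering `E₁` by `N ^ β` cubes of side `1 / N` and letting `f̂` be a
sum of bumps adapted to these cubes, one has `‖f‖_y ≲ N ^ (β / 2 - d (1 - 1 / y)) → 0` for
`y > p`, although `|f̂| ≥ 1` on `E₁`.

`E₂` is the set of the points whose coordinates have all binary digits outside a set `D ⊆ ℕ` equal
to `0`, where `D` has density `α / d` but long gaps. Multiplication by `2 ^ n`, with `n` the start
of a long gap, moves all coordinates close to integers, so many characters are simultaneously
close to `1` on `E₂`. Averaging translates of a bump over their frequencies makes `‖f‖_y` small
for all `y > 1` while `|f̂|` stays bounded below on `E₂`.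
-/

namespace FourierRestriction

open Finset Matrix

section Sampling

variable {P : Type*} [Fintype P] {w : P → ℝ}

lemma exists_le_of_sum_weight_mul_le (hw : w ∈ stdSimplex ℝ P) {Φ : P → ℝ} {c : ℝ}
    (h : ∑ p, w p * Φ p ≤ c) : ∃ p, Φ p ≤ c := by
  by_contra! hlt
  have hnonneg : ∀ p ∈ univ, 0 ≤ w p * (Φ p - c) := fun p _ ↦
    mul_nonneg (hw.1 p) (sub_nonneg.2 (hlt p).le)
  have hsum : ∑ p, w p * (Φ p - c) = 0 := by
    refine le_antisymm ?_ (sum_nonneg hnonneg)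
    simp_rw [mul_sub, sum_sub_distrib, ← sum_mul, hw.2]
    linarith
  have hzero : ∀ p, w p = 0 := fun p ↦
    (mul_eq_zero.1 ((sum_eq_zero_iff_of_nonneg hnonneg).1 hsum p (mem_univ p))).resolve_right
      (sub_pos.2 (hlt p)).ne'
  simpa [hzero] using hw.2

lemma prod_mem_stdSimplex (hw : w ∈ stdSimplex ℝ P) (M : ℕ) :
    (fun s : Fin M → P ↦ ∏ i, w (s i)) ∈ stdSimplex ℝ (Fin M → P) :=
  ⟨fun _ ↦ prod_nonneg fun _ _ ↦ hw.1 _, by rw [← Fintype.sum_pow, hw.2, one_pow]⟩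

lemma sum_weight_mul_exp_le (hw : w ∈ stdSimplex ℝ P) {f : P → ℝ} (hf : ∀ p, |f p| ≤ 1) :
    ∑ p, w p * Real.exp (f p) ≤ Real.exp (∑ p, w p * (f p + f p ^ 2)) :=
  calc ∑ p, w p * Real.exp (f p) ≤ ∑ p, w p * (1 + (f p + f p ^ 2)) := by
        gcongr with p
        · exact hw.1 p
        · linarith [(abs_le.1 (Real.abs_exp_sub_one_sub_id_le (hf p))).2]
    _ = ∑ p, w p * (f p + f p ^ 2) + 1 := by simp_rw [mul_add, mul_one, sum_add_distrib, hw.2]; ring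
    _ ≤ _ := Real.add_one_le_exp _

theorem exists_sample_sum_le {H : Type*} [Fintype H] (hw : w ∈ stdSimplex ℝ P) {f : H → P → ℝ}
    (hf : ∀ h p, |f h p| ≤ 1) {t : H → ℝ} (ht : ∑ h, Real.exp (-t h) ≤ 1) (M : ℕ) :
    ∃ s : Fin M → P, ∀ h, ∑ i, f h (s i) ≤ M * ∑ p, w p * (f h p + f h p ^ 2) + t h := by
  set c : H → ℝ := fun h ↦ M * ∑ p, w p * (f h p + f h p ^ 2) + t h with hc
  have hmean : ∀ h, ∑ s : Fin M → P, (∏ i, w (s i)) * Real.exp (∑ i, f h (s i) - c h) ≤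
      Real.exp (-t h) := fun h ↦
    calc ∑ s : Fin M → P, (∏ i, w (s i)) * Real.exp (∑ i, f h (s i) - c h)
        = (∑ p, w p * Real.exp (f h p)) ^ M * Real.exp (-c h) := by
          simp_rw [Fintype.sum_pow, sum_mul, sub_eq_add_neg, Real.exp_add, Real.exp_sum,
            prod_mul_distrib, mul_assoc]
      _ ≤ Real.exp (∑ p, w p * (f h p + f h p ^ 2)) ^ M * Real.exp (-c h) := by
          gcongr
          · exact sum_nonneg fun p _ ↦ mul_nonneg (hw.1 p) (Real.exp_pos _).le
          · exact sum_weight_mul_exp_le hw (hf h)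
      _ = Real.exp (-t h) := by
          rw [← Real.exp_nat_mul, ← Real.exp_add, hc]
          ring_nf
  obtain ⟨s, hs⟩ : ∃ s : Fin M → P, ∑ h, Real.exp (∑ i, f h (s i) - c h) ≤ 1 := by
    refine exists_le_of_sum_weight_mul_le (prod_mem_stdSimplex hw M) ?_
    simp_rw [mul_sum]
    rw [sum_comm]
    exact (sum_le_sum fun h _ ↦ hmean h).trans ht
  refine ⟨s, fun h ↦ ?_⟩
  have hterm := (single_le_sum (fun h _ ↦ (Real.exp_pos (∑ i, f h (s i) - c h)).le)
    (mem_univ h)).trans hs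
  linarith [Real.exp_le_one_iff.1 hterm]

lemma norm_le_of_forall_re_I_pow_mul_le {z : ℂ} {B : ℝ}
    (h : ∀ k : Fin 4, (Complex.I ^ (k : ℕ) * z).re ≤ B) : ‖z‖ ≤ 2 * B := by
  have h0 : z.re ≤ B := by simpa using h 0
  have h1 : -z.im ≤ B := by simpa using h 1
  have h2 : -z.re ≤ B := by simpa using h 2
  have h3 : z.im ≤ B := by simpa [pow_succ] using h 3
  have hre : |z.re| ≤ B := abs_le.2 ⟨by linarith, by linarith⟩
  have him : |z.im| ≤ B := abs_le.2 ⟨by linarith, by linarith⟩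
  linarith [Complex.norm_le_abs_re_add_abs_im z]

lemma norm_weighted_sum_le (hw : w ∈ stdSimplex ℝ P) {F : P → ℂ} (hF : ∀ p, ‖F p‖ ≤ 1) :
    ‖∑ p, (w p : ℂ) * F p‖ ≤ 1 :=
  calc ‖∑ p, (w p : ℂ) * F p‖ ≤ ∑ p, w p * 1 := norm_sum_le_of_le _ fun p _ ↦ by
        rw [norm_mul, Complex.norm_real, Real.norm_of_nonneg (hw.1 p)]
        exact mul_le_mul_of_nonneg_left (hF p) (hw.1 p)
    _ = 1 := by simpa using hw.2

/-- The component in direction `I ^ k` of the deviation of `F` from its `w`-weighted mean. Four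
directions suffice to control a complex number up to a factor `2`. -/
noncomputable def deviation (w : P → ℝ) (F : P → ℂ) (k : Fin 4) (p : P) : ℝ :=
  (Complex.I ^ (k : ℕ) * (F p - ∑ q, (w q : ℂ) * F q)).re

lemma sum_weight_mul_deviation (hw : w ∈ stdSimplex ℝ P) (F : P → ℂ) (k : Fin 4) :
    ∑ p, w p * deviation w F k p = 0 := by
  have hw1 : ∑ p, (w p : ℂ) = 1 := by exact_mod_cast hw.2
  have : ∑ p, (w p : ℂ) * (Complex.I ^ (k : ℕ) * (F p - ∑ q, (w q : ℂ) * F q)) = 0 := by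
    simp_rw [mul_left_comm _ (Complex.I ^ _), mul_sub, sum_sub_distrib, ← mul_sum, ← sum_mul, hw1]
    ring
  simpa only [deviation, Complex.re_sum, Complex.re_ofReal_mul, Complex.zero_re] using
    congrArg Complex.re this

lemma abs_deviation_le_two (hw : w ∈ stdSimplex ℝ P) {F : P → ℂ} (hF : ∀ p, ‖F p‖ ≤ 1)
    (k : Fin 4) (p : P) : |deviation w F k p| ≤ 2 :=
  calc |deviation w F k p| ≤ ‖Complex.I ^ (k : ℕ) * (F p - ∑ q, (w q : ℂ) * F q)‖ :=
        Complex.abs_re_le_norm _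
    _ = ‖F p - ∑ q, (w q : ℂ) * F q‖ := by simp
    _ ≤ 2 := (norm_sub_le _ _).trans (by linarith [hF p, norm_weighted_sum_le hw hF])

lemma norm_sum_sub_le_of_sum_deviation_le {F : P → ℂ} {M : ℕ} {B : ℝ} {s : Fin M → P}
    (h : ∀ k, ∑ i, deviation w F k (s i) ≤ B) :
    ‖∑ i, F (s i) - M * ∑ p, (w p : ℂ) * F p‖ ≤ 2 * B := by
  refine norm_le_of_forall_re_I_pow_mul_le fun k ↦ le_of_eq_of_le ?_ (h k)
  simp only [deviation, ← Complex.re_sum, ← mul_sum, sum_sub_distrib, sum_const, card_univ,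
    Fintype.card_fin, nsmul_eq_mul]

lemma sum_weight_mul_scaled_deviation_le (hw : w ∈ stdSimplex ℝ P) {F : P → ℂ}
    (hF : ∀ p, ‖F p‖ ≤ 1) (k : Fin 4) (θ : ℝ) :
    ∑ p, w p * (θ / 16 * deviation w F k p + (θ / 16 * deviation w F k p) ^ 2) ≤ θ ^ 2 / 64 := by
  have hmean : ∑ p, w p * (θ / 16 * deviation w F k p) = 0 := by
    simp_rw [mul_left_comm _ (θ / 16), ← mul_sum, sum_weight_mul_deviation hw, mul_zero]
  calc ∑ p, w p * (θ / 16 * deviation w F k p + (θ / 16 * deviation w F k p) ^ 2)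
      = ∑ p, w p * (θ / 16 * deviation w F k p) ^ 2 := by
        simp_rw [mul_add, sum_add_distrib, hmean, zero_add]
    _ ≤ ∑ p, w p * (θ ^ 2 / 64) := by
        gcongr with p
        · exact hw.1 p
        · have hsq : deviation w F k p ^ 2 ≤ 2 ^ 2 := sq_le_sq' (abs_le.1
            (abs_deviation_le_two hw hF k p)).1 (abs_le.1 (abs_deviation_le_two hw hF k p)).2
          nlinarith [mul_le_mul_of_nonneg_left hsq (sq_nonneg θ)]
    _ = θ ^ 2 / 64 := by rw [← sum_mul, hw.2, one_mul]

/-- Bernstein's exponential-moment method, with a union bound over all the constraints. -/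
theorem exists_sample {X J : Type*} [Fintype X] [Fintype J] [DecidableEq P]
    (hw : w ∈ stdSimplex ℝ P) {F : X → P → ℂ} (hF : ∀ x p, ‖F x p‖ ≤ 1) (D : J → Finset P)
    {b : J → ℝ} (hb : ∑ j, Real.exp (-b j) ≤ 1 / 2) {M : ℕ} {θ ℓ : ℝ} (hθ : 0 < θ) (hθ1 : θ ≤ 1)
    (hℓ : 8 * (Fintype.card X : ℝ) ≤ Real.exp ℓ) (hM : 64 * ℓ ≤ M * θ ^ 2) :
    ∃ s : Fin M → P, (∀ x, ‖∑ i, F x (s i) - M * ∑ p, (w p : ℂ) * F x p‖ ≤ M * θ) ∧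
      ∀ j, (#{i | s i ∈ D j} : ℝ) ≤ 2 * M * ∑ p ∈ D j, w p + b j := by
  let f : (X × Fin 4) ⊕ J → P → ℝ := Sum.elim (fun xk p ↦ θ / 16 * deviation w (F xk.1) xk.2 p)
    fun j p ↦ if p ∈ D j then 1 else 0
  have hf : ∀ h p, |f h p| ≤ 1 := by
    rintro (⟨x, k⟩ | j) p
    · simp only [f, Sum.elim_inl, abs_mul, abs_of_pos (by positivity : 0 < θ / 16)]
      nlinarith [abs_deviation_le_two hw (hF x) k p]
    · simp only [f, Sum.elim_inr]
      split_ifs <;> simp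
  have ht : ∑ h, Real.exp (-Sum.elim (fun _ : X × Fin 4 ↦ ℓ) b h) ≤ 1 := by
    have : (Fintype.card X * 4 : ℝ) * Real.exp (-ℓ) ≤ 1 / 2 := by
      rw [Real.exp_neg, ← div_eq_mul_inv, div_le_iff₀ (Real.exp_pos ℓ)]
      linarith
    simp only [Fintype.sum_sum_type, Sum.elim_inl, Sum.elim_inr, sum_const, card_univ,
      Fintype.card_prod, Fintype.card_fin, nsmul_eq_mul, Nat.cast_mul, Nat.cast_ofNat]
    linarith
  obtain ⟨s, hs⟩ := exists_sample_sum_le hw hf ht M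
  refine ⟨s, fun x ↦ ?_, fun j ↦ ?_⟩
  · rw [show (M : ℝ) * θ = 2 * (M * θ / 2) by ring]
    refine norm_sum_sub_le_of_sum_deviation_le fun k ↦ ?_
    have hkey := hs (Sum.inl (x, k))
    simp only [f, Sum.elim_inl, ← mul_sum] at hkey
    refine le_of_mul_le_mul_left (hkey.trans ?_) (by positivity : 0 < θ / 16)
    nlinarith [mul_le_mul_of_nonneg_left (sum_weight_mul_scaled_deviation_le hw (hF x) k θ)
      (Nat.cast_nonneg M : (0 : ℝ) ≤ M)]
  · have hkey := hs (Sum.inr j)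
    simp only [f, Sum.elim_inr, ite_pow, one_pow, ne_eq, OfNat.ofNat_ne_zero, not_false_eq_true,
      zero_pow, sum_boole, mul_add, mul_ite, mul_one, mul_zero, sum_add_distrib, sum_ite_mem,
      univ_inter] at hkey
    linarith

end Sampling

section RestrictedIsometry

variable {X P : Type*} [Fintype X] {χ : Matrix X P ℂ}

lemma norm_vecMul_le (hχ : ∀ x p, ‖χ x p‖ ≤ 1) (f : X → ℂ) (p : P) :
    ‖(f ᵥ* χ) p‖ ≤ ∑ x, ‖f x‖ :=
  norm_sum_le_of_le _ fun x _ ↦ by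
    simpa using mul_le_mul_of_nonneg_left (hχ x p) (norm_nonneg (f x))

lemma norm_vecMul_sq_le (hχ : ∀ x p, ‖χ x p‖ ≤ 1) (f : X → ℂ) (p : P) :
    ‖(f ᵥ* χ) p‖ ^ 2 ≤ Fintype.card X * ∑ x, ‖f x‖ ^ 2 :=
  (pow_le_pow_left₀ (norm_nonneg _) (norm_vecMul_le hχ f p) 2).trans
    sq_sum_le_card_mul_sum_sq

/-- The `ℓ¹` norm of `f` for the norm `|re z| + |im z|` on `ℂ`, the gauge of the convex hull of the
fourth roots of unity. -/
noncomputable def reImNorm (f : X → ℂ) : ℝ := ∑ x, (|(f x).re| + |(f x).im|)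

lemma reImNorm_nonneg (f : X → ℂ) : 0 ≤ reImNorm f := sum_nonneg fun _ _ ↦ by positivity

lemma sum_norm_le_reImNorm (f : X → ℂ) : ∑ x, ‖f x‖ ≤ reImNorm f :=
  sum_le_sum fun _ _ ↦ Complex.norm_le_abs_re_add_abs_im _

lemma reImNorm_sq_le {f : X → ℂ} {A : Finset X} (hA : ∀ x ∉ A, f x = 0) :
    reImNorm f ^ 2 ≤ 2 * #A * ∑ x, ‖f x‖ ^ 2 := by
  have hsub : reImNorm f = ∑ x ∈ A, (|(f x).re| + |(f x).im|) :=
    (sum_subset (subset_univ A) fun x _ hx ↦ by simp [hA x hx]).symm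
  calc reImNorm f ^ 2 ≤ #A * ∑ x ∈ A, (|(f x).re| + |(f x).im|) ^ 2 :=
        hsub ▸ sq_sum_le_card_mul_sum_sq
    _ ≤ #A * ∑ x ∈ A, 2 * ‖f x‖ ^ 2 := by
        gcongr with x
        rw [← Complex.normSq_eq_norm_sq, Complex.normSq_apply]
        nlinarith [sq_nonneg (|(f x).re| - |(f x).im|), sq_abs (f x).re, sq_abs (f x).im]
    _ ≤ #A * ∑ x, 2 * ‖f x‖ ^ 2 := by
        gcongr
        exact subset_univ A
    _ = 2 * #A * ∑ x, ‖f x‖ ^ 2 := by rw [← mul_sum]; ring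

/-- A sum of `m` rows of `χ`, repetitions allowed, multiplied by fourth roots of unity. -/
noncomputable def atomSum (χ : Matrix X P ℂ) {m : ℕ} (h : Fin m → X × Fin 4) (p : P) : ℂ :=
  ∑ j, Complex.I ^ ((h j).2 : ℕ) * χ (h j).1 p

/-- The weights writing `f` as `reImNorm f` times a convex combination of fourth roots of unity
placed at points of `X`. -/
noncomputable def atomWeight (f : X → ℂ) (a : X × Fin 4) : ℝ :=
  max (![(f a.1).re, (f a.1).im, -(f a.1).re, -(f a.1).im] a.2) 0 / reImNorm f

lemma atomWeight_mem_stdSimplex {f : X → ℂ} (hf : 0 < reImNorm f) :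
    atomWeight f ∈ stdSimplex ℝ (X × Fin 4) := by
  refine ⟨fun a ↦ div_nonneg (le_max_right _ _) hf.le, ?_⟩
  simp_rw [atomWeight, ← sum_div, Fintype.sum_prod_type]
  refine (div_eq_one_iff_eq hf.ne').2 (sum_congr rfl fun x _ ↦ ?_)
  have hsplit (a : ℝ) : max a 0 + max (-a) 0 = |a| := by
    rcases le_total 0 a with h | h <;> simp [h, abs_of_nonneg, abs_of_nonpos]
  simp only [Fin.sum_univ_four, Matrix.cons_val]
  linarith [hsplit (f x).re, hsplit (f x).im]

lemma sum_atomWeight_mul (χ : Matrix X P ℂ) (f : X → ℂ) (p : P) :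
    ∑ a, (atomWeight f a : ℂ) * (Complex.I ^ (a.2 : ℕ) * χ a.1 p) =
      (f ᵥ* χ) p / reImNorm f := by
  have hsplit (a : ℝ) : ((max a 0 : ℝ) : ℂ) - (max (-a) 0 : ℝ) = a := by
    rw [← Complex.ofReal_sub]
    rcases le_total 0 a with h | h <;> simp [h]
  simp_rw [vecMul, dotProduct, sum_div, Fintype.sum_prod_type]
  refine sum_congr rfl fun x _ ↦ ?_
  simp only [atomWeight, Fin.sum_univ_four, Fin.val_zero, Fin.val_one, Fin.val_two, pow_zero,
    pow_one, Complex.I_sq, show ((3 : Fin 4) : ℕ) = 3 from rfl, Complex.I_pow_three,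
    Matrix.cons_val, Complex.ofReal_div]
  linear_combination χ x p / reImNorm f *
    (hsplit (f x).re + Complex.I * hsplit (f x).im + Complex.re_add_im (f x))

/-- Maurey's empirical method: sample `m` atoms with the probabilities `atomWeight f`. -/
lemma exists_atomSum_near [Fintype P] (hχ : ∀ x p, ‖χ x p‖ ≤ 1) {ℓ : ℝ} (hℓ0 : 0 < ℓ)
    (hℓ : 8 * (Fintype.card P : ℝ) ≤ Real.exp ℓ) {m : ℕ} (hm : 64 * ℓ ≤ m) {f : X → ℂ}
    (hf : 0 < reImNorm f) :
    ∃ h : Fin m → X × Fin 4, ∀ p,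
      ‖atomSum χ h p - m * ((f ᵥ* χ) p / reImNorm f)‖ ≤ 8 * √(ℓ * m) := by
  classical
  have hm0 : (0 : ℝ) < m := by linarith
  have hθ : 8 * √(ℓ / m) ≤ 1 := by
    have : √(ℓ / m) ≤ 1 / 8 := Real.sqrt_le_iff.2 ⟨by norm_num, by rw [div_le_iff₀ hm0]; linarith⟩
    linarith
  have hmθ : m * (8 * √(ℓ / m)) = 8 * √(ℓ * m) := by
    rw [show ℓ * m = ℓ / m * (m * m) by field_simp, Real.sqrt_mul (by positivity),
      Real.sqrt_mul_self hm0.le]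
    ring
  obtain ⟨h, hh, -⟩ := exists_sample (J := Empty) (M := m) (θ := 8 * √(ℓ / m)) (b := fun _ ↦ 0)
    (F := fun p (a : X × Fin 4) ↦ Complex.I ^ (a.2 : ℕ) * χ a.1 p)
    (atomWeight_mem_stdSimplex hf) (fun p a ↦ by simpa using hχ a.1 p) (fun _ ↦ ∅) (by simp)
    (by positivity) hθ hℓ (by rw [mul_pow, Real.sq_sqrt (by positivity)]; field_simp; norm_num)
  refine ⟨h, fun p ↦ ?_⟩
  rw [← hmθ, ← sum_atomWeight_mul]
  exact hh p

lemma sum_exp_neg_atoms_le {n : ℕ} (hn : 1 ≤ n) (hX : Fintype.card X ≤ n) {ℓ : ℝ}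
    (hℓ : 8 * (n : ℝ) ≤ Real.exp ℓ) (K : ℕ) :
    ∑ a : Σ m : Fin K, (Fin m → X × Fin 4), Real.exp (-(((a.1 : ℕ) + 2) * ℓ)) ≤ 1 / 2 := by
  have hn' : (1 : ℝ) ≤ n := by exact_mod_cast hn
  have hexp : Real.exp (-ℓ) ≤ 1 / 8 := by
    rw [Real.exp_neg, inv_le_comm₀ (Real.exp_pos ℓ) (by norm_num)]
    linarith
  have hratio : (Fintype.card X * 4 : ℝ) * Real.exp (-ℓ) ≤ 1 / 2 := by
    rw [Real.exp_neg, ← div_eq_mul_inv, div_le_iff₀ (Real.exp_pos ℓ)]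
    linarith [(by exact_mod_cast hX : (Fintype.card X : ℝ) ≤ n)]
  calc ∑ a : Σ m : Fin K, (Fin m → X × Fin 4), Real.exp (-(((a.1 : ℕ) + 2) * ℓ))
      = ∑ m ∈ range K, ((Fintype.card X * 4) * Real.exp (-ℓ)) ^ m * Real.exp (-ℓ) ^ 2 := by
        rw [Fintype.sum_sigma, ← Fin.sum_univ_eq_sum_range
          (fun m ↦ ((Fintype.card X * 4 : ℝ) * Real.exp (-ℓ)) ^ m * Real.exp (-ℓ) ^ 2)]
        refine sum_congr rfl fun m _ ↦ ?_
        simp only [sum_const, card_univ, Fintype.card_pi, prod_const, Fintype.card_prod,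
          Fintype.card_fin, nsmul_eq_mul, Nat.cast_pow, Nat.cast_mul, Nat.cast_ofNat, mul_pow,
          ← Real.exp_nat_mul]
        rw [mul_assoc (_ * _), ← Real.exp_add]
        ring_nf
    _ ≤ ∑ m ∈ range K, (1 / 2 : ℝ) ^ m * (1 / 8) ^ 2 := by gcongr
    _ ≤ 2 * (1 / 8) ^ 2 := by
        rw [← sum_mul]
        gcongr
        exact sum_geometric_two_le K
    _ ≤ 1 / 2 := by norm_num

lemma one_le_of_eight_le_exp {ℓ : ℝ} (hℓ : 8 ≤ Real.exp ℓ) : 1 ≤ ℓ :=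
  Real.exp_le_exp.1 (by linarith [Real.exp_one_lt_d9])

/-- The property of a random sample `s` from which the restricted isometry property follows: no
signed sum of at most `K` rows is large at many more sample points than expected. -/
def HasAtomCounts (χ : Matrix X P ℂ) [Fintype P] (w : P → ℝ) (ℓ : ℝ) (K : ℕ) {M : ℕ}
    (s : Fin M → P) : Prop :=
  ∀ m < K, ∀ h : Fin m → X × Fin 4,
    (#{i | 24 * √(ℓ * m) ≤ ‖atomSum χ h (s i)‖} : ℝ) ≤
      2 * M * ∑ p with 24 * √(ℓ * m) ≤ ‖atomSum χ h p‖, w p + (m + 2) * ℓ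

variable [Fintype P] {w : P → ℝ} {n : ℕ} {ℓ : ℝ}

lemma exists_sample_hasAtomCounts (hχ : ∀ x p, ‖χ x p‖ ≤ 1) (hw : w ∈ stdSimplex ℝ P)
    (hn : 1 ≤ n) (hX : Fintype.card X ≤ n) (hℓ : 8 * (n : ℝ) ≤ Real.exp ℓ) {M : ℕ} {θ : ℝ}
    (hθ : 0 < θ) (hθ1 : θ ≤ 1) (hM : 64 * ℓ ≤ M * θ ^ 2) (K : ℕ) :
    ∃ s : Fin M → P, (∀ x, ‖∑ i, χ x (s i) - M * ∑ p, (w p : ℂ) * χ x p‖ ≤ M * θ) ∧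
      HasAtomCounts χ w ℓ K s := by
  classical
  obtain ⟨s, hmean, hcount⟩ := exists_sample (J := Σ m : Fin K, (Fin m → X × Fin 4)) hw hχ
    (fun a ↦ {p | 24 * √(ℓ * (a.1 : ℕ)) ≤ ‖atomSum χ a.2 p‖}) (sum_exp_neg_atoms_le hn hX hℓ K)
    hθ hθ1 ((by gcongr : 8 * (Fintype.card X : ℝ) ≤ 8 * n).trans hℓ) hM
  refine ⟨s, hmean, fun m hm h ↦ ?_⟩
  simpa only [mem_filter, mem_univ, true_and] using hcount ⟨⟨m, hm⟩, h⟩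

omit [Fintype P] in
lemma le_norm_atomSum {m : ℕ} {f : X → ℂ} {τ : ℝ} (hf : 0 < reImNorm f) (hℓ0 : 0 ≤ ℓ)
    {h : Fin m → X × Fin 4} {p : P}
    (hnear : ‖atomSum χ h p - m * ((f ᵥ* χ) p / reImNorm f)‖ ≤ 8 * √(ℓ * m))
    (hm : 1024 * ℓ * reImNorm f ^ 2 ≤ m * τ) (hτ : τ ≤ ‖(f ᵥ* χ) p‖ ^ 2) :
    24 * √(ℓ * m) ≤ ‖atomSum χ h p‖ := by
  have hbig : 32 * √(ℓ * m) ≤ ‖m * ((f ᵥ* χ) p / reImNorm f)‖ := by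
    rw [norm_mul, norm_div, Complex.norm_real, Complex.norm_natCast, Real.norm_of_nonneg hf.le]
    refine (sq_le_sq₀ (by positivity) (by positivity)).1 ?_
    rw [mul_pow, Real.sq_sqrt (by positivity), mul_pow, div_pow, mul_div_assoc',
      le_div_iff₀ (by positivity)]
    nlinarith [mul_le_mul_of_nonneg_left hτ (Nat.cast_nonneg m : (0 : ℝ) ≤ m),
      (Nat.cast_nonneg m : (0 : ℝ) ≤ m)]
  linarith [norm_sub_norm_le (m * ((f ᵥ* χ) p / reImNorm f)) (atomSum χ h p),
    norm_sub_rev (atomSum χ h p) (m * ((f ᵥ* χ) p / reImNorm f))]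

omit [Fintype P] in
lemma le_norm_vecMul_sq {m : ℕ} {f : X → ℂ} {τ : ℝ} (hf : 0 < reImNorm f) (hℓ0 : 0 < ℓ)
    (hm0 : 0 < m) {h : Fin m → X × Fin 4} {p : P}
    (hnear : ‖atomSum χ h p - m * ((f ᵥ* χ) p / reImNorm f)‖ ≤ 8 * √(ℓ * m))
    (hm : m * τ ≤ 2048 * ℓ * reImNorm f ^ 2) (hlarge : 24 * √(ℓ * m) ≤ ‖atomSum χ h p‖) :
    τ / 8 ≤ ‖(f ᵥ* χ) p‖ ^ 2 := by
  have : (0 : ℝ) < m := by exact_mod_cast hm0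
  have hbig : 16 * √(ℓ * m) ≤ m * (‖(f ᵥ* χ) p‖ / reImNorm f) := by
    have hnorm : ‖m * ((f ᵥ* χ) p / reImNorm f)‖ = m * (‖(f ᵥ* χ) p‖ / reImNorm f) := by
      rw [norm_mul, norm_div, Complex.norm_real, Complex.norm_natCast, Real.norm_of_nonneg hf.le]
    linarith [norm_sub_norm_le (atomSum χ h p) (m * ((f ᵥ* χ) p / reImNorm f))]
  have hsq := pow_le_pow_left₀ (by positivity) hbig 2
  rw [mul_pow, Real.sq_sqrt (by positivity), mul_pow, div_pow, mul_div_assoc',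
    le_div_iff₀ (by positivity)] at hsq
  refine le_of_mul_le_mul_left (?_ : (m : ℝ) ^ 2 * (τ / 8) ≤ m ^ 2 * _) (by positivity)
  nlinarith

lemma sum_weight_large_le (hw : w ∈ stdSimplex ℝ P) {B τ : ℝ} {f : X → ℂ}
    (hB : ∑ p, w p * ‖(f ᵥ* χ) p‖ ^ 2 ≤ B) {S : Finset P}
    (hS : ∀ p ∈ S, τ ≤ ‖(f ᵥ* χ) p‖ ^ 2) : τ * ∑ p ∈ S, w p ≤ B :=
  calc τ * ∑ p ∈ S, w p ≤ ∑ p ∈ S, w p * ‖(f ᵥ* χ) p‖ ^ 2 := by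
        rw [mul_sum]
        exact sum_le_sum fun p hp ↦ by
          rw [mul_comm]
          exact mul_le_mul_of_nonneg_left (hS p hp) (hw.1 p)
    _ ≤ ∑ p, w p * ‖(f ᵥ* χ) p‖ ^ 2 := sum_le_univ_sum_of_nonneg fun p ↦
        mul_nonneg (hw.1 p) (sq_nonneg _)
    _ ≤ B := hB

lemma exists_atom_scale {ρ τ : ℝ} (hℓ : 1 ≤ ℓ) (hτ0 : 0 < τ) (hτρ : τ ≤ ρ ^ 2) :
    ∃ m : ℕ, 1024 * ℓ ≤ m ∧ 1024 * ℓ * ρ ^ 2 ≤ m * τ ∧ m * τ ≤ 2048 * ℓ * ρ ^ 2 := by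
  have hlow := (div_le_iff₀ hτ0).1 (Nat.le_ceil (1024 * ℓ * ρ ^ 2 / τ))
  refine ⟨⌈1024 * ℓ * ρ ^ 2 / τ⌉₊, le_of_mul_le_mul_right (le_trans ?_ hlow) hτ0, hlow, ?_⟩
  · nlinarith
  · have hup := mul_le_mul_of_nonneg_right (Nat.ceil_lt_add_one
      (by positivity : 0 ≤ 1024 * ℓ * ρ ^ 2 / τ)).le hτ0.le
    rw [add_mul, div_mul_cancel₀ _ hτ0.ne'] at hup
    nlinarith

lemma HasAtomCounts.mul_card_large_le_of_scale (hχ : ∀ x p, ‖χ x p‖ ≤ 1)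
    (hw : w ∈ stdSimplex ℝ P) (hℓ1 : 1 ≤ ℓ) (hℓ : 8 * (Fintype.card P : ℝ) ≤ Real.exp ℓ)
    {M K m : ℕ} {s : Fin M → P} (hs : HasAtomCounts χ w ℓ K s) (hmK : m < K) {f : X → ℂ}
    (hf : 0 < reImNorm f) {B τ : ℝ} (hB : ∑ p, w p * ‖(f ᵥ* χ) p‖ ^ 2 ≤ B) (hτ : 0 < τ)
    (hmℓ : 1024 * ℓ ≤ m) (hm1 : 1024 * ℓ * reImNorm f ^ 2 ≤ m * τ)
    (hm2 : m * τ ≤ 2048 * ℓ * reImNorm f ^ 2) :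
    τ * #{i | τ ≤ ‖(f ᵥ* χ) (s i)‖ ^ 2} ≤ 16 * M * B + 6144 * ℓ ^ 2 * reImNorm f ^ 2 := by
  have hℓ0 : 0 < ℓ := by linarith
  have hm0 : 0 < m := by exact_mod_cast (by linarith : (0 : ℝ) < m)
  obtain ⟨h, hnear⟩ := exists_atomSum_near hχ hℓ0 hℓ (by linarith) hf
  have hcount : (#{i | τ ≤ ‖(f ᵥ* χ) (s i)‖ ^ 2} : ℝ) ≤
      2 * M * ∑ p with 24 * √(ℓ * m) ≤ ‖atomSum χ h p‖, w p + (m + 2) * ℓ :=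
    (Nat.cast_le.2 <| card_le_card <| monotone_filter_right univ fun i _ hi ↦
      le_norm_atomSum hf hℓ0.le (hnear (s i)) hm1 hi).trans (hs m hmK h)
  have hweight : τ / 8 * ∑ p with 24 * √(ℓ * m) ≤ ‖atomSum χ h p‖, w p ≤ B :=
    sum_weight_large_le hw hB fun p hp ↦
      le_norm_vecMul_sq hf hℓ0 hm0 (hnear p) hm2 (mem_filter.1 hp).2
  calc τ * #{i | τ ≤ ‖(f ᵥ* χ) (s i)‖ ^ 2}
      ≤ τ * (2 * M * ∑ p with 24 * √(ℓ * m) ≤ ‖atomSum χ h p‖, w p + (m + 2) * ℓ) := by gcongr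
    _ = 16 * M * (τ / 8 * ∑ p with 24 * √(ℓ * m) ≤ ‖atomSum χ h p‖, w p) +
        (m * τ + 2 * τ) * ℓ := by ring
    _ ≤ 16 * M * B + (2048 * ℓ * reImNorm f ^ 2 + 2 * (2048 * ℓ * reImNorm f ^ 2)) * ℓ := by
        gcongr
        nlinarith
    _ = 16 * M * B + 6144 * ℓ ^ 2 * reImNorm f ^ 2 := by ring

/-- The weak-type bound: at level `τ`, approximate `f ᵥ* χ` by a sum of about
`ℓ * reImNorm f ^ 2 / τ` signed rows and compare with the expected number of large values. -/
lemma HasAtomCounts.mul_card_large_le (hχ : ∀ x p, ‖χ x p‖ ≤ 1) (hw : w ∈ stdSimplex ℝ P)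
    (hℓ1 : 1 ≤ ℓ) (hℓ : 8 * (Fintype.card P : ℝ) ≤ Real.exp ℓ) {M K : ℕ} {s : Fin M → P}
    (hs : HasAtomCounts χ w ℓ K s) {f : X → ℂ} {A : Finset X} (hA : ∀ x ∉ A, f x = 0)
    (hK : 4096 * ℓ * #A < K) {B : ℝ} (hB : ∑ p, w p * ‖(f ᵥ* χ) p‖ ^ 2 ≤ B) {τ : ℝ}
    (hτ0 : 0 < τ) (hτ : ∑ x, ‖f x‖ ^ 2 ≤ τ) :
    τ * #{i | τ ≤ ‖(f ᵥ* χ) (s i)‖ ^ 2} ≤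
      16 * M * B + 12288 * ℓ ^ 2 * #A * ∑ x, ‖f x‖ ^ 2 := by
  have hF : reImNorm f ^ 2 ≤ 2 * #A * ∑ x, ‖f x‖ ^ 2 := reImNorm_sq_le hA
  have hB0 : 0 ≤ B := (sum_nonneg fun p _ ↦ mul_nonneg (hw.1 p) (sq_nonneg _)).trans hB
  obtain hτρ | hτρ := lt_or_ge (reImNorm f ^ 2) τ
  · have hempty : #{i | τ ≤ ‖(f ᵥ* χ) (s i)‖ ^ 2} = 0 :=
      card_eq_zero.2 <| filter_eq_empty_iff.2 fun i _ ↦ not_le.2 <|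
        (pow_le_pow_left₀ (norm_nonneg _) ((norm_vecMul_le hχ f (s i)).trans
          (sum_norm_le_reImNorm f)) 2).trans_lt hτρ
    rw [hempty, Nat.cast_zero, mul_zero]
    positivity
  have hf : 0 < reImNorm f := (reImNorm_nonneg f).lt_of_ne fun h ↦ by simp [← h, hτ0.not_ge] at hτρ
  obtain ⟨m, hmℓ, hm1, hm2⟩ := exists_atom_scale hℓ1 hτ0 hτρ
  have hmK : m < K := by
    have : (m : ℝ) ≤ 4096 * ℓ * #A := by
      refine le_of_mul_le_mul_right (hm2.trans ?_) hτ0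
      nlinarith [mul_le_mul_of_nonneg_left hF (by positivity : 0 ≤ 2048 * ℓ),
        mul_le_mul_of_nonneg_left hτ (by positivity : 0 ≤ 4096 * ℓ * #A)]
    exact_mod_cast this.trans_lt hK
  refine (hs.mul_card_large_le_of_scale hχ hw hℓ1 hℓ hmK hf hB hτ0 hmℓ hm1 hm2).trans ?_
  nlinarith [mul_le_mul_of_nonneg_left hF (by positivity : 0 ≤ 6144 * ℓ ^ 2)]

lemma le_add_sum_dyadic {v F : ℝ} (hF : 0 < F) (hvn : v ≤ n * F) :
    v ≤ F + ∑ j ∈ range (Nat.log 4 n + 1), 4 * (4 ^ j * F * if 4 ^ j * F ≤ v then 1 else 0) := by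
  have hterm : ∀ j ∈ range (Nat.log 4 n + 1),
      0 ≤ 4 * (4 ^ j * F * if 4 ^ j * F ≤ v then 1 else 0) := fun j _ ↦ by
    split_ifs <;> positivity
  obtain hv | hv := lt_or_ge v F
  · linarith [sum_nonneg hterm]
  have hvF : v / F < (⌊v / F⌋₊ : ℝ) + 1 := Nat.lt_floor_add_one _
  have hfloor : ⌊v / F⌋₊ ≠ 0 := (Nat.floor_pos.2 ((one_le_div hF).2 hv)).ne'
  set j := Nat.log 4 ⌊v / F⌋₊
  have hjn : j ∈ range (Nat.log 4 n + 1) := by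
    rw [mem_range_succ_iff]
    exact Nat.log_mono_right (Nat.floor_le_of_le ((div_le_iff₀ hF).2 hvn))
  have hlow : 4 ^ j * F ≤ v := by
    rw [← le_div_iff₀ hF]
    exact (by exact_mod_cast Nat.pow_log_le_self 4 hfloor : (4 : ℝ) ^ j ≤ ⌊v / F⌋₊).trans
      (Nat.floor_le (div_nonneg (hF.le.trans hv) hF.le))
  have hup : v ≤ 4 * (4 ^ j * F) := by
    have : (⌊v / F⌋₊ : ℝ) + 1 ≤ 4 ^ (j + 1) := by
      exact_mod_cast Nat.lt_pow_succ_log_self (by norm_num : 1 < 4) ⌊v / F⌋₊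
    rw [← mul_assoc, ← pow_succ', ← div_le_iff₀ hF]
    linarith
  have := single_le_sum hterm hjn
  rw [if_pos hlow, mul_one] at this
  linarith

lemma sum_le_of_weak_type {ι : Type*} [Fintype ι] {v : ι → ℝ} {F T : ℝ} (hF : 0 < F)
    (hvn : ∀ i, v i ≤ n * F) (hT : ∀ t, F ≤ t → t * #{i | t ≤ v i} ≤ T) :
    ∑ i, v i ≤ Fintype.card ι * F + 4 * (Nat.log 4 n + 1) * T :=
  calc ∑ i, v i ≤ ∑ i, (F + ∑ j ∈ range (Nat.log 4 n + 1),
        4 * (4 ^ j * F * if 4 ^ j * F ≤ v i then 1 else 0)) :=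
        sum_le_sum fun i _ ↦ le_add_sum_dyadic hF (hvn i)
    _ = Fintype.card ι * F +
        ∑ j ∈ range (Nat.log 4 n + 1), 4 * (4 ^ j * F * #{i | 4 ^ j * F ≤ v i}) := by
        rw [sum_add_distrib, sum_comm, sum_const, card_univ, nsmul_eq_mul]
        simp_rw [← mul_sum, sum_boole]
    _ ≤ Fintype.card ι * F + ∑ j ∈ range (Nat.log 4 n + 1), 4 * T := by
        gcongr with j
        exact hT _ (le_mul_of_one_le_left hF.le (one_le_pow₀ (by norm_num)))
    _ = Fintype.card ι * F + 4 * (Nat.log 4 n + 1) * T := by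
        rw [sum_const, card_range, nsmul_eq_mul]
        push_cast
        ring

lemma log_four_add_one_le (hn : 1 ≤ n) (hℓ : 8 * (n : ℝ) ≤ Real.exp ℓ) :
    (Nat.log 4 n + 1 : ℝ) ≤ ℓ := by
  refine Real.exp_le_exp.1 (le_trans ?_ hℓ)
  calc Real.exp (Nat.log 4 n + 1) = Real.exp 1 ^ (Nat.log 4 n + 1) := by
        rw [← Real.exp_nat_mul]
        push_cast
        ring_nf
    _ ≤ 4 ^ (Nat.log 4 n + 1) := by
        gcongr
        linarith [Real.exp_one_lt_d9]
    _ ≤ 4 * n := by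
        rw [pow_succ']
        gcongr
        exact_mod_cast Nat.pow_log_le_self 4 (by lia)
    _ ≤ 8 * n := by linarith [(Nat.cast_nonneg n : (0 : ℝ) ≤ n)]

lemma HasAtomCounts.sum_norm_vecMul_sq_le (hχ : ∀ x p, ‖χ x p‖ ≤ 1) (hw : w ∈ stdSimplex ℝ P)
    {D : ℝ} (hD : 1 ≤ D)
    (hbessel : ∀ f : X → ℂ, ∑ p, w p * ‖(f ᵥ* χ) p‖ ^ 2 ≤ D * ∑ x, ‖f x‖ ^ 2) (hn : 1 ≤ n)
    (hX : Fintype.card X ≤ n) (hP : Fintype.card P ≤ n) (hℓ : 8 * (n : ℝ) ≤ Real.exp ℓ)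
    {M K : ℕ} {s : Fin M → P} (hs : HasAtomCounts χ w ℓ K s) (hK : 4096 * ℓ * n < K)
    {f : X → ℂ} {A : Finset X} (hA : ∀ x ∉ A, f x = 0) :
    ∑ i, ‖(f ᵥ* χ) (s i)‖ ^ 2 ≤ 50000 * ℓ ^ 3 * (D * M + #A) * ∑ x, ‖f x‖ ^ 2 := by
  have hn1 : (1 : ℝ) ≤ n := by exact_mod_cast hn
  have hℓ1 : 1 ≤ ℓ := one_le_of_eight_le_exp (by linarith)
  have hP' : 8 * (Fintype.card P : ℝ) ≤ Real.exp ℓ := (by gcongr : _ ≤ 8 * (n : ℝ)).trans hℓ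
  have hAn : 4096 * ℓ * #A < K := lt_of_le_of_lt (by gcongr; exact (card_le_univ A).trans hX) hK
  set F := ∑ x, ‖f x‖ ^ 2
  have hvn : ∀ i, ‖(f ᵥ* χ) (s i)‖ ^ 2 ≤ n * F := fun i ↦
    (norm_vecMul_sq_le hχ f _).trans (by gcongr)
  have hF0 : 0 ≤ F := by positivity
  obtain hF | hF := hF0.eq_or_lt
  · simpa [← hF] using sum_le_sum fun i (_ : i ∈ univ) ↦ hvn i
  calc ∑ i, ‖(f ᵥ* χ) (s i)‖ ^ 2
      ≤ Fintype.card (Fin M) * F + 4 * (Nat.log 4 n + 1) *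
        (16 * M * (D * F) + 12288 * ℓ ^ 2 * #A * F) := sum_le_of_weak_type hF hvn fun t ht ↦
        hs.mul_card_large_le hχ hw hℓ1 hP' hA hAn (hbessel f) (hF.trans_le ht) ht
    _ ≤ M * F + 4 * ℓ * (16 * M * (D * F) + 12288 * ℓ ^ 2 * #A * F) := by
        rw [Fintype.card_fin]
        gcongr
        exact log_four_add_one_le hn hℓ
    _ ≤ 50000 * ℓ ^ 3 * (D * M + #A) * F := by
        have hℓ3 : ℓ ≤ ℓ ^ 3 := le_self_pow₀ hℓ1 (by norm_num)
        have hM : (M : ℝ) ≤ ℓ ^ 3 * (D * M) := by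
          nlinarith [mul_le_mul hD (hℓ1.trans hℓ3) zero_le_one (by linarith),
            (Nat.cast_nonneg M : (0 : ℝ) ≤ M)]
        have hDM : ℓ * (D * M) ≤ ℓ ^ 3 * (D * M) := by gcongr
        have hA0 : 0 ≤ ℓ ^ 3 * #A := by positivity
        have hDM0 := (Nat.cast_nonneg M).trans hM
        nlinarith [hDM0]

theorem exists_sample_restricted_isometry (hχ : ∀ x p, ‖χ x p‖ ≤ 1) (hw : w ∈ stdSimplex ℝ P)
    {D : ℝ} (hD : 1 ≤ D)
    (hbessel : ∀ f : X → ℂ, ∑ p, w p * ‖(f ᵥ* χ) p‖ ^ 2 ≤ D * ∑ x, ‖f x‖ ^ 2) (hn : 1 ≤ n)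
    (hX : Fintype.card X ≤ n) (hP : Fintype.card P ≤ n) (hℓ : 8 * (n : ℝ) ≤ Real.exp ℓ)
    {M : ℕ} {θ : ℝ} (hθ : 0 < θ) (hθ1 : θ ≤ 1) (hM : 64 * ℓ ≤ M * θ ^ 2) :
    ∃ s : Fin M → P, (∀ x, ‖∑ i, χ x (s i) - M * ∑ p, (w p : ℂ) * χ x p‖ ≤ M * θ) ∧
      ∀ (f : X → ℂ) (A : Finset X), (∀ x ∉ A, f x = 0) →
        ∑ i, ‖(f ᵥ* χ) (s i)‖ ^ 2 ≤ 50000 * ℓ ^ 3 * (D * M + #A) * ∑ x, ‖f x‖ ^ 2 := by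
  obtain ⟨s, hmean, hcount⟩ := exists_sample_hasAtomCounts hχ hw hn hX hℓ hθ hθ1 hM
    (⌊4096 * ℓ * n⌋₊ + 1)
  refine ⟨s, hmean, fun f A hA ↦ hcount.sum_norm_vecMul_sq_le hχ hw hD hbessel hn hX hP hℓ ?_ hA⟩
  exact_mod_cast Nat.lt_floor_add_one (4096 * ℓ * n)

end RestrictedIsometry

section Characters

/-- The character `t ↦ e^{-2πit}` of the real line, with the sign of the Fourier transform. -/
noncomputable def eNeg (t : ℝ) : ℂ := 𝐞 (-t)

lemma eNeg_eq_exp (t : ℝ) : eNeg t = Complex.exp (↑(-2 * Real.pi * t) * Complex.I) := by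
  rw [eNeg, Real.fourierChar_apply]; congr 3; ring

@[simp] lemma eNeg_zero : eNeg 0 = 1 := by simp [eNeg]

@[simp] lemma norm_eNeg (t : ℝ) : ‖eNeg t‖ = 1 := Circle.norm_coe _

lemma eNeg_add (a b : ℝ) : eNeg (a + b) = eNeg a * eNeg b := by
  simp [eNeg, AddChar.map_add_eq_mul, mul_comm]

lemma eNeg_sub (a b : ℝ) : eNeg (a - b) = eNeg a * starRingEnd ℂ (eNeg b) := by
  rw [sub_eq_add_neg, eNeg_add, eNeg, eNeg, eNeg, AddChar.map_neg_eq_inv 𝐞 (-b),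
    Circle.coe_inv_eq_conj]

lemma eNeg_sum {ι : Type*} (s : Finset ι) (t : ι → ℝ) :
    eNeg (∑ i ∈ s, t i) = ∏ i ∈ s, eNeg (t i) := by
  classical
  induction s using Finset.induction_on with
  | empty => simp
  | insert a s ha ih => rw [sum_insert ha, prod_insert ha, eNeg_add, ih]

lemma eNeg_intCast (m : ℤ) : eNeg m = 1 := by
  rw [eNeg_eq_exp, Complex.exp_eq_one_iff]
  exact ⟨-m, by push_cast; ring⟩

@[fun_prop]
lemma continuous_eNeg : Continuous eNeg := by
  unfold eNeg; fun_prop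

/-- The Fourier transform of Lebesgue measure on the unit interval. -/
noncomputable def intervalFourier (t : ℝ) : ℂ := ∫ u in (0 : ℝ)..1, eNeg (t * u)

lemma norm_intervalFourier_le (t : ℝ) : ‖intervalFourier t‖ ≤ 1 := by
  simpa [intervalFourier] using intervalIntegral.norm_integral_le_of_norm_le_const (a := 0) (b := 1)
    (C := 1) (f := fun u ↦ eNeg (t * u)) fun u _ ↦ (norm_eNeg _).le

@[simp] lemma intervalFourier_zero : intervalFourier 0 = 1 := by simp [intervalFourier]

lemma intervalFourier_intCast {m : ℤ} (hm : m ≠ 0) : intervalFourier m = 0 := by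
  have hc : ((-2 * Real.pi * m : ℝ) : ℂ) * Complex.I ≠ 0 := by simp [Real.pi_ne_zero, hm]
  have hexp (u : ℝ) :
      eNeg (m * u) = Complex.exp ((((-2 * Real.pi * m : ℝ) : ℂ) * Complex.I) * u) := by
    rw [eNeg_eq_exp]; congr 1; push_cast; ring
  have hperiod := eNeg_intCast m
  rw [eNeg_eq_exp] at hperiod
  simp_rw [intervalFourier, hexp, integral_exp_mul_complex hc]
  rw [Complex.ofReal_one, mul_one, hperiod]
  simp

lemma intervalFourier_eq_sum (t : ℝ) {L : ℕ} (hL : L ≠ 0) :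
    intervalFourier t = (L : ℂ)⁻¹ * ∑ a : Fin L, eNeg (t * a / L) * intervalFourier (t / L) := by
  have hL' : (L : ℝ) ≠ 0 := by exact_mod_cast hL
  have hpiece (a : ℕ) : ∫ u in (a / L : ℝ)..((a + 1 : ℕ) / L : ℝ), eNeg (t * u) =
      (L : ℂ)⁻¹ * (eNeg (t * a / L) * intervalFourier (t / L)) := by
    have hsub := intervalIntegral.smul_integral_comp_mul_add (a := 0) (b := 1)
      (fun u ↦ eNeg (t * u)) (L : ℝ)⁻¹ (a / L)
    have hshift (u : ℝ) :
        eNeg (t * ((L : ℝ)⁻¹ * u + a / L)) = eNeg (t * a / L) * eNeg (t / L * u) := by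
      rw [← eNeg_add]; congr 1; field_simp; ring
    have hend : (L : ℝ)⁻¹ * 1 + a / L = ((a + 1 : ℕ) : ℝ) / L := by push_cast; field_simp; ring
    simp_rw [hshift, intervalIntegral.integral_const_mul] at hsub
    rw [mul_zero, zero_add, hend] at hsub
    rw [← hsub, intervalFourier, Complex.real_smul, Complex.ofReal_inv, Complex.ofReal_natCast]
  have hadj := intervalIntegral.sum_integral_adjacent_intervals (f := fun u ↦ eNeg (t * u))
    (μ := volume) (a := fun k : ℕ ↦ (k : ℝ) / L) (n := L)
    fun k _ ↦ Continuous.intervalIntegrable (by fun_prop) _ _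
  simp only [Nat.cast_zero, zero_div, div_self hL', hpiece] at hadj
  rw [intervalFourier, ← hadj, mul_sum,
    ← Fin.sum_univ_eq_sum_range fun a ↦ (L : ℂ)⁻¹ * (eNeg (t * a / L) * intervalFourier (t / L))]

variable {d : ℕ}

/-- The Fourier transform of Lebesgue measure on the unit cube. -/
noncomputable def cubeFourier (t : Fin d → ℝ) : ℂ :=
  ∫ u in Set.Icc (0 : Fin d → ℝ) 1, eNeg (t ⬝ᵥ u)

lemma cubeFourier_eq_prod (t : Fin d → ℝ) : cubeFourier t = ∏ j, intervalFourier (t j) := by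
  simp_rw [cubeFourier, dotProduct, eNeg_sum]
  rw [← Set.pi_univ_Icc, volume_pi, Measure.restrict_pi_pi,
    integral_fintype_prod_eq_prod (𝕜 := ℂ) fun j u ↦ eNeg (t j * u)]
  simp [intervalFourier, intervalIntegral.integral_of_le, integral_Icc_eq_integral_Ioc]

lemma norm_cubeFourier_le (t : Fin d → ℝ) : ‖cubeFourier t‖ ≤ 1 := by
  rw [cubeFourier_eq_prod, norm_prod]
  exact prod_le_one (fun _ _ ↦ norm_nonneg _) fun _ _ ↦ norm_intervalFourier_le _

@[simp] lemma cubeFourier_zero : cubeFourier (0 : Fin d → ℝ) = 1 := by simp [cubeFourier_eq_prod]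

lemma cubeFourier_intCast {m : Fin d → ℤ} (hm : m ≠ 0) : cubeFourier (fun j ↦ (m j : ℝ)) = 0 := by
  obtain ⟨j, hj⟩ := Function.ne_iff.1 hm
  rw [cubeFourier_eq_prod]
  exact prod_eq_zero (mem_univ j) (intervalFourier_intCast hj)

lemma cubeFourier_eq_sum (t : Fin d → ℝ) {L : ℕ} (hL : L ≠ 0) :
    cubeFourier t = ((L : ℂ) ^ d)⁻¹ * (∑ b : Fin d → Fin L, eNeg (∑ j, t j * b j / L)) *
      cubeFourier ((L : ℝ)⁻¹ • t) := by
  have hexpand := prod_univ_sum (κ := fun _ : Fin d ↦ Fin L) (fun _ ↦ univ)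
    fun j a ↦ eNeg (t j * (a : ℕ) / L)
  rw [Fintype.piFinset_univ] at hexpand
  have hfactor (j : Fin d) : intervalFourier (t j) = (L : ℂ)⁻¹ *
      (∑ a : Fin L, eNeg (t j * (a : ℕ) / L)) * intervalFourier (((L : ℝ)⁻¹ • t) j) := by
    rw [intervalFourier_eq_sum (t j) hL, ← sum_mul, mul_assoc, Pi.smul_apply, smul_eq_mul,
      div_eq_inv_mul (t j)]
  simp_rw [cubeFourier_eq_prod, eNeg_sum, hfactor, prod_mul_distrib, hexpand]
  simp

end Characters

section ExponentialSums

variable {d : ℕ}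

/-- The exponential sum `∑_{x ∈ A} f(x) e^{-2πi x·ξ}`, i.e. the Fourier transform of `f` on `A`. -/
noncomputable def expSum (A : Finset (Fin d → ℤ)) (f : (Fin d → ℤ) → ℂ) (ξ : Fin d → ℝ) : ℂ :=
  ∑ x ∈ A, f x * eNeg (∑ j, x j * ξ j)

/-- The Fourier transform of a measure at an integer frequency. -/
noncomputable def fourierCoeff (μ : Measure (Fin d → ℝ)) (z : Fin d → ℤ) : ℂ :=
  ∫ ξ, eNeg (∑ j, z j * ξ j) ∂μ

variable (A : Finset (Fin d → ℤ)) (f : (Fin d → ℤ) → ℂ)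

@[fun_prop]
lemma continuous_expSum : Continuous (expSum A f) := by
  unfold expSum; fun_prop

lemma norm_expSum_sq_le (ξ : Fin d → ℝ) : ‖expSum A f ξ‖ ^ 2 ≤ #A * ∑ x ∈ A, ‖f x‖ ^ 2 := by
  have hsum : ‖expSum A f ξ‖ ≤ ∑ x ∈ A, ‖f x‖ := norm_sum_le_of_le _ fun x _ ↦ by simp
  exact (pow_le_pow_left₀ (norm_nonneg _) hsum 2).trans sq_sum_le_card_mul_sum_sq

lemma integrable_norm_expSum_sq (μ : Measure (Fin d → ℝ)) [IsFiniteMeasure μ] :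
    Integrable (fun ξ ↦ ‖expSum A f ξ‖ ^ 2) μ :=
  .of_bound (Continuous.aestronglyMeasurable (by fun_prop)) _ <| ae_of_all _ fun ξ ↦ by
    simpa using norm_expSum_sq_le A f ξ

lemma integral_norm_expSum_sq (μ : Measure (Fin d → ℝ)) [IsFiniteMeasure μ] :
    ((∫ ξ, ‖expSum A f ξ‖ ^ 2 ∂μ : ℝ) : ℂ) =
      ∑ x ∈ A, ∑ y ∈ A, f x * starRingEnd ℂ (f y) * fourierCoeff μ (x - y) := by
  have hexpand (ξ : Fin d → ℝ) : ((‖expSum A f ξ‖ ^ 2 : ℝ) : ℂ) = ∑ x ∈ A, ∑ y ∈ A,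
      f x * starRingEnd ℂ (f y) * eNeg (∑ j, (x - y) j * ξ j) := by
    rw [Complex.ofReal_pow, ← Complex.mul_conj', expSum, map_sum, sum_mul_sum]
    refine sum_congr rfl fun x _ ↦ sum_congr rfl fun y _ ↦ ?_
    have hsub : ∑ j, ((x - y) j : ℝ) * ξ j = ∑ j, x j * ξ j - ∑ j, y j * ξ j := by
      simp [sub_mul]
    rw [hsub, eNeg_sub, map_mul]
    ring
  have hint (x y : Fin d → ℤ) : Integrable
      (fun ξ ↦ f x * starRingEnd ℂ (f y) * eNeg (∑ j, (x - y) j * ξ j)) μ :=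
    .of_bound (Continuous.aestronglyMeasurable (by fun_prop)) (‖f x‖ * ‖f y‖) <|
      ae_of_all _ fun ξ ↦ by simp
  simp_rw [← integral_complex_ofReal, hexpand]
  rw [integral_finsetSum _ fun x _ ↦ integrable_finsetSum _ fun y _ ↦ hint x y]
  refine sum_congr rfl fun x _ ↦ ?_
  rw [integral_finsetSum _ fun y _ ↦ hint x y]
  exact sum_congr rfl fun y _ ↦ integral_const_mul _ _

lemma integral_norm_expSum_sq_le_add {μ ν : Measure (Fin d → ℝ)} [IsFiniteMeasure μ]
    [IsFiniteMeasure ν] {θ : ℝ} (hθ : ∀ z, ‖fourierCoeff μ z - fourierCoeff ν z‖ ≤ θ) :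
    ∫ ξ, ‖expSum A f ξ‖ ^ 2 ∂μ ≤
      ∫ ξ, ‖expSum A f ξ‖ ^ 2 ∂ν + θ * (#A * ∑ x ∈ A, ‖f x‖ ^ 2) := by
  have hdiff : ((∫ ξ, ‖expSum A f ξ‖ ^ 2 ∂μ - ∫ ξ, ‖expSum A f ξ‖ ^ 2 ∂ν : ℝ) : ℂ) =
      ∑ x ∈ A, ∑ y ∈ A, f x * starRingEnd ℂ (f y) *
        (fourierCoeff μ (x - y) - fourierCoeff ν (x - y)) := by
    simp_rw [Complex.ofReal_sub, integral_norm_expSum_sq, mul_sub, sum_sub_distrib]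
  have hnorm : ‖((∫ ξ, ‖expSum A f ξ‖ ^ 2 ∂μ - ∫ ξ, ‖expSum A f ξ‖ ^ 2 ∂ν : ℝ) : ℂ)‖ ≤
      θ * (∑ x ∈ A, ‖f x‖) ^ 2 := by
    rw [hdiff, sq, sum_mul_sum, mul_sum]
    refine norm_sum_le_of_le _ fun x _ ↦ ?_
    rw [mul_sum]
    refine norm_sum_le_of_le _ fun y _ ↦ ?_
    rw [norm_mul, norm_mul, RCLike.norm_conj, mul_comm]
    exact mul_le_mul_of_nonneg_right (hθ _) (by positivity)
  rw [Complex.norm_real, Real.norm_eq_abs] at hnorm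
  have hθ0 : 0 ≤ θ := (norm_nonneg _).trans (hθ 0)
  linarith [le_of_abs_le hnorm, mul_le_mul_of_nonneg_left
    (sq_sum_le_card_mul_sum_sq (s := A) (f := fun x ↦ ‖f x‖)) hθ0]

end ExponentialSums

section Cubes

variable {d : ℕ} {ι : Type*} [Fintype ι]

/-- The point with coordinates `u` in the cube of side `1/N` whose lowest vertex is `s/N`. -/
noncomputable def cubePoint (N : ℕ) (s : Fin d → ℤ) (u : Fin d → ℝ) : Fin d → ℝ :=
  fun j ↦ (s j + u j) / N

/-- The average of the uniform probability measures on the cubes `(s i + [0,1]^d) / N`. -/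
noncomputable def cubeMeasure (N : ℕ) (s : ι → Fin d → ℤ) : Measure (Fin d → ℝ) :=
  (Fintype.card ι : ℝ≥0∞)⁻¹ •
    ∑ i, (volume.restrict (Set.Icc (0 : Fin d → ℝ) 1)).map (cubePoint N (s i))

/-- The positions, at scale `1/(N L)`, of the cubes obtained by cutting each cube of a family `s`
at scale `1/N` into `L^d` equal cubes. -/
def subdivide (L : ℕ) (s : ι → Fin d → ℤ) (p : ι × (Fin d → Fin L)) : Fin d → ℤ :=
  fun j ↦ L * s p.1 j + (p.2 j : ℕ)

@[fun_prop]
lemma continuous_cubePoint (N : ℕ) (s : Fin d → ℤ) : Continuous (cubePoint N s) := by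
  unfold cubePoint; fun_prop

instance [Nonempty ι] (N : ℕ) (s : ι → Fin d → ℤ) : IsProbabilityMeasure (cubeMeasure N s) where
  measure_univ := by
    have hcube (i : ι) : (volume.restrict (Set.Icc (0 : Fin d → ℝ) 1)).map (cubePoint N (s i))
        Set.univ = 1 := by
      rw [Measure.map_apply (by fun_prop) .univ]
      simp [Real.volume_Icc_pi]
    rw [cubeMeasure, Measure.smul_apply, Measure.finsetSum_apply]
    simp only [hcube, sum_const, card_univ, nsmul_eq_mul, mul_one, smul_eq_mul]
    exact ENNReal.inv_mul_cancel (by simp [Fintype.card_ne_zero]) (ENNReal.natCast_ne_top _)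

lemma integral_cubeMeasure {E : Type*} [NormedAddCommGroup E] [NormedSpace ℝ E] (N : ℕ)
    (s : ι → Fin d → ℤ) {g : (Fin d → ℝ) → E} (hg : Continuous g) :
    ∫ ξ, g ξ ∂cubeMeasure N s =
      (Fintype.card ι : ℝ)⁻¹ • ∑ i, ∫ u in Set.Icc 0 1, g (cubePoint N (s i) u) := by
  have hint (i : ι) : Integrable g
      ((volume.restrict (Set.Icc (0 : Fin d → ℝ) 1)).map (cubePoint N (s i))) :=
    (integrable_map_measure hg.aestronglyMeasurable (by fun_prop)).2 <|
      Continuous.integrableOn_Icc (by fun_prop)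
  rw [cubeMeasure, integral_smul_measure, integral_finsetSum_measure fun i _ ↦ hint i]
  simp_rw [integral_map (continuous_cubePoint N _).aemeasurable hg.aestronglyMeasurable]
  simp

lemma fourierCoeff_cubeMeasure (N : ℕ) (s : ι → Fin d → ℤ) (z : Fin d → ℤ) :
    fourierCoeff (cubeMeasure N s) z = cubeFourier (fun j ↦ z j / N) *
      ((Fintype.card ι : ℂ)⁻¹ * ∑ i, eNeg ((∑ j, z j * s i j : ℤ) / N)) := by
  have hpoint (i : ι) (u : Fin d → ℝ) : eNeg (∑ j, z j * cubePoint N (s i) u j) =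
      eNeg ((∑ j, z j * s i j : ℤ) / N) * eNeg ((fun j ↦ (z j / N : ℝ)) ⬝ᵥ u) := by
    rw [← eNeg_add]
    congr 1
    push_cast
    rw [dotProduct, sum_div, ← sum_add_distrib]
    exact sum_congr rfl fun j _ ↦ by rw [cubePoint]; ring
  rw [fourierCoeff, integral_cubeMeasure N s (by fun_prop)]
  simp_rw [hpoint, integral_const_mul, ← sum_mul, Complex.real_smul, cubeFourier]
  push_cast
  ring

lemma fourierCoeff_cubeMeasure_subdivide {N L : ℕ} (hN : N ≠ 0) (hL : L ≠ 0)
    (s : ι → Fin d → ℤ) (z : Fin d → ℤ) :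
    fourierCoeff (cubeMeasure (N * L) (subdivide L s)) z = fourierCoeff (cubeMeasure N s) z := by
  have hN' : (N : ℝ) ≠ 0 := by exact_mod_cast hN
  have hL' : (L : ℝ) ≠ 0 := by exact_mod_cast hL
  have hscale : (L : ℝ)⁻¹ • (fun j ↦ (z j / N : ℝ)) = fun j ↦ (z j / (N * L : ℕ) : ℝ) := by
    ext j; simp; field_simp
  have hposition (i : ι) (b : Fin d → Fin L) :
      eNeg ((∑ j, z j * subdivide L s (i, b) j : ℤ) / (N * L : ℕ)) =
        eNeg ((∑ j, z j * s i j : ℤ) / N) * eNeg (∑ j, z j / N * (b j : ℕ) / L) := by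
    rw [← eNeg_add]
    congr 1
    push_cast
    rw [sum_div, sum_div, ← sum_add_distrib]
    exact sum_congr rfl fun j _ ↦ by simp only [subdivide]; push_cast; field_simp
  simp_rw [fourierCoeff_cubeMeasure, cubeFourier_eq_sum (fun j ↦ (z j / N : ℝ)) hL, hscale,
    Fintype.sum_prod_type, hposition, ← mul_sum, ← sum_mul]
  simp only [Fintype.card_prod, Fintype.card_pi, Fintype.card_fin, prod_const, card_univ]
  push_cast
  ring

end Cubes

section Residues

variable {d : ℕ} (N : ℕ)

/-- Reduction of an integer vector modulo `N`. -/
def residue (x : Fin d → ℤ) : Fin d → ZMod N := fun j ↦ x j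

/-- The matrix of characters of the group `(ℤ/N)^d`. -/
noncomputable def dft [NeZero N] : Matrix (Fin d → ZMod N) (Fin d → ZMod N) ℂ :=
  of fun z g ↦ ZMod.stdAddChar (-(z ⬝ᵥ g))

variable [NeZero N]

lemma norm_dft (z g : Fin d → ZMod N) : ‖dft N z g‖ = 1 := by
  simp [dft]

lemma dft_residue (x s : Fin d → ℤ) :
    dft N (residue N x) (residue N s) = eNeg ((∑ j, x j * s j : ℤ) / N) := by
  have hcast : -(residue N x ⬝ᵥ residue N s) = ((-∑ j, x j * s j : ℤ) : ZMod N) := by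
    simp [residue, dotProduct]
  rw [dft, of_apply, hcast, ZMod.stdAddChar_coe, eNeg_eq_exp]
  congr 1
  push_cast
  ring

lemma dft_mul_conjTranspose :
    dft N * (dft N)ᴴ = ((N ^ d : ℕ) : ℂ) • (1 : Matrix (Fin d → ZMod N) (Fin d → ZMod N) ℂ) := by
  ext x y
  have hentry (g : Fin d → ZMod N) :
      dft N x g * star (dft N y g) = ZMod.stdAddChar ((y - x) ⬝ᵥ g) := by
    rw [dft, of_apply, of_apply, Complex.star_def, ← AddChar.map_neg_eq_conj,
      ← AddChar.map_add_eq_mul, neg_neg, sub_dotProduct, neg_add_eq_sub]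
  simp_rw [mul_apply, conjTranspose_apply, hentry, Matrix.smul_apply, one_apply, smul_eq_mul,
    mul_ite, mul_one, mul_zero]
  split_ifs with hxy
  · simp [hxy]
  · obtain ⟨j, hj⟩ := Function.ne_iff.1 hxy
    have hzero := AddChar.sum_eq_zero_of_ne_one (ψ := (ZMod.stdAddChar (N := N)).compAddMonoidHom
      (dotProductBilin (ZMod N) (ZMod N) (y - x)).toAddMonoidHom) fun htrivial ↦ by
        have hval := DFunLike.congr_fun htrivial (Pi.single j 1)
        simp only [AddChar.compAddMonoidHom_apply, LinearMap.toAddMonoidHom_coe,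
          dotProductBilin_apply_apply, dotProduct_single, AddChar.one_apply, mul_one] at hval
        rw [← AddChar.map_zero_eq_one (ZMod.stdAddChar (N := N))] at hval
        exact hj (sub_eq_zero.1 (ZMod.injective_stdAddChar hval)).symm
    simpa using hzero

lemma sum_norm_vecMul_dft_sq (F : (Fin d → ZMod N) → ℂ) :
    ∑ g, ‖(F ᵥ* dft N) g‖ ^ 2 = N ^ d * ∑ z, ‖F z‖ ^ 2 := by
  have hself {n : Type} [Fintype n] (v : n → ℂ) : v ⬝ᵥ star v = ((∑ i, ‖v i‖ ^ 2 : ℝ) : ℂ) := by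
    simp [dotProduct, Complex.mul_conj']
  have hparseval : (F ᵥ* dft N) ⬝ᵥ star (F ᵥ* dft N) = (N ^ d : ℕ) * (F ⬝ᵥ star F) := by
    rw [star_vecMul, dotProduct_mulVec, vecMul_vecMul, dft_mul_conjTranspose, vecMul_smul,
      vecMul_one, smul_dotProduct, smul_eq_mul]
  rw [hself, hself] at hparseval
  exact_mod_cast hparseval

lemma sum_norm_vecMul_dft_residue_subdivide_sq_le {ι : Type*} [Fintype ι] (L : ℕ) [NeZero L]
    (s : ι → Fin d → ℤ) (F : (Fin d → ZMod (N * L)) → ℂ) :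
    ∑ p, ‖(F ᵥ* dft (N * L)) (residue (N * L) (subdivide L s p))‖ ^ 2 ≤
      Fintype.card ι * ((N * L : ℕ) ^ d * ∑ z, ‖F z‖ ^ 2) := by
  have hinj (i : ι) :
      Function.Injective fun b : Fin d → Fin L ↦ residue (N * L) (subdivide L s (i, b)) := by
    intro b b' hbb'
    funext j
    have hj : ((L * s i j + (b j : ℕ) : ℤ) : ZMod (N * L)) = (L * s i j + (b' j : ℕ) : ℤ) :=
      congr_fun hbb' j
    have hmod := ((ZMod.intCast_eq_intCast_iff _ _ _).1 hj).add_left_cancel'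
    have hlt (c : Fin L) : (c : ℕ) < N * L :=
      c.2.trans_le (Nat.le_mul_of_pos_left L (NeZero.pos N))
    exact Fin.ext (Nat.ModEq.eq_of_lt_of_lt (Int.natCast_modEq_iff.1 hmod) (hlt _) (hlt _))
  rw [Fintype.sum_prod_type, ← sum_norm_vecMul_dft_sq, ← card_univ, ← nsmul_eq_mul]
  refine sum_le_card_nsmul _ _ _ fun i _ ↦ ?_
  rw [← sum_image (f := fun g ↦ ‖(F ᵥ* dft (N * L)) g‖ ^ 2) (hinj i).injOn]
  exact sum_le_sum_of_subset_of_nonneg (subset_univ _) fun _ _ _ ↦ by positivity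

end Residues

section Folding

variable {d N : ℕ} {A : Finset (Fin d → ℤ)} {f : (Fin d → ℤ) → ℂ}

open Classical in
/-- Grouping the terms of an exponential sum by residues modulo `N`: since
`e^{-2πi x·s/N}` only depends on `x mod N`, the exponential sum at `(s + u)/N` is the discrete
Fourier transform of the folded function at `s`. -/
noncomputable def foldMod (N : ℕ) (A : Finset (Fin d → ℤ)) (f : (Fin d → ℤ) → ℂ) (u : Fin d → ℝ)
    (z : Fin d → ZMod N) : ℂ :=
  expSum {x ∈ A | residue N x = z} f (cubePoint N 0 u)

lemma expSum_cubePoint [NeZero N] (s : Fin d → ℤ) (u : Fin d → ℝ) :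
    expSum A f (cubePoint N s u) = (foldMod N A f u ᵥ* dft N) (residue N s) := by
  classical
  rw [expSum, vecMul, dotProduct, ← sum_fiberwise A (residue N)]
  refine sum_congr rfl fun z _ ↦ ?_
  rw [foldMod, expSum, sum_mul]
  refine sum_congr (by congr) fun x hx ↦ ?_
  rw [← (mem_filter.1 hx).2, dft_residue, mul_assoc, ← eNeg_add]
  congr 2
  push_cast
  rw [sum_div, ← sum_add_distrib]
  exact sum_congr rfl fun j _ ↦ by simp only [cubePoint, Pi.zero_apply, Int.cast_zero]; ring

lemma foldMod_eq_zero {u : Fin d → ℝ} {z : Fin d → ZMod N} (hz : z ∉ A.image (residue N)) :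
    foldMod N A f u z = 0 := by
  rw [foldMod, filter_eq_empty_iff.2 fun x hx hxz ↦ hz (mem_image.2 ⟨x, hx, hxz⟩), expSum,
    sum_empty]

lemma integral_norm_expSum_sq_of_residue_eq {ι : Type*} [Fintype ι] [Nonempty ι] [NeZero N]
    (s : ι → Fin d → ℤ) (hA : ∀ x ∈ A, ∀ y ∈ A, residue N x = residue N y) :
    ∫ ξ, ‖expSum A f ξ‖ ^ 2 ∂cubeMeasure N s = ∑ x ∈ A, ‖f x‖ ^ 2 := by
  have hN : (N : ℝ) ≠ 0 := NeZero.ne _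
  have hcoeff (x) (hx : x ∈ A) (y) (hy : y ∈ A) (hyx : y ≠ x) :
      fourierCoeff (cubeMeasure N s) (x - y) = 0 := by
    have hdvd (j : Fin d) : (N : ℤ) ∣ (x - y) j :=
      (ZMod.intCast_eq_intCast_iff_dvd_sub _ _ _).1 (congr_fun (hA y hy x hx) j)
    choose c hc using hdvd
    have hc0 : c ≠ 0 := by
      rintro rfl
      exact hyx (sub_eq_zero.1 (funext fun j ↦ by simp [hc])).symm
    have hquotient : (fun j ↦ ((x - y) j / N : ℝ)) = fun j ↦ (c j : ℝ) := by
      ext j; rw [hc]; push_cast; field_simp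
    rw [fourierCoeff_cubeMeasure, hquotient, cubeFourier_intCast hc0, zero_mul]
  have hsum : ((∫ ξ, ‖expSum A f ξ‖ ^ 2 ∂cubeMeasure N s : ℝ) : ℂ) =
      ((∑ x ∈ A, ‖f x‖ ^ 2 : ℝ) : ℂ) := by
    rw [integral_norm_expSum_sq, Complex.ofReal_sum]
    refine sum_congr rfl fun x hx ↦ ?_
    rw [sum_eq_single_of_mem x hx fun y hy hyx ↦ by rw [hcoeff x hx y hy hyx, mul_zero]]
    simp [fourierCoeff, Complex.mul_conj']
  exact_mod_cast hsum

lemma integral_sum_norm_foldMod_sq [NeZero N] :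
    ∫ u in Set.Icc (0 : Fin d → ℝ) 1, ∑ z, ‖foldMod N A f u z‖ ^ 2 = ∑ x ∈ A, ‖f x‖ ^ 2 := by
  classical
  rw [integral_finsetSum _ fun z _ ↦ Continuous.integrableOn_Icc (by unfold foldMod; fun_prop),
    ← sum_fiberwise A (residue N)]
  refine sum_congr rfl fun z _ ↦ ?_
  rw [← integral_norm_expSum_sq_of_residue_eq (N := N) (fun _ : Unit ↦ 0) fun x hx y hy ↦
    (mem_filter.1 hx).2.trans (mem_filter.1 hy).2.symm, integral_cubeMeasure N _ (by fun_prop)]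
  simp only [foldMod, Fintype.card_unit, Nat.cast_one, inv_one, univ_unique, sum_const,
    card_singleton, one_smul]

lemma integral_norm_expSum_sq_cubeMeasure_le {ι : Type*} [Fintype ι] [NeZero N]
    (s : ι → Fin d → ℤ) {C : ℝ} (hC : ∀ F : (Fin d → ZMod N) → ℂ,
      (∀ z ∉ A.image (residue N), F z = 0) →
      ∑ i, ‖(F ᵥ* dft N) (residue N (s i))‖ ^ 2 ≤ C * ∑ z, ‖F z‖ ^ 2) :
    ∫ ξ, ‖expSum A f ξ‖ ^ 2 ∂cubeMeasure N s ≤ C / Fintype.card ι * ∑ x ∈ A, ‖f x‖ ^ 2 := by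
  rw [integral_cubeMeasure N s (by fun_prop), smul_eq_mul, inv_mul_eq_div, div_mul_eq_mul_div]
  refine div_le_div_of_nonneg_right ?_ (by positivity)
  rw [← integral_finsetSum _ fun i _ ↦ Continuous.integrableOn_Icc (by fun_prop),
    ← integral_sum_norm_foldMod_sq (N := N), ← integral_const_mul]
  refine integral_mono (Continuous.integrableOn_Icc (by fun_prop))
    (Continuous.integrableOn_Icc (by unfold foldMod; fun_prop)) fun u ↦ ?_
  simp_rw [expSum_cubePoint]
  exact hC _ fun z hz ↦ foldMod_eq_zero hz

end Folding

section Refinement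

variable {d : ℕ} {ι κ : Type*} [Fintype ι] [Fintype κ] {N L : ℕ} [NeZero N] [NeZero L]

lemma norm_fourierCoeff_cubeMeasure_sub_le [Nonempty κ] {s : ι → Fin d → ℤ} {t : κ → Fin d → ℤ}
    {θ : ℝ} (h : ∀ x, ‖∑ k, dft N x (residue N (t k)) - Fintype.card κ *
      ∑ i, (Fintype.card ι : ℂ)⁻¹ * dft N x (residue N (s i))‖ ≤ Fintype.card κ * θ)
    (z : Fin d → ℤ) :
    ‖fourierCoeff (cubeMeasure N t) z - fourierCoeff (cubeMeasure N s) z‖ ≤ θ := by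
  have hκ : (0 : ℝ) < Fintype.card κ := by exact_mod_cast Fintype.card_pos
  have hκ' : (Fintype.card κ : ℂ) ≠ 0 := by exact_mod_cast hκ.ne'
  have hmean (a b : ℂ) : (Fintype.card κ : ℂ)⁻¹ * a - b =
      (Fintype.card κ : ℂ)⁻¹ * (a - Fintype.card κ * b) := by field_simp
  simp_rw [fourierCoeff_cubeMeasure, ← dft_residue, ← mul_sub, mul_sum _ _ (_ : ℂ)⁻¹] at h ⊢
  rw [← mul_sum, hmean, norm_mul, norm_mul, norm_inv, Complex.norm_natCast]
  refine (mul_le_of_le_one_left (by positivity) (norm_cubeFourier_le _)).trans ?_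
  exact (inv_mul_le_iff₀ hκ).2 (h _)

lemma exists_sample_subdivide [Nonempty ι] (s : ι → Fin d → ℤ) {M : ℕ} [NeZero M] {ℓ θ : ℝ}
    (hℓ : 8 * (Fintype.card ι * (N * L : ℕ) ^ d : ℝ) ≤ Real.exp ℓ) (hθ : 0 < θ) (hθ1 : θ ≤ 1)
    (hM : 64 * ℓ ≤ M * θ ^ 2) :
    ∃ s' : Fin M → ι × (Fin d → Fin L),
      (∀ z, ‖fourierCoeff (cubeMeasure (N * L) (subdivide L s ∘ s')) z -
        fourierCoeff (cubeMeasure N s) z‖ ≤ θ) ∧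
      ∀ (F : (Fin d → ZMod (N * L)) → ℂ) (S : Finset (Fin d → ZMod (N * L))),
        (∀ z ∉ S, F z = 0) →
        ∑ i, ‖(F ᵥ* dft (N * L)) (residue (N * L) (subdivide L s (s' i)))‖ ^ 2 ≤
          50000 * ℓ ^ 3 * (N ^ d * M + #S) * ∑ z, ‖F z‖ ^ 2 := by
  have hcard : Fintype.card (ι × (Fin d → Fin L)) = Fintype.card ι * L ^ d := by simp
  have hι0 : 0 < Fintype.card ι := Fintype.card_pos
  have hN0 : 1 ≤ N := NeZero.one_le
  have hL0 : 1 ≤ L := NeZero.one_le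
  have hNL : L ^ d ≤ (N * L) ^ d := Nat.pow_le_pow_left (Nat.le_mul_of_pos_left L hN0) d
  have hdft (x : Fin d → ZMod (N * L)) (p : ι × (Fin d → Fin L)) :
      ‖dft (N * L) x (residue (N * L) (subdivide L s p))‖ ≤ 1 := (norm_dft _ _ _).le
  have hsimplex : (fun _ : ι × (Fin d → Fin L) ↦ (Fintype.card (ι × (Fin d → Fin L)) : ℝ)⁻¹) ∈
      stdSimplex ℝ (ι × (Fin d → Fin L)) := by
    refine ⟨fun _ ↦ by positivity, ?_⟩
    rw [sum_const, card_univ, nsmul_eq_mul]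
    exact mul_inv_cancel₀ (Nat.cast_ne_zero.2 Fintype.card_ne_zero)
  have hbessel (F : (Fin d → ZMod (N * L)) → ℂ) :
      ∑ p : ι × (Fin d → Fin L), (Fintype.card (ι × (Fin d → Fin L)) : ℝ)⁻¹ *
        ‖(F ᵥ* fun z p ↦ dft (N * L) z (residue (N * L) (subdivide L s p))) p‖ ^ 2 ≤
      (N : ℝ) ^ d * ∑ z, ‖F z‖ ^ 2 := by
    rw [← mul_sum, hcard, inv_mul_le_iff₀ (by positivity)]
    refine (sum_norm_vecMul_dft_residue_subdivide_sq_le N L s F).trans_eq ?_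
    push_cast
    ring
  obtain ⟨s', hmean, hrip⟩ := exists_sample_restricted_isometry hdft hsimplex
    (one_le_pow₀ (by exact_mod_cast hN0)) hbessel
    (n := Fintype.card ι * (N * L) ^ d) (Nat.mul_pos hι0 (by positivity))
    (by simpa [ZMod.card] using Nat.le_mul_of_pos_left _ hι0)
    (hcard ▸ Nat.mul_le_mul_left _ hNL) (by exact_mod_cast hℓ) hθ hθ1 hM
  refine ⟨s', fun z ↦ ?_, hrip⟩
  rw [← fourierCoeff_cubeMeasure_subdivide (NeZero.ne N) (NeZero.ne L)]
  refine norm_fourierCoeff_cubeMeasure_sub_le (fun x ↦ ?_) z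
  simpa using hmean x

lemma exists_subfamily [Nonempty ι] (s : ι → Fin d → ℤ) {M : ℕ} [NeZero M] {ℓ θ : ℝ}
    (hℓ : 8 * (Fintype.card ι * (N * L : ℕ) ^ d : ℝ) ≤ Real.exp ℓ) (hθ : 0 < θ) (hθ1 : θ ≤ 1)
    (hM : 64 * ℓ ≤ M * θ ^ 2) :
    ∃ s' : Fin M → ι × (Fin d → Fin L), ∀ (A : Finset (Fin d → ℤ)) (f : (Fin d → ℤ) → ℂ),
      ∫ ξ, ‖expSum A f ξ‖ ^ 2 ∂cubeMeasure (N * L) (subdivide L s ∘ s') ≤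
        ∫ ξ, ‖expSum A f ξ‖ ^ 2 ∂cubeMeasure N s + θ * (#A * ∑ x ∈ A, ‖f x‖ ^ 2) ∧
      ∫ ξ, ‖expSum A f ξ‖ ^ 2 ∂cubeMeasure (N * L) (subdivide L s ∘ s') ≤
        50000 * ℓ ^ 3 * (N ^ d * M + min (#A : ℝ) ((N * L : ℝ) ^ d)) / M * ∑ x ∈ A, ‖f x‖ ^ 2 := by
  classical
  obtain ⟨s', hclose, hrip⟩ := exists_sample_subdivide s hℓ hθ hθ1 hM
  have hℓ0 : 0 ≤ ℓ := zero_le_one.trans <| one_le_of_eight_le_exp <| hℓ.trans' <|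
    le_mul_of_one_le_right (by norm_num) <| by
      exact_mod_cast Nat.mul_pos Fintype.card_pos (by have := NeZero.pos (N * L); positivity)
  refine ⟨s', fun A f ↦ ⟨integral_norm_expSum_sq_le_add A f hclose, ?_⟩⟩
  have hsupport : #(A.image (residue (N * L))) ≤ min (#A : ℝ) ((N * L : ℝ) ^ d) := by
    refine le_min (by exact_mod_cast card_image_le) ?_
    have hcard := card_le_univ (A.image (residue (N * L)))
    rw [Fintype.card_fun, ZMod.card, Fintype.card_fin] at hcard
    exact_mod_cast hcard
  refine (integral_norm_expSum_sq_cubeMeasure_le (subdivide L s ∘ s') fun F hF ↦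
    (hrip F _ hF).trans <| mul_le_mul_of_nonneg_right (mul_le_mul_of_nonneg_left
      (add_le_add_right hsupport _) (by positivity)) (by positivity)).trans_eq ?_
  rw [Fintype.card_fin]

end Refinement

section Parameters

open Filter Asymptotics

lemma eventually_mul_log_pow_le {a c : ℝ} (ha : 0 < a) (hc : 0 < c) (K : ℝ) (d n : ℕ) :
    ∀ᶠ R : ℝ in atTop, K * Real.log (a * R ^ d) ^ n ≤ R ^ c := by
  rcases n.eq_zero_or_pos with rfl | hn
  · simpa using (tendsto_rpow_atTop hc).eventually_ge_atTop K
  have hcn : 0 < c / n := by positivity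
  have hlog : (fun R : ℝ ↦ Real.log a + d * Real.log R) =o[atTop] fun R ↦ R ^ (c / n) :=
    (isLittleO_const_left.2 <| .inr <|
      tendsto_norm_atTop_atTop.comp (tendsto_rpow_atTop hcn)).add
      ((isLittleO_log_rpow_atTop hcn).const_mul_left d)
  filter_upwards [((hlog.pow hn).const_mul_left K).def one_pos, eventually_gt_atTop 0]
    with R hR hR0
  rw [one_mul, Real.norm_of_nonneg (r := (R ^ (c / n)) ^ n) (by positivity),
    ← Real.rpow_mul_natCast hR0.le,
    div_mul_cancel₀ _ (by positivity)] at hR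
  rw [Real.log_mul ha.ne' (by positivity), Real.log_pow]
  exact (le_abs_self _).trans hR

lemma min_le_rpow_mul_rpow {a b t : ℝ} (ha : 0 ≤ a) (hb : 0 ≤ b) (ht : t ∈ Set.Icc (0 : ℝ) 1) :
    min a b ≤ a ^ (1 - t) * b ^ t := by
  have hmin : 0 ≤ min a b := le_min ha hb
  calc min a b = min a b ^ (1 - t) * min a b ^ t := by
        rw [← Real.rpow_add_of_nonneg hmin (by linarith [ht.2]) ht.1]; simp
    _ ≤ a ^ (1 - t) * b ^ t := by
        gcongr
        · linarith [ht.2]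
        · exact min_le_left a b
        · exact ht.1
        · exact min_le_right a b

lemma sampling_bound_le {d : ℕ} {β ε η k R D M ℓ : ℝ} (hβ : 0 < β) (hβd : β ≤ d) (hε : 0 < ε)
    (hR : 1 ≤ R) (hk : R ^ (β / 4) ≤ k) (hD : 1 ≤ D) (hℓ : 0 ≤ ℓ) (hM : R ^ β ≤ 2 * M)
    (hη : 150000 * D * ℓ ^ 3 ≤ η * R ^ (β / 4 * ε)) (hη0 : 0 ≤ η) :
    50000 * ℓ ^ 3 * (D * M + min k (R ^ d)) / M ≤ η * k ^ (1 - β / d + ε) := by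
  have hd : (0 : ℝ) < d := hβ.trans_le hβd
  have ht : β / d ∈ Set.Icc (0 : ℝ) 1 := ⟨by positivity, (div_le_one hd).2 hβd⟩
  have hk1 : 1 ≤ k := (Real.one_le_rpow hR (by positivity)).trans hk
  have hM0 : 0 < M := by linarith [Real.one_le_rpow hR hβ.le]
  have hkt : 1 ≤ k ^ (1 - β / d) := Real.one_le_rpow hk1 (by linarith [ht.2])
  have hmin : min k (R ^ d) ≤ k ^ (1 - β / d) * (2 * M) := by
    refine (min_le_rpow_mul_rpow (by positivity) (by positivity) ht).trans ?_
    rw [← Real.rpow_natCast_mul (by positivity), mul_div_cancel₀ _ hd.ne']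
    gcongr
  have hkε : R ^ (β / 4 * ε) ≤ k ^ ε := by
    rw [Real.rpow_mul (by positivity)]
    gcongr
  have hsum : D * M + min k (R ^ d) ≤ 3 * D * k ^ (1 - β / d) * M := by
    nlinarith [mul_le_mul_of_nonneg_right hD (by positivity : 0 ≤ k ^ (1 - β / d) * M),
      mul_le_mul_of_nonneg_right hkt (by positivity : 0 ≤ D * M)]
  rw [div_le_iff₀ hM0, Real.rpow_add (by positivity)]
  calc 50000 * ℓ ^ 3 * (D * M + min k (R ^ d))
      ≤ 50000 * ℓ ^ 3 * (3 * D * k ^ (1 - β / d) * M) := by gcongr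
    _ = 150000 * D * ℓ ^ 3 * (k ^ (1 - β / d) * M) := by ring
    _ ≤ η * k ^ ε * (k ^ (1 - β / d) * M) := by
        exact mul_le_mul_of_nonneg_right (hη.trans (by gcongr)) (by positivity)
    _ = η * (k ^ (1 - β / d) * k ^ ε) * M := by ring

lemma sample_count_bound {β η R M ℓ : ℝ} (hR : 0 < R) (hη : 0 < η)
    (hℓ : 128 / η ^ 2 * ℓ ≤ R ^ (β / 2)) (hM : R ^ β ≤ 2 * M) :
    64 * ℓ ≤ M * (η / R ^ (β / 4)) ^ 2 := by
  have hβ : R ^ β = R ^ (β / 2) * (R ^ (β / 4)) ^ 2 := by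
    rw [← Real.rpow_mul_natCast hR.le, ← Real.rpow_add hR]
    ring_nf
  rw [div_mul_eq_mul_div, div_le_iff₀ (by positivity)] at hℓ
  rw [div_pow, mul_div_assoc', le_div_iff₀ (by positivity)]
  nlinarith [mul_le_mul_of_nonneg_right hℓ (by positivity : 0 ≤ (R ^ (β / 4)) ^ 2),
    mul_le_mul_of_nonneg_right hM (by positivity : 0 ≤ η ^ 2)]

lemma exists_sampling_parameters {d N : ℕ} {β η ε a : ℝ} (hN : N ≠ 0) (ha : 0 < a) (hβ : 0 < β)
    (hβd : β ≤ d) (hη : 0 < η) (hε : 0 < ε) (B : ℕ) :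
    ∃ (L M : ℕ) (ℓ θ : ℝ), L ≠ 0 ∧ M ≠ 0 ∧ B ≤ N * L ∧ (M : ℝ) ≤ (N * L : ℕ) ^ β ∧
      a * (N * L : ℕ) ^ d ≤ Real.exp ℓ ∧ 0 < θ ∧ θ ≤ 1 ∧ 64 * ℓ ≤ M * θ ^ 2 ∧
      ∀ k : ℝ, 1 ≤ k → θ * k ≤ η * k ^ (1 - β / d + ε) ∨
        50000 * ℓ ^ 3 * (N ^ d * M + min k ((N * L : ℕ) ^ d)) / M ≤ η * k ^ (1 - β / d + ε) := by
  have hscale : Tendsto (fun L : ℕ ↦ ((N * L : ℕ) : ℝ)) atTop atTop :=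
    tendsto_natCast_atTop_atTop.comp
      (tendsto_atTop_mono (fun L ↦ Nat.le_mul_of_pos_left L (Nat.pos_of_ne_zero hN)) tendsto_id)
  obtain ⟨L, ⟨hlog, hlog3, hRη, hRB, hR1, hRa⟩, hL⟩ := ((hscale.eventually <|
    (eventually_mul_log_pow_le ha (half_pos hβ) (128 / η ^ 2) d 1).and <|
    (eventually_mul_log_pow_le ha (by positivity : 0 < β / 4 * ε) (150000 * N ^ d / η) d 3).and <|
    ((tendsto_rpow_atTop (by positivity : 0 < β / 4)).eventually_ge_atTop η).and <|
    (eventually_ge_atTop (B : ℝ)).and <| (eventually_ge_atTop 1).and <|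
    eventually_ge_atTop a⁻¹).and (eventually_ne_atTop 0)).exists
  set R : ℝ := ((N * L : ℕ) : ℝ)
  have hd : d ≠ 0 := by rintro rfl; exact (hβ.trans_le hβd).ne' Nat.cast_zero
  have hRd : 1 ≤ a * R ^ d := by
    rw [inv_le_iff_one_le_mul₀ ha, mul_comm] at hRa
    exact hRa.trans (by gcongr; exact le_self_pow₀ hR1 hd)
  have hRβ : 1 ≤ R ^ β := Real.one_le_rpow hR1 hβ.le
  have hM0 : ⌊R ^ β⌋₊ ≠ 0 := (Nat.floor_pos.2 hRβ).ne'
  have hM : R ^ β ≤ 2 * ⌊R ^ β⌋₊ := by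
    have hone : (1 : ℝ) ≤ ⌊R ^ β⌋₊ := by exact_mod_cast Nat.one_le_iff_ne_zero.2 hM0
    linarith [Nat.lt_floor_add_one (R ^ β)]
  refine ⟨L, ⌊R ^ β⌋₊, Real.log (a * R ^ d), η / R ^ (β / 4), hL, hM0, Nat.cast_le.1 hRB,
    Nat.floor_le (by positivity), (Real.exp_log (by positivity)).ge, by positivity,
    (div_le_one (by positivity)).2 hRη,
    sample_count_bound (by positivity) hη (pow_one (Real.log _) ▸ hlog) hM, fun k hk ↦ ?_⟩
  rcases le_total k (R ^ (β / 4)) with hkR | hkR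
  · left
    have hγ : 0 ≤ 1 - β / d + ε := by
      linarith [div_le_one_of_le₀ hβd d.cast_nonneg]
    rw [div_mul_eq_mul_div]
    exact (div_le_of_le_mul₀ (by positivity) hη.le (by gcongr)).trans
      (le_mul_of_one_le_right hη.le (Real.one_le_rpow hk hγ))
  · right
    have hN1 : (1 : ℝ) ≤ N ^ d := one_le_pow₀ (by exact_mod_cast Nat.one_le_iff_ne_zero.2 hN)
    rw [div_mul_eq_mul_div, div_le_iff₀' hη] at hlog3
    exact sampling_bound_le hβ hβd hε hR1 hkR hN1 (Real.log_nonneg hRd) hM hlog3 hη.le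

end Parameters

/-- A finite nonempty family of the cubes of a grid of mesh `1/scale`, each given by `scale` times
its lowest vertex. -/
structure CubeFamily (d : ℕ) where
  scale : ℕ
  count : ℕ
  vertex : Fin count → Fin d → ℤ
  [scale_ne_zero : NeZero scale]
  [count_ne_zero : NeZero count]

namespace CubeFamily

attribute [instance] scale_ne_zero count_ne_zero

variable {d : ℕ} (F : CubeFamily d)

/-- The union of the cubes of the family. -/
def carrier : Set (Fin d → ℝ) := ⋃ i, cubePoint F.scale (F.vertex i) '' Set.Icc 0 1

/-- The average of the uniform probability measures on the cubes of the family. -/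
noncomputable def measure : Measure (Fin d → ℝ) := cubeMeasure F.scale F.vertex

instance : IsProbabilityMeasure F.measure := by unfold measure; infer_instance

lemma isCompact_carrier : IsCompact F.carrier :=
  isCompact_iUnion fun _ ↦ isCompact_Icc.image (continuous_cubePoint _ _)

lemma measure_compl_carrier : F.measure F.carrierᶜ = 0 := by
  have hcube (i : Fin F.count) : (volume.restrict (Set.Icc (0 : Fin d → ℝ) 1)).map
      (cubePoint F.scale (F.vertex i)) F.carrierᶜ = 0 := by
    have hmeas := F.isCompact_carrier.measurableSet.compl
    rw [Measure.map_apply (by fun_prop) hmeas,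
      Measure.restrict_apply (hmeas.preimage (by fun_prop)), Set.preimage_compl]
    have hdisj : Disjoint (cubePoint F.scale (F.vertex i) ⁻¹' F.carrier)ᶜ (Set.Icc 0 1) :=
      Set.disjoint_compl_left_iff_subset.2 fun u hu ↦
        Set.mem_iUnion_of_mem i (Set.mem_image_of_mem _ hu)
    rw [hdisj.inter_eq, measure_empty]
  rw [measure, cubeMeasure, Measure.smul_apply, Measure.finsetSum_apply]
  simp [hcube]

lemma integral_norm_expSum_sq_measure_le (A : Finset (Fin d → ℤ)) (f : (Fin d → ℤ) → ℂ) :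
    ∫ ξ, ‖expSum A f ξ‖ ^ 2 ∂F.measure ≤ F.scale ^ d * ∑ x ∈ A, ‖f x‖ ^ 2 := by
  refine (integral_norm_expSum_sq_cubeMeasure_le (C := F.count * F.scale ^ d) F.vertex
    fun f _ ↦ ?_).trans_eq ?_
  · refine (sum_le_card_nsmul _ _ _ fun i _ ↦
      norm_vecMul_sq_le (fun x p ↦ (norm_dft F.scale x p).le) f _).trans_eq ?_
    simp [mul_assoc]
  · rw [Fintype.card_fin, mul_div_cancel_left₀ _ (NeZero.ne _)]

lemma carrier_subset_of_subdivide {L M : ℕ} [NeZero L] [NeZero M]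
    (s : Fin M → Fin F.count × (Fin d → Fin L)) :
    carrier ⟨F.scale * L, M, subdivide L F.vertex ∘ s⟩ ⊆ F.carrier := by
  refine Set.iUnion_subset fun i ↦ ?_
  rintro _ ⟨u, hu, rfl⟩
  have hL : (0 : ℝ) < L := by exact_mod_cast NeZero.pos L
  refine Set.mem_iUnion_of_mem (s i).1 ⟨fun j ↦ ((s i).2 j + u j) / L, ⟨fun j ↦ ?_, fun j ↦ ?_⟩, ?_⟩
  · have := hu.1 j
    simp only [Pi.zero_apply] at this ⊢
    positivity
  · have hlt : (((s i).2 j : ℕ) : ℝ) + 1 ≤ L := by exact_mod_cast ((s i).2 j).2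
    exact (div_le_one hL).2 ((add_le_add_right (hu.2 j) _).trans hlt)
  · ext j
    simp only [cubePoint, subdivide, Function.comp_apply]
    push_cast
    field_simp
    ring

lemma exists_refinement {β η ε : ℝ} (hβ : 0 < β) (hβd : β ≤ d) (hη : 0 < η) (hε : 0 < ε) (B : ℕ) :
    ∃ G : CubeFamily d, G.carrier ⊆ F.carrier ∧ B ≤ G.scale ∧ (G.count : ℝ) ≤ G.scale ^ β ∧
      ∀ A f, ∫ ξ, ‖expSum A f ξ‖ ^ 2 ∂G.measure ≤ ∫ ξ, ‖expSum A f ξ‖ ^ 2 ∂F.measure +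
        η * (#A : ℝ) ^ (1 - β / d + ε) * ∑ x ∈ A, ‖f x‖ ^ 2 := by
  have hcount : (0 : ℝ) < 8 * F.count := by exact_mod_cast Nat.mul_pos (by simp) (NeZero.pos _)
  obtain ⟨L, M, ℓ, θ, hL, hM, hB, hMβ, hℓ, hθ, hθ1, hℓθ, hbound⟩ :=
    exists_sampling_parameters (NeZero.ne F.scale) hcount hβ hβd hη hε B
  have : NeZero L := ⟨hL⟩
  have : NeZero M := ⟨hM⟩
  obtain ⟨s, hs⟩ := exists_subfamily F.vertex (by simpa [mul_assoc] using hℓ) hθ hθ1 hℓθ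
  refine ⟨⟨F.scale * L, M, subdivide L F.vertex ∘ s⟩, F.carrier_subset_of_subdivide s, hB, hMβ,
    fun A f ↦ ?_⟩
  obtain rfl | hA := A.eq_empty_or_nonempty
  · simp [expSum]
  obtain ⟨hsmall, hlarge⟩ := hs A f
  rcases hbound #A (by exact_mod_cast hA.card_pos) with h | h
  · refine hsmall.trans (add_le_add_right ?_ _)
    rw [← mul_assoc]
    gcongr
  · refine (hlarge.trans ?_).trans (le_add_of_nonneg_left (by positivity))
    rw [← Nat.cast_mul]
    gcongr

end CubeFamily

section WeakLimit

open Filter Topology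

lemma isCompact_setOf_measure_compl_eq_zero {E : Type*} [TopologicalSpace E] [T2Space E]
    [MeasurableSpace E] [BorelSpace E] {K : Set E} (hK : IsCompact K) :
    IsCompact {μ : ProbabilityMeasure E | (μ : Measure E) Kᶜ = 0} := by
  have hprokhorov := isCompact_setOfPred_probabilityMeasure_mass_eq_compl_isCompact_le (E := E)
    (u := 0) tendsto_const_nhds (fun _ : ℕ ↦ hK) (.inr monotone_const)
  simpa only [Pi.zero_apply, nonpos_iff_eq_zero, forall_const,
    ProbabilityMeasure.null_iff_toMeasure_null] using hprokhorov

lemma exists_measure_iInter_of_antitone {E : Type*} [TopologicalSpace E] [T2Space E]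
    [MeasurableSpace E] [BorelSpace E] [HasOuterApproxClosed E] (μ : ℕ → ProbabilityMeasure E)
    {K : ℕ → Set E} (hK : ∀ n, IsCompact (K n)) (hanti : Antitone K)
    (hμ : ∀ n, (μ n : Measure E) (K n)ᶜ = 0) :
    ∃ ν : ProbabilityMeasure E, (ν : Measure E) (⋂ n, K n)ᶜ = 0 ∧
      ∀ (g : BoundedContinuousFunction E ℝ) (c : ℝ),
        (∀ᶠ n in atTop, ∫ x, g x ∂(μ n : Measure E) ≤ c) → ∫ x, g x ∂(ν : Measure E) ≤ c := by
  have hmem {m n : ℕ} (h : m ≤ n) : (μ n : Measure E) (K m)ᶜ = 0 :=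
    measure_mono_null (Set.compl_subset_compl.2 (hanti h)) (hμ n)
  obtain ⟨ν, -, hν⟩ := (isCompact_setOf_measure_compl_eq_zero (hK 0)).ultrafilter_le_nhds
    ((hyperfilter ℕ).map μ) (tendsto_principal.2 <| .of_forall fun n ↦ hmem n.zero_le)
  have hU : (hyperfilter ℕ : Filter ℕ) ≤ atTop := Nat.hyperfilter_le_atTop
  have hlim : Tendsto μ (hyperfilter ℕ) (𝓝 ν) := hν
  refine ⟨ν, ?_, fun g c hc ↦ ?_⟩
  · rw [Set.compl_iInter]
    refine measure_iUnion_null fun m ↦ ?_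
    exact (isCompact_setOf_measure_compl_eq_zero (hK m)).isClosed.mem_of_tendsto hlim
      (hU ((eventually_ge_atTop m).mono fun n ↦ hmem))
  · exact le_of_tendsto
      (ProbabilityMeasure.tendsto_iff_forall_integral_tendsto.1 hlim g) (hU hc)

end WeakLimit

section RandomCantorSet

open Filter

lemma le_add_two_mul_of_le_add_geometric {a : ℕ → ℝ} {c : ℝ} (hc : 0 ≤ c) {J : ℕ}
    (ha : ∀ n, J ≤ n → a (n + 1) ≤ a n + (1 / 2) ^ n * c) {n : ℕ} (hn : J ≤ n) :
    a n ≤ a J + 2 * c := by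
  have hsum : a n ≤ a J + (∑ i ∈ range n, (1 / 2 : ℝ) ^ i) * c := by
    induction n, hn using Nat.le_induction with
    | base => exact le_add_of_nonneg_right (by positivity)
    | succ n hn ih => rw [sum_range_succ, add_mul, ← add_assoc]; linarith [ha n hn]
  exact hsum.trans (by gcongr; exact sum_geometric_two_le n)

lemma exists_seq_cubeFamily {d : ℕ} {β : ℝ} (hβ : 0 < β) (hβd : β ≤ d) :
    ∃ F : ℕ → CubeFamily d, Antitone (fun n ↦ (F n).carrier) ∧
      (∀ n, n ≤ (F (n + 1)).scale ∧ ((F (n + 1)).count : ℝ) ≤ (F (n + 1)).scale ^ β) ∧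
      ∀ n A f, ∫ ξ, ‖expSum A f ξ‖ ^ 2 ∂(F (n + 1)).measure ≤
        ∫ ξ, ‖expSum A f ξ‖ ^ 2 ∂(F n).measure +
          (1 / 2) ^ n * (#A : ℝ) ^ (1 - β / d + 1 / ((n : ℝ) + 1)) * ∑ x ∈ A, ‖f x‖ ^ 2 := by
  choose refine hcarrier hscale hcount henergy using fun (n : ℕ) (F : CubeFamily d) ↦
    F.exists_refinement hβ hβd (pow_pos one_half_pos n) (Nat.one_div_pos_of_nat (n := n)) n
  let F (n : ℕ) : CubeFamily d := n.rec ⟨1, 1, 0⟩ refine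
  exact ⟨F, antitone_nat_of_succ_le fun n ↦ hcarrier n (F n),
    fun n ↦ ⟨hscale n (F n), hcount n (F n)⟩, fun n ↦ henergy n (F n)⟩

lemma exists_energy_bound_of_step {d : ℕ} {β ε : ℝ} (hβd : β ≤ d) (hε : 0 < ε)
    {F : ℕ → CubeFamily d} (hstep : ∀ n A f, ∫ ξ, ‖expSum A f ξ‖ ^ 2 ∂(F (n + 1)).measure ≤
      ∫ ξ, ‖expSum A f ξ‖ ^ 2 ∂(F n).measure +
        (1 / 2) ^ n * (#A : ℝ) ^ (1 - β / d + 1 / ((n : ℝ) + 1)) * ∑ x ∈ A, ‖f x‖ ^ 2) :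
    ∃ (J : ℕ) (C : ℝ), 0 ≤ C ∧ ∀ n ≥ J, ∀ A f, ∫ ξ, ‖expSum A f ξ‖ ^ 2 ∂(F n).measure ≤
      C * (#A : ℝ) ^ (1 - β / d + ε) * ∑ x ∈ A, ‖f x‖ ^ 2 := by
  obtain ⟨J, hJ⟩ := exists_nat_one_div_lt hε
  refine ⟨J, (F J).scale ^ d + 2, by positivity, fun n hn A f ↦ ?_⟩
  obtain rfl | hA := A.eq_empty_or_nonempty
  · simp [expSum]
  have hA1 : (1 : ℝ) ≤ #A := by exact_mod_cast hA.card_pos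
  have hγ : 0 ≤ 1 - β / d + ε := by linarith [div_le_one_of_le₀ hβd d.cast_nonneg]
  rw [mul_assoc]
  set c := (#A : ℝ) ^ (1 - β / d + ε) * ∑ x ∈ A, ‖f x‖ ^ 2 with hc
  have hle : ∑ x ∈ A, ‖f x‖ ^ 2 ≤ c :=
    le_mul_of_one_le_left (by positivity) (Real.one_le_rpow hA1 hγ)
  have hgeom (m : ℕ) (hm : J ≤ m) : ∫ ξ, ‖expSum A f ξ‖ ^ 2 ∂(F (m + 1)).measure ≤
      ∫ ξ, ‖expSum A f ξ‖ ^ 2 ∂(F m).measure + (1 / 2) ^ m * c := by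
    have hmε : 1 / ((m : ℝ) + 1) ≤ ε :=
      (one_div_le_one_div_of_le (by positivity) (by gcongr)).trans hJ.le
    refine (hstep m A f).trans ?_
    rw [mul_assoc, hc]
    gcongr
  calc ∫ ξ, ‖expSum A f ξ‖ ^ 2 ∂(F n).measure
      ≤ ∫ ξ, ‖expSum A f ξ‖ ^ 2 ∂(F J).measure + 2 * c :=
        le_add_two_mul_of_le_add_geometric
          (a := fun m ↦ ∫ ξ, ‖expSum A f ξ‖ ^ 2 ∂(F m).measure) (by positivity) hgeom hn
    _ ≤ (F J).scale ^ d * c + 2 * c := by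
        gcongr
        exact ((F J).integral_norm_expSum_sq_measure_le A f).trans (by gcongr)
    _ = ((F J).scale ^ d + 2) * c := by ring

lemma exists_compact_of_cubeFamily {d : ℕ} {β : ℝ} (hβ : 0 < β) (hβd : β ≤ d) :
    ∃ (K : Set (Fin d → ℝ)) (μ : ProbabilityMeasure (Fin d → ℝ)), IsCompact K ∧
      (μ : Measure (Fin d → ℝ)) Kᶜ = 0 ∧
      (∀ B : ℕ, ∃ F : CubeFamily d, B ≤ F.scale ∧ (F.count : ℝ) ≤ F.scale ^ β ∧ K ⊆ F.carrier) ∧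
      ∀ ε > 0, ∃ C : ℝ, 0 ≤ C ∧ ∀ A f, ∫ ξ, ‖expSum A f ξ‖ ^ 2 ∂(μ : Measure (Fin d → ℝ)) ≤
        C * (#A : ℝ) ^ (1 - β / d + ε) * ∑ x ∈ A, ‖f x‖ ^ 2 := by
  obtain ⟨F, hanti, hF, hstep⟩ := exists_seq_cubeFamily hβ hβd
  obtain ⟨μ, hμ, hlim⟩ := exists_measure_iInter_of_antitone
    (fun n ↦ ⟨(F n).measure, inferInstance⟩) (fun n ↦ (F n).isCompact_carrier) hanti
    fun n ↦ (F n).measure_compl_carrier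
  have hcompact : IsCompact (⋂ n, (F n).carrier) :=
    (F 0).isCompact_carrier.of_isClosed_subset
      (isClosed_iInter fun n ↦ (F n).isCompact_carrier.isClosed) (Set.iInter_subset _ 0)
  refine ⟨⋂ n, (F n).carrier, μ, hcompact, hμ,
    fun B ↦ ⟨F (B + 1), (hF B).1, (hF B).2, Set.iInter_subset _ _⟩, fun ε hε ↦ ?_⟩
  obtain ⟨J, C, hC, hbound⟩ := exists_energy_bound_of_step hβd hε hstep
  refine ⟨C, hC, fun A f ↦ ?_⟩
  let g : BoundedContinuousFunction (Fin d → ℝ) ℝ := .ofNormedAddCommGroup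
    (fun ξ ↦ ‖expSum A f ξ‖ ^ 2) (by fun_prop) (#A * ∑ x ∈ A, ‖f x‖ ^ 2) fun ξ ↦ by
      simpa using norm_expSum_sq_le A f ξ
  exact hlim g _ ((eventually_ge_atTop J).mono fun n hn ↦ hbound n hn A f)

end RandomCantorSet

section LebesgueExponent

variable {d : ℕ} (A : Finset (Fin d → ℤ)) (f : (Fin d → ℤ) → ℂ)

lemma integrable_expSum (μ : Measure (Fin d → ℝ)) [IsFiniteMeasure μ] :
    Integrable (expSum A f) μ :=
  .of_bound (C := ∑ x ∈ A, ‖f x‖) (continuous_expSum A f).aestronglyMeasurable <|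
    .of_forall fun _ ↦ norm_sum_le_of_le _ fun x _ ↦ by simp

lemma expSum_const_mul (c : ℂ) (ξ : Fin d → ℝ) :
    expSum A (fun x ↦ c * f x) ξ = c * expSum A f ξ := by
  simp only [expSum, mul_sum, mul_assoc]

lemma expSum_filter_ne_zero : expSum {x ∈ A | f x ≠ 0} f = expSum A f :=
  funext fun _ ↦ sum_filter_of_ne fun _ _ h hf ↦ h (by simp [hf])

lemma integral_norm_expSum_le_sum_fiber (μ : Measure (Fin d → ℝ)) [IsFiniteMeasure μ]
    (level : (Fin d → ℤ) → ℕ) :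
    ∫ ξ, ‖expSum A f ξ‖ ∂μ ≤
      ∑ n ∈ A.image level, ∫ ξ, ‖expSum {x ∈ A | level x = n} f ξ‖ ∂μ := by
  have hdecomp (ξ : Fin d → ℝ) :
      expSum A f ξ = ∑ n ∈ A.image level, expSum {x ∈ A | level x = n} f ξ :=
    (sum_fiberwise_of_maps_to (fun _ hx ↦ mem_image_of_mem _ hx) _).symm
  rw [← integral_finsetSum _ fun n _ ↦ (integrable_expSum _ f μ).norm]
  refine integral_mono (integrable_expSum A f μ).norm
    (integrable_finsetSum _ fun n _ ↦ (integrable_expSum _ f μ).norm) fun ξ ↦ ?_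
  simp only [hdecomp ξ]
  exact norm_sum_le _ _

lemma summable_half_pow_rpow {κ : ℝ} (hκ : 0 < κ) :
    Summable fun n : ℕ ↦ ((1 / 2 : ℝ) ^ (n + 1)) ^ κ := by
  simp_rw [← Real.rpow_pow_comm (show (0 : ℝ) ≤ 1 / 2 by norm_num) κ]
  exact (summable_nat_add_iff 1).2 (summable_geometric_of_lt_one (by positivity)
    (Real.rpow_lt_one (by norm_num) (by norm_num) hκ))

variable {A f}

variable {μ : Measure (Fin d → ℝ)} {p : ℝ}

lemma card_le_rpow_neg_of_sum_rpow_le_one {δ : ℝ} (hδ : 0 < δ) (hp : 0 ≤ p)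
    (hδf : ∀ x ∈ A, δ ≤ ‖f x‖) (hf : ∑ x ∈ A, ‖f x‖ ^ p ≤ 1) : (#A : ℝ) ≤ δ ^ (-p) := by
  rw [Real.rpow_neg hδ.le, ← one_div, le_div_iff₀ (by positivity), ← nsmul_eq_mul]
  exact (card_nsmul_le_sum _ _ _ fun x hx ↦
    Real.rpow_le_rpow hδ.le (hδf x hx) hp).trans hf

lemma integral_norm_expSum_le_rpow {D : ℝ} (hp : 0 < p)
    (hμ : ∀ (A : Finset (Fin d → ℤ)) f, ∑ x ∈ A, ‖f x‖ ^ p ≤ 1 → ∫ ξ, ‖expSum A f ξ‖ ∂μ ≤ D)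
    (A : Finset (Fin d → ℤ)) (f : (Fin d → ℤ) → ℂ) :
    ∫ ξ, ‖expSum A f ξ‖ ∂μ ≤ D * (∑ x ∈ A, ‖f x‖ ^ p) ^ p⁻¹ := by
  have hterm (x : Fin d → ℤ) : 0 ≤ ‖f x‖ ^ p := by positivity
  have hsum : 0 ≤ ∑ x ∈ A, ‖f x‖ ^ p := sum_nonneg fun x _ ↦ hterm x
  set c := (∑ x ∈ A, ‖f x‖ ^ p) ^ p⁻¹ with hc
  rcases hsum.eq_or_lt with hzero | hpos
  · have hf : ∀ x ∈ A, f x = 0 := fun x hx ↦ by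
      simpa [Real.rpow_eq_zero, hp.ne'] using (sum_eq_zero_iff_of_nonneg fun x _ ↦ hterm x).1
        hzero.symm x hx
    have hexp (ξ : Fin d → ℝ) : expSum A f ξ = 0 := sum_eq_zero fun x hx ↦ by simp [hf x hx]
    simp [hexp, hc, ← hzero, hp.ne']
  · have hcpos : 0 < c := by positivity
    have hnormalized := hμ A (fun x ↦ ((c⁻¹ : ℝ) : ℂ) * f x) <| by
      simp_rw [norm_mul, Complex.norm_real, norm_inv, Real.norm_of_nonneg hcpos.le,
        Real.mul_rpow (inv_nonneg.2 hcpos.le) (norm_nonneg _), ← mul_sum,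
        Real.inv_rpow hcpos.le]
      rw [hc, Real.rpow_inv_rpow hsum hp.ne', inv_mul_cancel₀ hpos.ne']
    simp_rw [expSum_const_mul, norm_mul, Complex.norm_real, norm_inv,
      Real.norm_of_nonneg hcpos.le] at hnormalized
    rwa [integral_const_mul, inv_mul_le_iff₀ hcpos, mul_comm] at hnormalized

variable [IsProbabilityMeasure μ] {C σ : ℝ}

lemma integral_norm_expSum_le_of_dyadic (hC : 0 ≤ C) (hσ : 0 ≤ σ) (hp : 0 ≤ p)
    (hμ : ∀ (A : Finset (Fin d → ℤ)) f,
      ∫ ξ, ‖expSum A f ξ‖ ^ 2 ∂μ ≤ C * (#A : ℝ) ^ σ * ∑ x ∈ A, ‖f x‖ ^ 2)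
    {δ : ℝ} (hδ : 0 < δ) (hf_ge : ∀ x ∈ A, δ ≤ ‖f x‖) (hf_le : ∀ x ∈ A, ‖f x‖ ≤ 2 * δ)
    (hf : ∑ x ∈ A, ‖f x‖ ^ p ≤ 1) :
    ∫ ξ, ‖expSum A f ξ‖ ∂μ ≤ 2 * √C * δ ^ (1 - p * (σ + 1) / 2) := by
  have hjensen : (∫ ξ, ‖expSum A f ξ‖ ∂μ) ^ 2 ≤ ∫ ξ, ‖expSum A f ξ‖ ^ 2 ∂μ :=
    even_two.convexOn_pow.map_integral_le (by fun_prop) isClosed_univ (by simp)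
      (integrable_expSum A f μ).norm (integrable_norm_expSum_sq A f μ)
  have hsq : ∑ x ∈ A, ‖f x‖ ^ 2 ≤ #A * (2 * δ) ^ 2 := by
    rw [← nsmul_eq_mul]
    exact sum_le_card_nsmul _ _ _ fun x hx ↦ by gcongr; exact hf_le x hx
  refine le_of_sq_le_sq (hjensen.trans ?_) (by positivity)
  calc ∫ ξ, ‖expSum A f ξ‖ ^ 2 ∂μ
      ≤ C * (#A : ℝ) ^ σ * (#A * (2 * δ) ^ 2) := (hμ A f).trans (by gcongr)
    _ = C * (2 * δ) ^ 2 * (#A : ℝ) ^ (σ + 1) := by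
        rw [Real.rpow_add_one' (by positivity) (by positivity)]; ring
    _ ≤ C * (2 * δ) ^ 2 * (δ ^ (-p)) ^ (σ + 1) := by
        gcongr; exact card_le_rpow_neg_of_sum_rpow_le_one hδ hp hf_ge hf
    _ = (2 * √C * δ ^ (1 - p * (σ + 1) / 2)) ^ 2 := by
        have hexp : (δ ^ (1 - p * (σ + 1) / 2)) ^ 2 = δ ^ 2 * (δ ^ (-p)) ^ (σ + 1) := by
          rw [← Real.rpow_natCast, ← Real.rpow_natCast, ← Real.rpow_mul hδ.le,
            ← Real.rpow_mul hδ.le, ← Real.rpow_add hδ]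
          congr 1; push_cast; ring
        rw [mul_pow (2 * √C), hexp, mul_pow 2 (√C), Real.sq_sqrt hC]; ring

lemma integral_norm_expSum_le_of_sum_rpow_le_one (hC : 0 ≤ C) (hσ : 0 ≤ σ) (hp : 0 < p)
    (hpσ : p * (σ + 1) < 2)
    (hμ : ∀ (A : Finset (Fin d → ℤ)) f,
      ∫ ξ, ‖expSum A f ξ‖ ^ 2 ∂μ ≤ C * (#A : ℝ) ^ σ * ∑ x ∈ A, ‖f x‖ ^ 2)
    (hf : ∑ x ∈ A, ‖f x‖ ^ p ≤ 1) :
    ∫ ξ, ‖expSum A f ξ‖ ∂μ ≤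
      ∑' n : ℕ, 2 * √C * ((1 / 2 : ℝ) ^ (n + 1)) ^ (1 - p * (σ + 1) / 2) := by
  have hlevel : ∀ x ∈ {x ∈ A | f x ≠ 0}, ∃ n, (1 / 2 : ℝ) ^ (n + 1) < ‖f x‖ ∧
      ‖f x‖ ≤ (1 / 2) ^ n := by
    intro x hx
    obtain ⟨hxA, hfx⟩ := mem_filter.1 hx
    refine exists_nat_pow_near_of_lt_one (norm_pos_iff.2 hfx) ?_ (by norm_num) (by norm_num)
    refine le_of_not_gt fun hlt ↦ (Real.one_lt_rpow hlt hp).not_ge ?_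
    exact (single_le_sum (f := fun x ↦ ‖f x‖ ^ p) (fun _ _ ↦ by positivity) hxA).trans hf
  choose! level hlevel using hlevel
  rw [← expSum_filter_ne_zero]
  refine (integral_norm_expSum_le_sum_fiber _ f μ level).trans <|
    (sum_le_sum fun n _ ↦ ?_).trans <|
    ((summable_half_pow_rpow (by linarith)).mul_left _).sum_le_tsum _ fun n _ ↦ by positivity
  have hmem : ∀ x ∈ {x ∈ {x ∈ A | f x ≠ 0} | level x = n},
      (1 / 2 : ℝ) ^ (n + 1) < ‖f x‖ ∧ ‖f x‖ ≤ (1 / 2) ^ n := by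
    intro x hx
    obtain ⟨hxA, rfl⟩ := mem_filter.1 hx
    exact hlevel x hxA
  refine integral_norm_expSum_le_of_dyadic hC hσ hp.le hμ (by positivity)
    (fun x hx ↦ (hmem x hx).1.le) (fun x hx ↦ (hmem x hx).2.trans_eq (by ring)) ?_
  exact (sum_le_sum_of_subset_of_nonneg ((filter_subset _ _).trans (filter_subset _ _))
    fun _ _ _ ↦ by positivity).trans hf

end LebesgueExponent

section FloorCell

variable {d : ℕ}

/-- The half-open unit cube `∏ j, [m j, m j + 1)` of `ℝ^d` with lowest vertex `m`. -/
def floorCell (m : Fin d → ℤ) : Set (Fin d → ℝ) := (fun x j ↦ ⌊x j⌋) ⁻¹' {m}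

lemma measurableSet_floorCell (m : Fin d → ℤ) : MeasurableSet (floorCell m) :=
  measurable_pi_lambda _ (fun j ↦ Int.measurable_floor.comp (measurable_pi_apply j))
    (measurableSet_singleton m)

lemma pairwise_disjoint_floorCell : Pairwise (Function.onFun Disjoint (floorCell (d := d))) :=
  pairwise_disjoint_fiber _

lemma iUnion_floorCell : ⋃ m, floorCell (d := d) m = Set.univ :=
  Set.eq_univ_of_forall fun x ↦ Set.mem_iUnion.2 ⟨fun j ↦ ⌊x j⌋, rfl⟩

lemma floorCell_zero : floorCell (0 : Fin d → ℤ) = Set.univ.pi fun _ ↦ Set.Ico (0 : ℝ) 1 := by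
  ext x; simp [floorCell, funext_iff, Int.floor_eq_iff]

lemma volume_floorCell_zero : volume (floorCell (0 : Fin d → ℤ)) = 1 := by
  simp [floorCell_zero, Real.volume_pi_Ico]

instance : IsProbabilityMeasure (volume.restrict (floorCell (0 : Fin d → ℤ))) :=
  ⟨by rw [Measure.restrict_apply_univ, volume_floorCell_zero]⟩

lemma preimage_intCast_add_floorCell (m : Fin d → ℤ) :
    ((fun j ↦ (m j : ℝ)) + ·) ⁻¹' floorCell m = floorCell 0 := by
  ext u; simp [floorCell, funext_iff]

lemma integral_floorCell {G : Type*} [NormedAddCommGroup G] [NormedSpace ℝ G]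
    (m : Fin d → ℤ) (F : (Fin d → ℝ) → G) :
    ∫ x in floorCell m, F x = ∫ u in floorCell 0, F ((fun j ↦ (m j : ℝ)) + u) := by
  rw [← preimage_intCast_add_floorCell m, (measurePreserving_add_left volume
    _).setIntegral_preimage_emb (measurableEmbedding_addLeft _)]

lemma lintegral_floorCell (m : Fin d → ℤ) (F : (Fin d → ℝ) → ℝ≥0∞) :
    ∫⁻ x in floorCell m, F x = ∫⁻ u in floorCell 0, F ((fun j ↦ (m j : ℝ)) + u) := by
  rw [← preimage_intCast_add_floorCell m, (measurePreserving_add_left volume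
    _).setLIntegral_comp_preimage_emb (measurableEmbedding_addLeft _)]

lemma sum_lintegral_floorCell_le (A : Finset (Fin d → ℤ)) (F : (Fin d → ℝ) → ℝ≥0∞) :
    ∑ m ∈ A, ∫⁻ x in floorCell m, F x ≤ ∫⁻ x, F x := by
  rw [← lintegral_biUnion_finset (fun _ _ _ _ h ↦ pairwise_disjoint_floorCell h)
    fun m _ ↦ measurableSet_floorCell m]
  exact setLIntegral_le_lintegral _ _

end FloorCell

section Transference

variable {d : ℕ}

/-- The Fourier transform on `ℝ^d` realised as `Fin d → ℝ`, which is where the lattice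
decomposition takes place; `fourier_toLp` identifies it with Mathlib's `𝓕`. -/
noncomputable def piFourier (g : (Fin d → ℝ) → ℂ) (ξ : Fin d → ℝ) : ℂ :=
  ∫ x, g x * eNeg (∑ j, x j * ξ j)

variable {g : (Fin d → ℝ) → ℂ}

lemma integrable_mul_eNeg (hg : Integrable g) (ξ : Fin d → ℝ) :
    Integrable fun x ↦ g x * eNeg (∑ j, x j * ξ j) :=
  hg.mul_bdd (c := 1) (Continuous.aestronglyMeasurable (by fun_prop))
    (.of_forall fun _ ↦ by simp)

lemma sum_integral_floorCell_mul_eNeg (hg : Integrable g) (A : Finset (Fin d → ℤ))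
    (ξ : Fin d → ℝ) :
    ∑ m ∈ A, ∫ x in floorCell m, g x * eNeg (∑ j, x j * ξ j) =
      ∫ u in floorCell 0, eNeg (∑ j, u j * ξ j) *
        expSum A (fun m ↦ g ((fun j ↦ (m j : ℝ)) + u)) ξ := by
  rw [sum_congr rfl fun m _ ↦ integral_floorCell m _, ← integral_finsetSum _ fun m _ ↦
    ((integrable_mul_eNeg hg ξ).comp_add_left _).integrableOn]
  congr 1 with u
  simp only [expSum, mul_sum, Pi.add_apply, add_mul, sum_add_distrib, eNeg_add]
  exact sum_congr rfl fun m _ ↦ by ring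

lemma hasSum_integral_floorCell_mul_eNeg (hg : Integrable g) (ξ : Fin d → ℝ) :
    HasSum (fun m ↦ ∫ x in floorCell m, g x * eNeg (∑ j, x j * ξ j)) (piFourier g ξ) := by
  simpa only [piFourier, iUnion_floorCell, setIntegral_univ] using hasSum_integral_iUnion
    measurableSet_floorCell pairwise_disjoint_floorCell (integrable_mul_eNeg hg ξ).integrableOn

variable {μ : Measure (Fin d → ℝ)} [IsProbabilityMeasure μ] {D : ℝ≥0} {p : ℝ}

lemma lintegral_enorm_sum_integral_floorCell_le (hp : 1 ≤ p)
    (hμ : ∀ (A : Finset (Fin d → ℤ)) f,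
      ∫⁻ ξ, ‖expSum A f ξ‖ₑ ∂μ ≤ D * (∑ x ∈ A, ‖f x‖ₑ ^ p) ^ p⁻¹)
    (hg : Integrable g) (hgc : Continuous g) (A : Finset (Fin d → ℤ)) :
    ∫⁻ ξ, ‖∑ m ∈ A, ∫ x in floorCell m, g x * eNeg (∑ j, x j * ξ j)‖ₑ ∂μ ≤
      D * (∫⁻ x, ‖g x‖ₑ ^ p) ^ p⁻¹ := by
  have hp0 : 0 < p := by linarith
  set sample : (Fin d → ℝ) → (Fin d → ℤ) → ℂ := fun u m ↦ g ((fun j ↦ (m j : ℝ)) + u)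
  set S : (Fin d → ℝ) → ℝ≥0∞ := fun u ↦ ∑ m ∈ A, ‖sample u m‖ₑ ^ p
  have hcont : Continuous fun q : (Fin d → ℝ) × (Fin d → ℝ) ↦ expSum A (sample q.2) q.1 := by
    simp only [expSum, sample]; fun_prop
  have hgm := hgc.measurable
  have hS : Measurable S := by simp only [S, sample]; fun_prop
  calc ∫⁻ ξ, ‖∑ m ∈ A, ∫ x in floorCell m, g x * eNeg (∑ j, x j * ξ j)‖ₑ ∂μ
      ≤ ∫⁻ ξ, (∫⁻ u in floorCell 0, ‖expSum A (sample u) ξ‖ₑ) ∂μ := by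
        refine lintegral_mono fun ξ ↦ ?_
        rw [sum_integral_floorCell_mul_eNeg hg]
        exact (enorm_integral_le_lintegral_enorm _).trans_eq (by simp [← ofReal_norm, sample])
    _ = ∫⁻ u in floorCell 0, ∫⁻ ξ, ‖expSum A (sample u) ξ‖ₑ ∂μ :=
        lintegral_lintegral_swap hcont.enorm.measurable.aemeasurable
    _ ≤ ∫⁻ u in floorCell 0, D * S u ^ p⁻¹ := lintegral_mono fun u ↦ hμ A (sample u)
    _ = D * ∫⁻ u in floorCell 0, S u ^ p⁻¹ := lintegral_const_mul _ (by fun_prop)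
    _ ≤ D * (∫⁻ u in floorCell 0, S u) ^ p⁻¹ := by
        gcongr
        have hjensen := eLpNorm'_le_eLpNorm'_of_exponent_le one_pos hp
          (volume.restrict (floorCell (0 : Fin d → ℤ)))
          (hS.pow_const p⁻¹).aestronglyMeasurable
        simpa [eLpNorm', ENNReal.rpow_inv_rpow hp0.ne'] using hjensen
    _ = D * (∑ m ∈ A, ∫⁻ x in floorCell m, ‖g x‖ₑ ^ p) ^ p⁻¹ := by
        rw [sum_congr rfl fun m _ ↦ lintegral_floorCell m _,
          ← lintegral_finsetSum _ fun m _ ↦ by fun_prop]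
    _ ≤ D * (∫⁻ x, ‖g x‖ₑ ^ p) ^ p⁻¹ := by
        gcongr; exact sum_lintegral_floorCell_le A _

lemma eLpNorm_piFourier_le (hp : 1 ≤ p)
    (hμ : ∀ (A : Finset (Fin d → ℤ)) f,
      ∫⁻ ξ, ‖expSum A f ξ‖ₑ ∂μ ≤ D * (∑ x ∈ A, ‖f x‖ₑ ^ p) ^ p⁻¹)
    (hg : Integrable g) (hgc : Continuous g) :
    eLpNorm (piFourier g) 1 μ ≤ D * eLpNorm g (ENNReal.ofReal p) volume := by
  have hp0 : 0 < p := by linarith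
  have hcont : Continuous fun q : (Fin d → ℝ) × (Fin d → ℝ) ↦
      g q.2 * eNeg (∑ j, q.2 j * q.1 j) := by fun_prop
  obtain ⟨A, hA⟩ := Filter.exists_seq_tendsto (Filter.atTop : Filter (Finset (Fin d → ℤ)))
  refine (Lp.eLpNorm_lim_le_liminf_eLpNorm (fun n ↦ ?_) _ (.of_forall fun ξ ↦
    (hasSum_integral_floorCell_mul_eNeg hg ξ).comp hA)).trans ?_
  · exact (Finset.stronglyMeasurable_fun_sum _ fun m _ ↦
      hcont.stronglyMeasurable.integral_prod_right).aestronglyMeasurable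
  · rw [eLpNorm_eq_lintegral_rpow_enorm_toReal (by simpa) ENNReal.ofReal_ne_top,
      ENNReal.toReal_ofReal hp0.le, one_div]
    refine Filter.liminf_le_of_frequently_le' (.of_forall fun n ↦ ?_)
    rw [eLpNorm_one_eq_lintegral_enorm]
    exact lintegral_enorm_sum_integral_floorCell_le hp hμ hg hgc (A n)

lemma fourier_toLp (f : EuclideanSpace ℝ (Fin d) → ℂ) (ξ : Fin d → ℝ) :
    𝓕 f (WithLp.toLp 2 ξ) = piFourier (fun x ↦ f (WithLp.toLp 2 x)) ξ := by
  rw [Real.fourier_eq, piFourier, ← (PiLp.volume_preserving_toLp (Fin d)).integral_comp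
    (MeasurableEquiv.toLp 2 _).measurableEmbedding]
  congr 1 with x
  simp [Circle.smul_def, eNeg, PiLp.inner_apply, mul_comm]

end Transference

/-- The restriction estimate `‖f̂‖_{L^q(μ)} ≤ C ‖f‖_{L^p}` for some measure `μ` charging `E` and
some `q`, so that `pres E` is the supremum of the `p ∈ [1, 2]` with `HasRestrictionBound E p`. -/
def HasRestrictionBound {d : ℕ} (E : Set (EuclideanSpace ℝ (Fin d))) (p : ℝ) : Prop :=
  ∃ (μ : Measure (EuclideanSpace ℝ (Fin d))) (q : ℝ≥0∞) (C : ℝ≥0),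
    0 < μ E ∧ 1 ≤ q ∧
    ∀ f : SchwartzMap (EuclideanSpace ℝ (Fin d)) ℂ,
      eLpNorm (𝓕 ⇑f) q μ ≤ (C : ℝ≥0∞) * eLpNorm (⇑f) (ENNReal.ofReal p) volume

section HasRestrictionBound

variable {d : ℕ}

lemma continuous_fourier (f : SchwartzMap (EuclideanSpace ℝ (Fin d)) ℂ) : Continuous (𝓕 ⇑f) := by
  rw [← SchwartzMap.fourier_coe]; exact (𝓕 f).continuous

lemma hasRestrictionBound_of_lintegral_enorm_expSum_le {K : Set (Fin d → ℝ)}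
    {μ : Measure (Fin d → ℝ)} [IsProbabilityMeasure μ] (hμK : μ Kᶜ = 0) {D : ℝ≥0} {p : ℝ}
    (hp : 1 ≤ p)
    (hμ : ∀ (A : Finset (Fin d → ℤ)) f,
      ∫⁻ ξ, ‖expSum A f ξ‖ₑ ∂μ ≤ D * (∑ x ∈ A, ‖f x‖ₑ ^ p) ^ p⁻¹) :
    HasRestrictionBound (WithLp.ofLp ⁻¹' K) p := by
  have htoLp := PiLp.volume_preserving_toLp (Fin d)
  refine ⟨μ.map (WithLp.toLp 2), 1, D, ?_, le_rfl, fun f ↦ ?_⟩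
  · have hle := Measure.le_map_apply htoLp.measurable.aemeasurable (μ := μ) (WithLp.ofLp ⁻¹' K)
    refine (pos_iff_ne_zero.2 fun hK ↦ ?_).trans_le hle
    have huniv : μ Set.univ ≤ μ K + μ Kᶜ := by
      rw [← Set.union_compl_self K]; exact measure_union_le _ _
    simp [hμK, show μ K = 0 from hK] at huniv
  · have hfourier : 𝓕 ⇑f ∘ WithLp.toLp 2 = piFourier (⇑f ∘ WithLp.toLp 2) :=
      funext fun ξ ↦ fourier_toLp f ξ
    rw [eLpNorm_map_measure (continuous_fourier f).aestronglyMeasurable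
      htoLp.measurable.aemeasurable, hfourier,
      ← eLpNorm_comp_measurePreserving f.continuous.aestronglyMeasurable htoLp]
    exact eLpNorm_piFourier_le hp hμ
      (htoLp.integrable_comp_of_integrable f.integrable) (f.continuous.comp (by fun_prop))

theorem hasRestrictionBound_of_integral_norm_expSum_sq_le {K : Set (Fin d → ℝ)}
    {μ : Measure (Fin d → ℝ)} [IsProbabilityMeasure μ] (hμK : μ Kᶜ = 0) {C σ p : ℝ} (hC : 0 ≤ C)
    (hσ : 0 ≤ σ) (hp : 1 ≤ p) (hpσ : p * (σ + 1) < 2)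
    (hμ : ∀ (A : Finset (Fin d → ℤ)) f,
      ∫ ξ, ‖expSum A f ξ‖ ^ 2 ∂μ ≤ C * (#A : ℝ) ^ σ * ∑ x ∈ A, ‖f x‖ ^ 2) :
    HasRestrictionBound (WithLp.ofLp ⁻¹' K) p := by
  have hp0 : 0 < p := by linarith
  set D : ℝ := ∑' n : ℕ, 2 * √C * ((1 / 2 : ℝ) ^ (n + 1)) ^ (1 - p * (σ + 1) / 2)
  have hD : 0 ≤ D := tsum_nonneg fun n ↦ by positivity
  refine hasRestrictionBound_of_lintegral_enorm_expSum_le hμK (D := D.toNNReal) hp fun A f ↦ ?_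
  have hL1 : ∫ ξ, ‖expSum A f ξ‖ ∂μ ≤ D * (∑ x ∈ A, ‖f x‖ ^ p) ^ p⁻¹ :=
    integral_norm_expSum_le_rpow hp0
      (fun A f ↦ integral_norm_expSum_le_of_sum_rpow_le_one hC hσ hp0 hpσ hμ) A f
  rw [← ofReal_integral_norm_eq_lintegral_enorm (integrable_expSum A f μ)]
  refine (ENNReal.ofReal_le_ofReal hL1).trans_eq ?_
  have hsum : 0 ≤ ∑ x ∈ A, ‖f x‖ ^ p := sum_nonneg fun x _ ↦ by positivity
  rw [ENNReal.ofReal_mul hD, ← ENNReal.ofReal_rpow_of_nonneg hsum (by positivity),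
    ENNReal.ofReal_sum_of_nonneg fun x _ ↦ by positivity]
  simp_rw [← ofReal_norm, ENNReal.ofReal_rpow_of_nonneg (norm_nonneg _) hp0.le]
  rfl

variable {E F : Set (EuclideanSpace ℝ (Fin d))} {p : ℝ}

lemma HasRestrictionBound.mono (hEF : E ⊆ F) (h : HasRestrictionBound E p) :
    HasRestrictionBound F p := by
  obtain ⟨μ, q, C, hμ, hq, hf⟩ := h
  exact ⟨μ, q, C, hμ.trans_le (measure_mono hEF), hq, hf⟩

lemma HasRestrictionBound.of_union (h : HasRestrictionBound (E ∪ F) p) :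
    HasRestrictionBound E p ∨ HasRestrictionBound F p := by
  obtain ⟨μ, q, C, hμ, hq, hf⟩ := h
  rw [pos_iff_ne_zero, Ne, measure_union_null_iff, not_and_or] at hμ
  exact hμ.imp (fun hE ↦ ⟨μ, q, C, pos_iff_ne_zero.2 hE, hq, hf⟩)
    fun hF ↦ ⟨μ, q, C, pos_iff_ne_zero.2 hF, hq, hf⟩

lemma not_hasRestrictionBound_empty :
    ¬ HasRestrictionBound (∅ : Set (EuclideanSpace ℝ (Fin d))) p := by
  rintro ⟨μ, -, -, hμ, -⟩
  simp at hμ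

lemma hasRestrictionBound_one (hE : E.Nonempty) : HasRestrictionBound E 1 := by
  obtain ⟨x, hx⟩ := hE
  refine ⟨Measure.dirac x, ⊤, 1, by simp [Measure.dirac_apply_of_mem hx], le_top, fun f ↦ ?_⟩
  rw [ENNReal.ofReal_one, ENNReal.coe_one, one_mul, eLpNorm_one_eq_lintegral_enorm,
    ← ofReal_integral_norm_eq_lintegral_enorm f.integrable, eLpNorm_exponent_top]
  exact eLpNormEssSup_le_of_ae_bound <| .of_forall fun ξ ↦
    VectorFourier.norm_fourierIntegral_le_integral_norm _ _ _ f ξ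

lemma not_hasRestrictionBound_of_forall_exists (hE : MeasurableSet E) {c : ℝ} (hc : 0 < c)
    (h : ∀ ε > 0, ∃ f : SchwartzMap (EuclideanSpace ℝ (Fin d)) ℂ,
      (∀ ξ ∈ E, c ≤ ‖𝓕 ⇑f ξ‖) ∧ eLpNorm ⇑f (ENNReal.ofReal p) volume ≤ ENNReal.ofReal ε) :
    ¬ HasRestrictionBound E p := by
  rintro ⟨μ, q, C, hμ, hq, hf⟩
  have hzero : eLpNorm (E.indicator fun _ ↦ c) q μ = 0 := by
    refine le_antisymm (ENNReal.le_of_forall_pos_le_add fun δ hδ _ ↦ ?_) bot_le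
    obtain ⟨f, hfE, hfp⟩ := h (δ / (C + 1)) (by positivity)
    calc eLpNorm (E.indicator fun _ ↦ c) q μ
        ≤ eLpNorm (𝓕 ⇑f) q μ := by
          refine eLpNorm_mono fun ξ ↦ ?_
          by_cases hξ : ξ ∈ E
          · simpa [hξ, abs_of_pos hc] using hfE ξ hξ
          · simp [hξ]
      _ ≤ C * ENNReal.ofReal (δ / (C + 1)) := (hf f).trans (by gcongr)
      _ = ENNReal.ofReal (C * (δ / (C + 1))) := by
          rw [ENNReal.ofReal_mul C.coe_nonneg, ENNReal.ofReal_coe_nnreal]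
      _ ≤ 0 + δ := by
          rw [zero_add, ← ENNReal.ofReal_coe_nnreal]
          refine ENNReal.ofReal_le_ofReal ?_
          rw [mul_div_left_comm]
          exact mul_le_of_le_one_right δ.2 (by rw [div_le_one (by positivity)]; simp)
  rw [eLpNorm_eq_zero_iff (measurable_const.indicator hE).aestronglyMeasurable
    (by positivity)] at hzero
  exact hμ.ne' <| measure_mono_null (fun ξ hξ ↦ by simpa [hξ] using hc.ne') hzero

end HasRestrictionBound

section PeriodicFunctions

variable {d : ℕ}

lemma dist_le_one_of_mem_floorCell {m : Fin d → ℤ} {x y : Fin d → ℝ} (hx : x ∈ floorCell m)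
    (hy : y ∈ floorCell m) : dist x y ≤ 1 :=
  (dist_pi_le_iff zero_le_one).2 fun j ↦ by
    rw [Real.dist_eq]
    exact (Int.abs_sub_lt_one_of_floor_eq_floor
      ((congr_fun hx j).trans (congr_fun hy j).symm)).le

lemma lintegral_eq_tsum_floorCell (F : (Fin d → ℝ) → ℝ≥0∞) :
    ∫⁻ x, F x = ∑' m, ∫⁻ x in floorCell m, F x := by
  rw [← lintegral_iUnion measurableSet_floorCell pairwise_disjoint_floorCell, iUnion_floorCell,
    setLIntegral_univ]

lemma lintegral_mul_le_of_periodic {D H : (Fin d → ℝ) → ℝ≥0∞} {c : ℝ≥0∞} (hc : c ≠ ⊤)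
    (hD : ∀ x y, dist x y ≤ 1 → D x ≤ c * D y)
    (hHm : Measurable H) (hH : ∀ (m : Fin d → ℤ) u, H ((fun j ↦ (m j : ℝ)) + u) = H u) :
    ∫⁻ x, D x * H x ≤ c * (∫⁻ x, D x) * ∫⁻ u in floorCell 0, H u := by
  have hcell (m : Fin d → ℤ) {x} (hx : x ∈ floorCell m) :
      D x ≤ c * ∫⁻ y in floorCell m, D y := by
    rw [← lintegral_const_mul' _ _ hc]
    calc D x = ∫⁻ _ in floorCell m, D x := by
          rw [lintegral_floorCell, lintegral_const, measure_univ, mul_one]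
      _ ≤ ∫⁻ y in floorCell m, c * D y := setLIntegral_mono' (measurableSet_floorCell m)
          fun y hy ↦ hD x y (dist_le_one_of_mem_floorCell hx hy)
  calc ∫⁻ x, D x * H x = ∑' m, ∫⁻ x in floorCell m, D x * H x := lintegral_eq_tsum_floorCell _
    _ ≤ ∑' m, ∫⁻ x in floorCell m, (c * ∫⁻ y in floorCell m, D y) * H x :=
        ENNReal.tsum_le_tsum fun m ↦ setLIntegral_mono' (measurableSet_floorCell m) fun x hx ↦ by
          gcongr; exact hcell m hx
    _ = ∑' m, c * (∫⁻ y in floorCell m, D y) * ∫⁻ u in floorCell 0, H u := by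
        congr 1 with m
        rw [lintegral_const_mul _ hHm, lintegral_floorCell m H]
        simp_rw [hH]
    _ = c * (∫⁻ x, D x) * ∫⁻ u in floorCell 0, H u := by
        rw [ENNReal.tsum_mul_right, ENNReal.tsum_mul_left, ← lintegral_eq_tsum_floorCell]

lemma expSum_intCast_add (A : Finset (Fin d → ℤ)) (f : (Fin d → ℤ) → ℂ) (m : Fin d → ℤ)
    (u : Fin d → ℝ) : expSum A f ((fun j ↦ (m j : ℝ)) + u) = expSum A f u := by
  refine sum_congr rfl fun x _ ↦ ?_
  have hint : ∑ j, (x j : ℝ) * m j = ((∑ j, x j * m j : ℤ) : ℝ) := by push_cast; rfl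
  simp only [Pi.add_apply, mul_add, sum_add_distrib, eNeg_add, hint, eNeg_intCast, one_mul]

lemma floorCell_zero_ae_eq_Icc : floorCell (0 : Fin d → ℤ) =ᵐ[volume] Set.Icc 0 1 := by
  rw [floorCell_zero]
  exact Measure.univ_pi_Ico_ae_eq_Icc

lemma fourierCoeff_restrict_floorCell_zero (z : Fin d → ℤ) :
    fourierCoeff (volume.restrict (floorCell 0)) z = if z = 0 then 1 else 0 := by
  have hcube : fourierCoeff (volume.restrict (floorCell 0)) z =
      cubeFourier fun j ↦ (z j : ℝ) := by
    rw [fourierCoeff, setIntegral_congr_set floorCell_zero_ae_eq_Icc]; rfl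
  rw [hcube]
  split_ifs with hz
  · simpa [hz, Pi.zero_def] using cubeFourier_zero (d := d)
  · exact cubeFourier_intCast hz

lemma integral_floorCell_zero_norm_expSum_sq (A : Finset (Fin d → ℤ)) (f : (Fin d → ℤ) → ℂ) :
    ∫ u in floorCell 0, ‖expSum A f u‖ ^ 2 = ∑ x ∈ A, ‖f x‖ ^ 2 := by
  have h := integral_norm_expSum_sq A f (volume.restrict (floorCell 0))
  simp only [fourierCoeff_restrict_floorCell_zero, sub_eq_zero, mul_ite, mul_one, mul_zero,
    sum_ite_eq, Complex.mul_conj'] at h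
  rw [sum_congr rfl fun x hx ↦ if_pos hx] at h
  exact_mod_cast h

lemma eLpNorm_expSum_floorCell_zero_le (A : Finset (Fin d → ℤ)) (f : (Fin d → ℤ) → ℂ)
    {p : ℝ≥0∞} (hp : p ≤ 2) :
    eLpNorm (expSum A f) p (volume.restrict (floorCell 0)) ≤
      ENNReal.ofReal √(∑ x ∈ A, ‖f x‖ ^ 2) := by
  refine (eLpNorm_le_eLpNorm_of_exponent_le hp
    (continuous_expSum A f).aestronglyMeasurable).trans_eq ?_
  have hmem : MemLp (expSum A f) 2 (volume.restrict (floorCell 0)) :=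
    (memLp_two_iff_integrable_sq_norm (continuous_expSum A f).aestronglyMeasurable).2
      (integrable_norm_expSum_sq A f _)
  rw [hmem.eLpNorm_eq_integral_rpow_norm two_ne_zero ENNReal.ofNat_ne_top]
  simp [integral_floorCell_zero_norm_expSum_sq, Real.sqrt_eq_rpow]

end PeriodicFunctions

section SchwartzDecay

lemma ofReal_one_add_norm_rpow_neg_le {E : Type*} [SeminormedAddCommGroup E] {r : ℝ} (hr : 0 ≤ r)
    {x y : E} (hxy : dist x y ≤ 1) :
    ENNReal.ofReal ((1 + ‖x‖) ^ (-r)) ≤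
      ENNReal.ofReal (2 ^ r) * ENNReal.ofReal ((1 + ‖y‖) ^ (-r)) := by
  rw [← ENNReal.ofReal_mul (by positivity)]
  refine ENNReal.ofReal_le_ofReal ?_
  rw [Real.rpow_neg (by positivity), Real.rpow_neg (by positivity), ← div_eq_mul_inv,
    ← Real.div_rpow zero_le_two (by positivity), ← Real.inv_rpow (by positivity)]
  refine Real.rpow_le_rpow (by positivity) ?_ hr
  rw [inv_eq_one_div, div_le_div_iff₀ (by positivity) (by positivity)]
  linarith [norm_le_norm_add_norm_sub' y x, norm_nonneg x, dist_eq_norm' x y]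

lemma exists_enorm_rpow_le_one_add_norm {E F : Type*} [NormedAddCommGroup E] [NormedSpace ℝ E]
    [NormedAddCommGroup F] [NormedSpace ℝ F] (g : SchwartzMap E F) {p : ℝ} (hp : 1 ≤ p) (k : ℕ) :
    ∃ C : ℝ≥0, ∀ x, ‖g x‖ₑ ^ p ≤ C * ENNReal.ofReal ((1 + ‖x‖) ^ (-k : ℝ)) := by
  obtain ⟨C, hC⟩ : ∃ C : ℝ, ∀ x, (1 + ‖x‖) ^ k * ‖g x‖ ≤ C := ⟨_, fun x ↦ by
    simpa using SchwartzMap.one_add_le_sup_seminorm_apply (𝕜 := ℝ) (m := (k, 0)) le_rfl le_rfl g x⟩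
  have hC0 : 0 ≤ C := (by positivity : 0 ≤ (1 + ‖(0 : E)‖) ^ k * ‖g 0‖).trans (hC 0)
  refine ⟨(C ^ p).toNNReal, fun x ↦ ?_⟩
  have hbase : ‖g x‖ ≤ C * (1 + ‖x‖) ^ (-k : ℝ) := by
    rw [Real.rpow_neg (by positivity), Real.rpow_natCast, ← div_eq_mul_inv,
      le_div_iff₀' (by positivity)]
    exact hC x
  have hle : (1 + ‖x‖) ^ (-k : ℝ) ≤ 1 :=
    Real.rpow_le_one_of_one_le_of_nonpos (by simp) (by simp)
  rw [← ofReal_norm, ENNReal.ofReal_rpow_of_nonneg (by positivity) (by positivity),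
    ← ENNReal.ofReal, ← ENNReal.ofReal_mul (by positivity)]
  refine ENNReal.ofReal_le_ofReal ?_
  calc ‖g x‖ ^ p ≤ (C * (1 + ‖x‖) ^ (-k : ℝ)) ^ p := by gcongr
    _ = C ^ p * ((1 + ‖x‖) ^ (-k : ℝ)) ^ p := Real.mul_rpow hC0 (by positivity)
    _ ≤ C ^ p * (1 + ‖x‖) ^ (-k : ℝ) := by
        gcongr; exact Real.rpow_le_self_of_le_one (by positivity) hle hp

variable {d : ℕ}

lemma exists_eLpNorm_expSum_mul_le (g : SchwartzMap (EuclideanSpace ℝ (Fin d)) ℂ) {p : ℝ}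
    (hp : 1 ≤ p) (hp2 : p ≤ 2) :
    ∃ C : ℝ≥0, ∀ A f, eLpNorm (fun x ↦ expSum A f x * g (WithLp.toLp 2 x)) (ENNReal.ofReal p)
      volume ≤ C * ENNReal.ofReal √(∑ x ∈ A, ‖f x‖ ^ 2) := by
  have hp0 : 0 < p := by linarith
  obtain ⟨C, hC⟩ := exists_enorm_rpow_le_one_add_norm g hp (d + 1)
  set D : (Fin d → ℝ) → ℝ≥0∞ := fun x ↦ ENNReal.ofReal ((1 + ‖x‖) ^ (-(d + 1 : ℕ) : ℝ))
  have hD : ∫⁻ x, D x < ⊤ := finite_integral_one_add_norm (by simp)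
  have hg (x : Fin d → ℝ) : ‖g (WithLp.toLp 2 x)‖ₑ ^ p ≤ C * D x := by
    have hnorm : ‖x‖ ≤ ‖WithLp.toLp 2 x‖ := by
      simpa using (PiLp.lipschitzWith_ofLp 2 fun _ : Fin d ↦ ℝ).dist_le_mul (WithLp.toLp 2 x) 0
    refine (hC _).trans ?_
    gcongr
    exact ENNReal.ofReal_le_ofReal
      (Real.rpow_le_rpow_of_nonpos (by positivity) (by gcongr) (neg_nonpos.2 (by positivity)))
  set B : ℝ≥0∞ := C * (ENNReal.ofReal (2 ^ ((d + 1 : ℕ) : ℝ)) * ∫⁻ x, D x)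
  have hB : B ≠ ⊤ := ENNReal.mul_ne_top (by simp) (ENNReal.mul_ne_top (by simp) hD.ne)
  refine ⟨(B ^ p⁻¹).toNNReal, fun A f ↦ ?_⟩
  rw [ENNReal.coe_toNNReal (ENNReal.rpow_ne_top_of_nonneg (by positivity) hB)]
  have hpp : ENNReal.ofReal p ≤ 2 := by simpa using ENNReal.ofReal_le_ofReal hp2
  refine le_trans ?_ (mul_right_mono (eLpNorm_expSum_floorCell_zero_le A f hpp))
  simp_rw [eLpNorm_eq_lintegral_rpow_enorm_toReal (ENNReal.ofReal_pos.2 hp0).ne'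
    ENNReal.ofReal_ne_top, ENNReal.toReal_ofReal hp0.le, one_div]
  rw [← ENNReal.mul_rpow_of_nonneg _ _ (by positivity : 0 ≤ p⁻¹)]
  refine ENNReal.rpow_le_rpow ?_ (by positivity)
  calc ∫⁻ x, ‖expSum A f x * g (WithLp.toLp 2 x)‖ₑ ^ p
      ≤ ∫⁻ x, C * (D x * ‖expSum A f x‖ₑ ^ p) := by
        refine lintegral_mono fun x ↦ ?_
        rw [enorm_mul, ENNReal.mul_rpow_of_nonneg _ _ hp0.le, mul_comm, ← mul_assoc]
        gcongr
        exact hg x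
    _ = C * ∫⁻ x, D x * ‖expSum A f x‖ₑ ^ p := lintegral_const_mul' _ _ (by simp)
    _ ≤ B * ∫⁻ u in floorCell 0, ‖expSum A f u‖ₑ ^ p := by
        rw [mul_assoc]
        gcongr
        exact lintegral_mul_le_of_periodic (by simp)
          (fun x y ↦ ofReal_one_add_norm_rpow_neg_le (by positivity)) (by fun_prop)
          fun m u ↦ by rw [expSum_intCast_add]

end SchwartzDecay

section LatticeSums

variable {d : ℕ}

/-- The sum of the translates of `φ` by the integer points of `A`. -/
noncomputable def latticeSum (φ : SchwartzMap (EuclideanSpace ℝ (Fin d)) ℂ)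
    (A : Finset (Fin d → ℤ)) : SchwartzMap (EuclideanSpace ℝ (Fin d)) ℂ :=
  ∑ m ∈ A, φ.compSubConstCLM ℂ (WithLp.toLp 2 fun j ↦ (m j : ℝ))

lemma latticeSum_apply (φ : SchwartzMap (EuclideanSpace ℝ (Fin d)) ℂ) (A : Finset (Fin d → ℤ))
    (x : EuclideanSpace ℝ (Fin d)) :
    latticeSum φ A x = ∑ m ∈ A, φ (x - WithLp.toLp 2 fun j ↦ (m j : ℝ)) := by
  simp [latticeSum]

lemma fourier_latticeSum (φ : SchwartzMap (EuclideanSpace ℝ (Fin d)) ℂ) (A : Finset (Fin d → ℤ))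
    (ξ : Fin d → ℝ) :
    𝓕 (latticeSum φ A) (WithLp.toLp 2 ξ) = expSum A 1 ξ * 𝓕 φ (WithLp.toLp 2 ξ) := by
  rw [latticeSum, FourierTransform.fourier_sum, _root_.sum_apply, expSum, sum_mul]
  refine sum_congr rfl fun m _ ↦ ?_
  have hshift := congr_fun (VectorFourier.fourierIntegral_comp_add_right 𝐞 volume
    (innerₗ (EuclideanSpace ℝ (Fin d))) φ (-WithLp.toLp 2 fun j ↦ (m j : ℝ))) (WithLp.toLp 2 ξ)
  refine hshift.trans ?_
  have hinner : innerₗ (EuclideanSpace ℝ (Fin d)) (-WithLp.toLp 2 fun j ↦ (m j : ℝ))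
      (WithLp.toLp 2 ξ) = -∑ j, m j * ξ j := by
    simp [PiLp.inner_apply, mul_comm]
  rw [hinner, Circle.smul_def, smul_eq_mul, Pi.one_apply, one_mul]
  rfl

end LatticeSums

section CoverTest

lemma fourier_comp_smul {V E : Type*} [NormedAddCommGroup V] [InnerProductSpace ℝ V]
    [MeasurableSpace V] [BorelSpace V] [FiniteDimensional ℝ V] [NormedAddCommGroup E]
    [NormedSpace ℂ E] (F : V → E) {R : ℝ} (hR : 0 < R) (w : V) :
    𝓕 (fun v ↦ F (R • v)) w = (R ^ Module.finrank ℝ V)⁻¹ • 𝓕 F (R⁻¹ • w) := by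
  have h := Measure.integral_comp_smul_of_nonneg volume
    (fun v ↦ 𝐞 (-inner ℝ v (R⁻¹ • w)) • F v) R (hR := hR.le)
  simp_rw [Real.fourier_eq]
  rw [← h]
  congr 1 with v
  rw [real_inner_smul_left, real_inner_smul_right, mul_inv_cancel_left₀ hR.ne']

lemma eLpNorm_comp_smul {V E : Type*} [NormedAddCommGroup V] [NormedSpace ℝ V]
    [MeasurableSpace V] [BorelSpace V] [FiniteDimensional ℝ V] [NormedAddCommGroup E]
    (μ : Measure V) [μ.IsAddHaarMeasure] {f : V → E} {R p : ℝ}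
    (hR : 0 < R) (hp : 0 < p) :
    eLpNorm (fun v ↦ f (R • v)) (ENNReal.ofReal p) μ =
      ENNReal.ofReal (R ^ (-(Module.finrank ℝ V / p))) * eLpNorm f (ENNReal.ofReal p) μ := by
  have hemb : MeasurableEmbedding fun v : V ↦ R • v :=
    (MeasurableEquiv.smul₀ R hR.ne').measurableEmbedding
  change eLpNorm (f ∘ fun v ↦ R • v) _ _ = _
  rw [← hemb.eLpNorm_map_measure, Measure.map_addHaar_smul μ hR.ne',
    eLpNorm_smul_measure_of_ne_top ENNReal.ofReal_ne_top, abs_of_pos (by positivity), smul_eq_mul,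
    one_div, ENNReal.toReal_inv, ENNReal.toReal_ofReal hp.le,
    ENNReal.ofReal_rpow_of_nonneg (by positivity) (by positivity), ← Real.rpow_natCast,
    ← Real.rpow_neg hR.le, ← Real.rpow_mul hR.le, neg_mul, ← div_eq_mul_inv]

lemma eLpNorm_fourierInv {V E : Type*} [NormedAddCommGroup V] [InnerProductSpace ℝ V]
    [MeasurableSpace V] [BorelSpace V] [FiniteDimensional ℝ V] [NormedAddCommGroup E]
    [NormedSpace ℂ E] (F : V → E) (q : ℝ≥0∞) :
    eLpNorm (𝓕⁻ F) q volume = eLpNorm (𝓕 F) q volume := by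
  have hneg := (MeasurableEquiv.neg V).measurableEmbedding.eLpNorm_map_measure
    (g := 𝓕 F) (p := q) (μ := volume)
  change eLpNorm (𝓕 F) q (Measure.map Neg.neg volume) = _ at hneg
  rw [Measure.map_neg_eq_self] at hneg
  rw [hneg]
  exact congr_arg (eLpNorm · q volume) (funext fun x ↦ Real.fourierInv_eq_fourier_neg F x)

variable {d : ℕ} {p : ℝ}

lemma eLpNorm_fourier_comp_smul (F : EuclideanSpace ℝ (Fin d) → ℂ) {R : ℝ} (hR : 0 < R)
    (hp : 0 < p) :
    eLpNorm (𝓕 fun ξ ↦ F (R • ξ)) (ENNReal.ofReal p) volume =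
      ENNReal.ofReal (R ^ (-(d * (1 - p⁻¹)))) * eLpNorm (𝓕 F) (ENNReal.ofReal p) volume := by
  have hfourier : (𝓕 fun ξ ↦ F (R • ξ)) = (R ^ d)⁻¹ • fun x ↦ 𝓕 F (R⁻¹ • x) :=
    funext fun x ↦ by simpa using fourier_comp_smul F hR x
  rw [hfourier, eLpNorm_const_smul, eLpNorm_comp_smul volume (inv_pos.2 hR) hp, ← mul_assoc,
    Real.enorm_eq_ofReal (by positivity), ← ENNReal.ofReal_mul (by positivity),
    finrank_euclideanSpace_fin, Real.inv_rpow hR.le, Real.rpow_neg hR.le, inv_inv,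
    ← Real.rpow_natCast, ← Real.rpow_neg hR.le, ← Real.rpow_add hR]
  ring_nf

lemma exists_eLpNorm_fourier_latticeSum_le (φ : SchwartzMap (EuclideanSpace ℝ (Fin d)) ℂ)
    (hp : 1 ≤ p) (hp2 : p ≤ 2) :
    ∃ C : ℝ≥0, ∀ A : Finset (Fin d → ℤ), eLpNorm (𝓕 ⇑(latticeSum φ A)) (ENNReal.ofReal p) volume ≤
      C * ENNReal.ofReal √(#A : ℝ) := by
  obtain ⟨C, hC⟩ := exists_eLpNorm_expSum_mul_le (𝓕 φ) hp hp2
  refine ⟨C, fun A ↦ ?_⟩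
  rw [← eLpNorm_comp_measurePreserving (continuous_fourier _).aestronglyMeasurable
    (PiLp.volume_preserving_toLp (Fin d))]
  refine (congr_arg (eLpNorm · _ volume) (funext fun ξ ↦ ?_)).trans_le ((hC A 1).trans_eq ?_)
  · exact fourier_latticeSum φ A ξ
  · simp

/-- A smooth bump function as a complex-valued Schwartz function. -/
noncomputable def bumpSchwartz {x₀ : EuclideanSpace ℝ (Fin d)} (b : ContDiffBump x₀) :
    SchwartzMap (EuclideanSpace ℝ (Fin d)) ℂ :=
  HasCompactSupport.toSchwartzMap (f := fun x ↦ (b x : ℂ))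
    (b.hasCompactSupport.comp_left Complex.ofReal_zero)
    (Complex.ofRealCLM.contDiff.comp b.contDiff)

lemma bumpSchwartz_apply {x₀ : EuclideanSpace ℝ (Fin d)} (b : ContDiffBump x₀)
    (x : EuclideanSpace ℝ (Fin d)) : bumpSchwartz b x = b x := rfl

lemma one_le_norm_latticeSum_bumpSchwartz (b : ContDiffBump (0 : EuclideanSpace ℝ (Fin d)))
    (hb : √d ≤ b.rIn) {A : Finset (Fin d → ℤ)} {m : Fin d → ℤ} (hm : m ∈ A) {N : ℕ} (hN : N ≠ 0)
    {u : Fin d → ℝ} (hu : u ∈ Set.Icc (0 : Fin d → ℝ) 1) :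
    1 ≤ ‖latticeSum (bumpSchwartz b) A ((N : ℝ) • WithLp.toLp 2 (cubePoint N m u))‖ := by
  have hu_norm : ‖WithLp.toLp 2 u‖ ≤ √d := by
    rw [EuclideanSpace.norm_eq]
    refine Real.sqrt_le_sqrt ((sum_le_card_nsmul univ _ 1 fun j _ ↦ ?_).trans_eq (by simp))
    rw [Real.norm_eq_abs, sq_abs, sq_le_one_iff₀ (hu.1 j)]
    exact hu.2 j
  have hpoint : (N : ℝ) • WithLp.toLp 2 (cubePoint N m u) - WithLp.toLp 2 (fun j ↦ (m j : ℝ)) =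
      WithLp.toLp 2 u := by
    ext j
    have hN' : (N : ℝ) ≠ 0 := by exact_mod_cast hN
    simp [cubePoint, mul_div_cancel₀, hN']
  simp_rw [latticeSum_apply, bumpSchwartz_apply]
  rw [← Complex.ofReal_sum, Complex.norm_real,
    Real.norm_of_nonneg (sum_nonneg fun _ _ ↦ b.nonneg)]
  refine le_trans ?_ (single_le_sum (fun _ _ ↦ b.nonneg) hm)
  rw [hpoint, b.one_of_mem_closedBall (by simpa using hu_norm.trans hb)]

lemma exists_schwartzMap_of_cubes (d : ℕ) (hp : 1 ≤ p) (hp2 : p ≤ 2) :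
    ∃ C : ℝ, 0 ≤ C ∧ ∀ (A : Finset (Fin d → ℤ)) (N : ℕ), N ≠ 0 →
      ∃ f : SchwartzMap (EuclideanSpace ℝ (Fin d)) ℂ,
        (∀ m ∈ A, ∀ u ∈ Set.Icc 0 1, 1 ≤ ‖𝓕 ⇑f (WithLp.toLp 2 (cubePoint N m u))‖) ∧
        eLpNorm ⇑f (ENNReal.ofReal p) volume ≤
          ENNReal.ofReal (C * √(#A : ℝ) * N ^ (-(d * (1 - p⁻¹)))) := by
  let b : ContDiffBump (0 : EuclideanSpace ℝ (Fin d)) :=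
    ⟨√d + 1, √d + 2, by positivity, by linarith⟩
  obtain ⟨C, hC⟩ := exists_eLpNorm_fourier_latticeSum_le (bumpSchwartz b) hp hp2
  refine ⟨C, C.coe_nonneg, fun A N hN ↦ ?_⟩
  have hN' : (N : ℝ) ≠ 0 := by exact_mod_cast hN
  let F : SchwartzMap (EuclideanSpace ℝ (Fin d)) ℂ := SchwartzMap.compCLMOfContinuousLinearEquiv ℂ
    (ContinuousLinearEquiv.smulLeft (Units.mk0 (N : ℝ) hN')) (latticeSum (bumpSchwartz b) A)
  refine ⟨𝓕⁻ F, fun m hm u hu ↦ ?_, ?_⟩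
  · rw [← SchwartzMap.fourier_coe, FourierTransform.fourier_fourierInv_eq]
    exact one_le_norm_latticeSum_bumpSchwartz b (by simp [b]) hm hN hu
  · rw [SchwartzMap.fourierInv_coe, eLpNorm_fourierInv]
    refine (eLpNorm_fourier_comp_smul (latticeSum (bumpSchwartz b) A)
      (by positivity : (0 : ℝ) < N) (by linarith)).trans_le ?_
    rw [mul_comm, ENNReal.ofReal_mul (by positivity), ENNReal.ofReal_mul C.coe_nonneg,
      ENNReal.ofReal_coe_nnreal]
    gcongr
    exact hC A

theorem not_hasRestrictionBound_of_cubeFamily {K : Set (Fin d → ℝ)} (hK : MeasurableSet K) {β : ℝ}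
    (hp : 1 ≤ p) (hp2 : p ≤ 2) (hβ : β < 2 * d * (1 - p⁻¹))
    (hcover : ∀ B : ℕ, ∃ F : CubeFamily d,
      B ≤ F.scale ∧ (F.count : ℝ) ≤ F.scale ^ β ∧ K ⊆ F.carrier) :
    ¬ HasRestrictionBound (WithLp.ofLp ⁻¹' K) p := by
  obtain ⟨C, hC, hf⟩ := exists_schwartzMap_of_cubes d hp hp2
  refine not_hasRestrictionBound_of_forall_exists (WithLp.measurable_ofLp _ _ hK) one_pos
    fun ε hε ↦ ?_
  have hlim : Filter.Tendsto (fun N : ℕ ↦ C * (N : ℝ) ^ (-(d * (1 - p⁻¹) - β / 2)))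
      Filter.atTop (nhds (C * 0)) :=
    ((tendsto_rpow_neg_atTop (by linarith)).comp tendsto_natCast_atTop_atTop).const_mul C
  rw [mul_zero] at hlim
  obtain ⟨B, hB⟩ := Filter.eventually_atTop.1 (hlim.eventually_le_const hε)
  obtain ⟨F, hFB, hFcount, hFK⟩ := hcover B
  obtain ⟨f, hf_ge, hf_le⟩ := hf (univ.image F.vertex) F.scale (NeZero.ne _)
  refine ⟨f, fun ξ hξ ↦ ?_, hf_le.trans (ENNReal.ofReal_le_ofReal ((hB _ hFB).trans' ?_))⟩
  · obtain ⟨i, u, hu, hξu⟩ := Set.mem_iUnion.1 (hFK hξ)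
    rw [← WithLp.toLp_ofLp 2 ξ, ← hξu]
    exact hf_ge _ (mem_image_of_mem _ (mem_univ i)) u hu
  · have hscale : (0 : ℝ) < F.scale := by exact_mod_cast NeZero.pos F.scale
    have hcard : √(#(univ.image F.vertex) : ℝ) ≤ (F.scale : ℝ) ^ (β / 2) := by
      rw [Real.sqrt_le_left (by positivity), ← Real.rpow_mul_natCast hscale.le]
      refine le_trans (by exact_mod_cast card_image_le.trans_eq (by simp)) (hFcount.trans_eq ?_)
      norm_num
    rw [mul_assoc, show -(d * (1 - p⁻¹) - β / 2) = β / 2 + -(d * (1 - p⁻¹)) by ring,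
      Real.rpow_add hscale]
    gcongr

end CoverTest

section ResonanceTest

lemma half_le_re_eNeg {t : ℝ} {n : ℤ} (h : |t - n| ≤ 1 / 6) : 1 / 2 ≤ (eNeg t).re := by
  have hperiod : eNeg t = eNeg (t - n) := by
    rw [← mul_one (eNeg (t - n)), ← eNeg_intCast n, ← eNeg_add, sub_add_cancel]
  rw [hperiod, eNeg_eq_exp, Complex.exp_ofReal_mul_I_re, ← Real.cos_abs, ← Real.cos_pi_div_three]
  refine Real.cos_le_cos_of_nonneg_of_le_pi (abs_nonneg _) (by linarith [Real.pi_pos]) ?_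
  rw [abs_mul, abs_mul, abs_neg, abs_two, abs_of_pos Real.pi_pos]
  nlinarith [Real.pi_pos]

lemma integral_div_two_le_norm_fourier {V : Type*} [NormedAddCommGroup V] [InnerProductSpace ℝ V]
    [MeasurableSpace V] [BorelSpace V] [FiniteDimensional ℝ V] {f : V → ℝ} (hf : Integrable f)
    (hf0 : 0 ≤ f) {w : V} (hw : ∀ v, f v ≠ 0 → |inner ℝ v w| ≤ 1 / 6) :
    (∫ v, f v) / 2 ≤ ‖𝓕 (fun v ↦ (f v : ℂ)) w‖ := by
  have hint : Integrable fun v ↦ 𝐞 (-inner ℝ v w) • (f v : ℂ) :=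
    (Real.fourierIntegral_convergent_iff w).2 hf.ofReal
  calc (∫ v, f v) / 2 = ∫ v, f v / 2 := (integral_div 2 f).symm
    _ ≤ ∫ v, (𝐞 (-inner ℝ v w) • (f v : ℂ)).re := by
        refine integral_mono (hf.div_const 2) hint.re fun v ↦ ?_
        have hre : (𝐞 (-inner ℝ v w) • (f v : ℂ)).re = (eNeg (inner ℝ v w)).re * f v := by
          rw [Circle.smul_def, smul_eq_mul, Complex.re_mul_ofReal, eNeg]
        rw [hre]
        rcases eq_or_ne (f v) 0 with hv | hv
        · simp [hv]
        · have hhalf := half_le_re_eNeg (n := 0) (by simpa using hw v hv)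
          linarith [mul_le_mul_of_nonneg_right hhalf (hf0 v)]
    _ = (𝓕 (fun v ↦ (f v : ℂ)) w).re := by
        rw [Real.fourier_eq]; exact integral_re hint
    _ ≤ ‖𝓕 (fun v ↦ (f v : ℂ)) w‖ := Complex.re_le_norm _

variable {d : ℕ} {A : Finset (Fin d → ℤ)}

lemma card_div_two_le_norm_expSum {ξ : Fin d → ℝ}
    (h : ∀ x ∈ A, ∃ n : ℤ, |∑ j, x j * ξ j - n| ≤ 1 / 6) : (#A : ℝ) / 2 ≤ ‖expSum A 1 ξ‖ := by
  refine le_trans ?_ (Complex.re_le_norm _)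
  rw [expSum, Complex.re_sum, div_eq_mul_one_div, ← nsmul_eq_mul]
  refine card_nsmul_le_sum _ _ _ fun x hx ↦ ?_
  obtain ⟨n, hn⟩ := h x hx
  simpa using half_le_re_eNeg hn

lemma eq_of_norm_sub_intCast_lt {x : EuclideanSpace ℝ (Fin d)} {m n : Fin d → ℤ}
    (hm : ‖x - WithLp.toLp 2 fun j ↦ (m j : ℝ)‖ < 1 / 2)
    (hn : ‖x - WithLp.toLp 2 fun j ↦ (n j : ℝ)‖ < 1 / 2) : m = n := by
  funext j
  have hmj := (PiLp.norm_apply_le _ j).trans_lt hm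
  have hnj := (PiLp.norm_apply_le _ j).trans_lt hn
  simp only [PiLp.sub_apply, Real.norm_eq_abs, abs_lt] at hmj hnj
  rw [← sub_eq_zero, ← Int.abs_lt_one_iff, abs_lt]
  constructor <;> rify <;> linarith

lemma eLpNorm_latticeSum_le {φ : SchwartzMap (EuclideanSpace ℝ (Fin d)) ℂ}
    (hφ : ∀ x, φ x ≠ 0 → ‖x‖ < 1 / 2) {p : ℝ} (hp : 0 < p) (A : Finset (Fin d → ℤ)) :
    eLpNorm ⇑(latticeSum φ A) (ENNReal.ofReal p) volume ≤
      (#A : ℝ≥0∞) ^ p⁻¹ * eLpNorm ⇑φ (ENNReal.ofReal p) volume := by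
  have hpoint (x : EuclideanSpace ℝ (Fin d)) : ‖latticeSum φ A x‖ₑ ^ p ≤
      ∑ m ∈ A, ‖φ (x - WithLp.toLp 2 fun j ↦ (m j : ℝ))‖ₑ ^ p := by
    rw [latticeSum_apply]
    by_cases h : ∃ m ∈ A, φ (x - WithLp.toLp 2 fun j ↦ (m j : ℝ)) ≠ 0
    · obtain ⟨m, hm, hne⟩ := h
      rw [sum_eq_single_of_mem m hm fun n _ hnm ↦ of_not_not fun hn ↦
        hnm (eq_of_norm_sub_intCast_lt (hφ _ hn) (hφ _ hne))]
      exact single_le_sum (f := fun m : Fin d → ℤ ↦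
        ‖φ (x - WithLp.toLp 2 fun j ↦ (m j : ℝ))‖ₑ ^ p) (fun _ _ ↦ zero_le) hm
    · push Not at h
      simp [sum_eq_zero h, hp]
  simp_rw [eLpNorm_eq_lintegral_rpow_enorm_toReal (ENNReal.ofReal_pos.2 hp).ne'
    ENNReal.ofReal_ne_top, ENNReal.toReal_ofReal hp.le, one_div]
  rw [← ENNReal.mul_rpow_of_nonneg _ _ (by positivity)]
  refine ENNReal.rpow_le_rpow ((lintegral_mono hpoint).trans_eq ?_) (by positivity)
  have hmeas (y : EuclideanSpace ℝ (Fin d)) : Measurable fun x ↦ ‖φ (x - y)‖ₑ ^ p :=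
    (φ.continuous.comp (continuous_sub_right y)).enorm.measurable.pow_const p
  rw [lintegral_finsetSum _ fun _ _ ↦ hmeas _]
  simp_rw [lintegral_sub_right_eq_self fun x ↦ ‖φ x‖ₑ ^ p]
  rw [sum_const, nsmul_eq_mul]

lemma eLpNorm_inv_card_smul_latticeSum_le {φ : SchwartzMap (EuclideanSpace ℝ (Fin d)) ℂ}
    (hφ : ∀ x, φ x ≠ 0 → ‖x‖ < 1 / 2) {p : ℝ} (hp : 0 < p) (hA : A.Nonempty) :
    eLpNorm ⇑((#A : ℝ)⁻¹ • latticeSum φ A) (ENNReal.ofReal p) volume ≤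
      ENNReal.ofReal ((#A : ℝ) ^ (-(1 - p⁻¹)) * lpNorm ⇑φ (ENNReal.ofReal p) volume) := by
  have hcard : (0 : ℝ) < #A := by exact_mod_cast hA.card_pos
  change eLpNorm ((#A : ℝ)⁻¹ • ⇑(latticeSum φ A)) _ _ ≤ _
  rw [eLpNorm_const_smul, Real.enorm_eq_ofReal (by positivity)]
  refine (mul_le_mul_right (eLpNorm_latticeSum_le hφ hp A) _).trans_eq ?_
  rw [← ENNReal.ofReal_natCast, ENNReal.ofReal_rpow_of_pos hcard, ← mul_assoc,
    ← ENNReal.ofReal_mul (by positivity), ← Real.rpow_neg_one, ← Real.rpow_add hcard,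
    ENNReal.ofReal_mul (by positivity), ofReal_lpNorm (φ.memLp (ENNReal.ofReal p) volume)]
  congr 3
  ring

lemma exists_bumpSchwartz_fourier_ge (d : ℕ) (R : ℝ) :
    ∃ φ : SchwartzMap (EuclideanSpace ℝ (Fin d)) ℂ, (∀ x, φ x ≠ 0 → ‖x‖ < 1 / 2) ∧
      ∃ c > 0, ∀ ξ, ‖ξ‖ ≤ R → c ≤ ‖𝓕 ⇑φ ξ‖ := by
  set r : ℝ := min (1 / 2) (1 / (6 * max R 1))
  have hr0 : 0 < r := by positivity
  let b : ContDiffBump (0 : EuclideanSpace ℝ (Fin d)) := ⟨r / 2, r, by linarith, by linarith⟩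
  have hsupp {x : EuclideanSpace ℝ (Fin d)} (hx : b x ≠ 0) : ‖x‖ < r := by
    rw [← mem_ball_zero_iff]
    exact b.support_eq.le hx
  refine ⟨bumpSchwartz b, fun x hx ↦ ?_, (∫ x, b x) / 2, half_pos b.integral_pos, fun ξ hξ ↦
    integral_div_two_le_norm_fourier b.integrable (fun _ ↦ b.nonneg) fun x hx ↦ ?_⟩
  · exact (hsupp (by simpa [bumpSchwartz_apply] using hx)).trans_le (min_le_left _ _)
  · calc |inner ℝ x ξ| ≤ ‖x‖ * ‖ξ‖ := abs_real_inner_le_norm x ξ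
      _ ≤ 1 / (6 * max R 1) * max R 1 := mul_le_mul ((hsupp hx).le.trans (min_le_right _ _))
          (hξ.trans (le_max_left _ _)) (norm_nonneg _) (by positivity)
      _ = 1 / 6 := by field_simp

theorem not_hasRestrictionBound_of_resonant {K : Set (Fin d → ℝ)} (hK : IsCompact K) {p : ℝ}
    (hp : 1 < p)
    (h : ∀ M : ℕ, ∃ A : Finset (Fin d → ℤ), M ≤ #A ∧
      ∀ x ∈ A, ∀ ξ ∈ K, ∃ n : ℤ, |∑ j, x j * ξ j - n| ≤ 1 / 6) :
    ¬ HasRestrictionBound (WithLp.ofLp ⁻¹' K) p := by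
  obtain ⟨R, hR⟩ := (hK.image (PiLp.continuous_toLp 2 _)).isBounded.exists_norm_le
  obtain ⟨φ, hφ, c, hc, hcφ⟩ := exists_bumpSchwartz_fourier_ge d R
  refine not_hasRestrictionBound_of_forall_exists (WithLp.measurable_ofLp _ _ hK.measurableSet)
    (half_pos hc) fun ε hε ↦ ?_
  have hlim : Filter.Tendsto
      (fun M : ℕ ↦ (M : ℝ) ^ (-(1 - p⁻¹)) * lpNorm ⇑φ (ENNReal.ofReal p) volume)
      Filter.atTop (nhds (0 * lpNorm ⇑φ (ENNReal.ofReal p) volume)) :=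
    ((tendsto_rpow_neg_atTop (by linarith [inv_lt_one_of_one_lt₀ hp])).comp
      tendsto_natCast_atTop_atTop).mul_const _
  rw [zero_mul] at hlim
  obtain ⟨M, hM⟩ := Filter.eventually_atTop.1 (hlim.eventually_le_const hε)
  obtain ⟨A, hAM, hA⟩ := h (max M 1)
  have hcard : 0 < #A := (le_max_right M 1).trans hAM
  refine ⟨(#A : ℝ)⁻¹ • latticeSum φ A, fun ξ hξ ↦ ?_,
    (eLpNorm_inv_card_smul_latticeSum_le hφ (by linarith) (card_pos.1 hcard)).trans
      (ENNReal.ofReal_le_ofReal (hM _ ((le_max_left M 1).trans hAM)))⟩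
  have hfourier : 𝓕 ⇑((#A : ℝ)⁻¹ • latticeSum φ A) ξ =
      (#A : ℝ)⁻¹ • (expSum A 1 ξ.ofLp * 𝓕 ⇑φ ξ) := by
    rw [← SchwartzMap.fourier_coe, FourierTransform.fourier_smul]
    exact congr_arg ((#A : ℝ)⁻¹ • ·) (fourier_latticeSum φ A ξ.ofLp)
  rw [hfourier, norm_smul, norm_mul, Real.norm_of_nonneg (by positivity)]
  calc c / 2 = (#A : ℝ)⁻¹ * (#A / 2 * c) := by field_simp
    _ ≤ (#A : ℝ)⁻¹ * (‖expSum A 1 ξ.ofLp‖ * ‖𝓕 ⇑φ ξ‖) := by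
        gcongr
        · exact card_div_two_le_norm_expSum fun x hx ↦ hA x hx _ hξ
        · exact hcφ ξ (hR _ ⟨_, hξ, WithLp.toLp_ofLp 2 ξ⟩)

end ResonanceTest

section Dimension

open Metric Module
open scoped Pointwise

lemma dimH_le_of_isCover {X : Type*} [EMetricSpace X] {K : Set X} {t : ℝ} (ht : 0 ≤ t) {C : ℝ}
    (h : ∀ ε : ℝ≥0, 0 < ε → ∃ r : ℝ≥0, 0 < r ∧ r ≤ ε ∧ ∃ A : Finset X,
      (#A : ℝ) ≤ C * (r : ℝ) ^ (-t) ∧ IsCover r K (A : Set X)) :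
    dimH K ≤ ENNReal.ofReal t := by
  borelize X
  choose r hr hrε A hA hAK using fun n : ℕ ↦ h (1 / (n + 1)) (by positivity)
  have hr0 : Filter.Tendsto r Filter.atTop (nhds 0) :=
    tendsto_of_tendsto_of_tendsto_of_le_of_le tendsto_const_nhds
      tendsto_one_div_add_atTop_nhds_zero_nat (fun _ ↦ zero_le) hrε
  have hdiam (n : ℕ) (a : A n) : ediam (closedEBall (a : X) (r n)) ≤ 2 * r n := ediam_closedEBall_le
  have hsum (n : ℕ) : ∑ a : A n, ediam (closedEBall (a : X) (r n)) ^ t ≤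
      ENNReal.ofReal (C * 2 ^ t) := by
    calc ∑ a : A n, ediam (closedEBall (a : X) (r n)) ^ t ≤ ∑ _a : A n, (2 * r n : ℝ≥0∞) ^ t :=
          sum_le_sum fun a _ ↦ ENNReal.rpow_le_rpow (hdiam n a) ht
      _ = ENNReal.ofReal (#(A n) * (2 * r n) ^ t) := by
          rw [sum_const, card_univ, Fintype.card_coe, nsmul_eq_mul,
            ENNReal.ofReal_mul (by positivity), ENNReal.ofReal_natCast,
            ← ENNReal.ofReal_rpow_of_nonneg (by positivity) ht, ENNReal.ofReal_mul zero_le_two,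
            ENNReal.ofReal_coe_nnreal, ENNReal.ofReal_ofNat]
      _ ≤ ENNReal.ofReal (C * (r n : ℝ) ^ (-t) * (2 * r n) ^ t) := by gcongr; exact hA n
      _ = ENNReal.ofReal (C * 2 ^ t) := by
          have hrt : (r n : ℝ) ^ t ≠ 0 := (Real.rpow_pos_of_pos (hr n) t).ne'
          rw [Real.mul_rpow zero_le_two (r n).coe_nonneg, Real.rpow_neg (r n).coe_nonneg]
          field_simp
  have hmeasure : Measure.hausdorffMeasure t K ≤ ENNReal.ofReal (C * 2 ^ t) :=
    (Measure.hausdorffMeasure_le_liminf_sum t K (fun n ↦ 2 * (r n : ℝ≥0∞))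
      (by simpa using ENNReal.Tendsto.const_mul (ENNReal.tendsto_coe.2 hr0) (.inr (by simp)))
      (fun n (a : A n) ↦ closedEBall (a : X) (r n)) (.of_forall hdiam)
      (.of_forall fun n ↦ by
        simpa [Set.iUnion_subtype] using isCover_iff_subset_iUnion_closedEBall.1 (hAK n))).trans
    (Filter.liminf_le_of_frequently_le' (.of_forall hsum))
  refine dimH_le_of_hausdorffMeasure_ne_top (d := t.toNNReal) ?_
  rw [Real.coe_toNNReal _ ht]
  exact ne_top_of_le_ne_top ENNReal.ofReal_ne_top hmeasure

/-- The covering numbers of `K` at the scales `r ≤ 1` are `O(r⁻ᵗ)`, so that `t` bounds the upper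
Minkowski dimension of `K`. -/
def HasMinkowskiBound {X : Type*} [PseudoEMetricSpace X] (K : Set X) (t : ℝ) : Prop :=
  ∃ C : ℝ, ∀ r : ℝ≥0, 0 < r → r ≤ 1 → ∃ A : Finset X,
    (#A : ℝ) ≤ C * (r : ℝ) ^ (-t) ∧ IsCover r K (A : Set X)

lemma HasMinkowskiBound.dimH_le {X : Type*} [EMetricSpace X] {K : Set X} {t : ℝ}
    (h : HasMinkowskiBound K t) (ht : 0 ≤ t) : dimH K ≤ ENNReal.ofReal t := by
  obtain ⟨C, hC⟩ := h
  exact dimH_le_of_isCover ht fun ε hε ↦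
    ⟨min ε 1, by positivity, min_le_left _ _, hC _ (by positivity) (min_le_right _ _)⟩

lemma hasMinkowskiBound_of_dyadic {X : Type*} [PseudoEMetricSpace X] {K : Set X} {t C : ℝ}
    (ht : 0 ≤ t) (h : ∀ n : ℕ, ∃ A : Finset X,
      (#A : ℝ) ≤ C * 2 ^ (t * n) ∧ IsCover (2 ^ n)⁻¹ K (A : Set X)) : HasMinkowskiBound K t := by
  have hC : 0 ≤ C := by
    obtain ⟨A, hA, -⟩ := h 0
    simpa using (Nat.cast_nonneg _).trans hA
  refine ⟨C * 2 ^ t, fun r hr hr1 ↦ ?_⟩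
  obtain ⟨n, hn, hn'⟩ := exists_nat_pow_near_of_lt_one hr hr1 (y := (2⁻¹ : ℝ≥0)) (by norm_num)
    (by norm_num)
  obtain ⟨A, hA, hAK⟩ := h (n + 1)
  refine ⟨A, hA.trans ?_, hAK.mono_radius (by rw [← inv_pow]; exact hn.le)⟩
  have hrn : (r : ℝ) ≤ (2 ^ n)⁻¹ := by
    rw [← inv_pow]; exact_mod_cast hn'
  have hpow : (2 : ℝ) ^ (t * n) ≤ (r : ℝ) ^ (-t) := by
    rw [Real.rpow_neg r.coe_nonneg, ← Real.inv_rpow r.coe_nonneg, mul_comm,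
      Real.rpow_mul zero_le_two, Real.rpow_natCast]
    refine Real.rpow_le_rpow (by positivity) ?_ ht
    exact (le_inv_comm₀ (by positivity) (NNReal.coe_pos.2 hr)).2 hrn
  rw [mul_assoc, Nat.cast_succ, mul_add, mul_one, add_comm, Real.rpow_add two_pos]
  gcongr

variable {E : Type*} [NormedAddCommGroup E] [NormedSpace ℝ E] [MeasurableSpace E] [BorelSpace E]
  [FiniteDimensional ℝ E] (μ : Measure E) [μ.IsAddHaarMeasure] {X Y : Set E}

/-- The outer measure `U ↦ μ (U + Y)`. When `Y` has few covering balls it is dominated by a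
Hausdorff measure, which bounds the dimension of any `X` with `μ (X + Y) ≠ 0` from below. -/
noncomputable def sumsetOuterMeasure {E : Type*} [AddCommGroup E] [MeasurableSpace E]
    (μ : Measure E) (Y : Set E) : OuterMeasure E where
  measureOf U := μ (U + Y)
  empty := by simp
  mono hUV := measure_mono (Set.add_subset_add_right hUV)
  iUnion_nat s _ := by
    rw [Set.iUnion_add]
    exact measure_iUnion_le _

lemma sumsetOuterMeasure_le {r : ℝ≥0} {A : Finset E} (hY : IsCover r Y (A : Set E)) {U : Set E}
    (hU : ediam U ≤ r) :
    sumsetOuterMeasure μ Y U ≤ #A * (ENNReal.ofReal ((2 * r) ^ finrank ℝ E) * μ (ball 0 1)) := by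
  rcases U.eq_empty_or_nonempty with rfl | ⟨u, hu⟩
  · simp
  have hcover : U + Y ⊆ ⋃ a ∈ A, closedBall (u + a) (2 * r) := by
    rintro _ ⟨v, hv, y, hy, rfl⟩
    obtain ⟨a, ha, hya⟩ := hY hy
    refine Set.mem_biUnion ha ((dist_add_add_le v y u a).trans ?_)
    have hvu : dist v u ≤ r := by
      rw [← ENNReal.ofReal_le_ofReal_iff r.coe_nonneg, ← edist_dist, ENNReal.ofReal_coe_nnreal]
      exact (edist_le_ediam_of_mem hv hu).trans hU
    have hya' : dist y a ≤ r := by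
      rw [← ENNReal.ofReal_le_ofReal_iff r.coe_nonneg, ← edist_dist, ENNReal.ofReal_coe_nnreal]
      exact hya
    linarith
  calc μ (U + Y) ≤ ∑ a ∈ A, μ (closedBall (u + a) (2 * r)) :=
        (measure_mono hcover).trans (measure_biUnion_finset_le _ _)
    _ = #A * (ENNReal.ofReal ((2 * r) ^ finrank ℝ E) * μ (ball 0 1)) := by
        rw [sum_congr rfl fun a _ ↦ Measure.addHaar_closedBall μ (u + a) (by positivity), sum_const,
          nsmul_eq_mul]

lemma HasMinkowskiBound.exists_sumsetOuterMeasure_le {t : ℝ} (hY : HasMinkowskiBound Y t) :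
    ∃ c : ℝ≥0∞, c ≠ ⊤ ∧ ∀ U, ediam U < 1 →
      sumsetOuterMeasure μ Y U ≤ c * ediam U ^ (finrank ℝ E - t) := by
  obtain ⟨C, hC⟩ := hY
  set c : ℝ≥0∞ := ENNReal.ofReal (C * 2 ^ finrank ℝ E) * μ (ball 0 1)
  have hc : c ≠ ⊤ := ENNReal.mul_ne_top ENNReal.ofReal_ne_top measure_ball_lt_top.ne
  have hle (U : Set E) (r : ℝ≥0) (hr : 0 < r) (hr1 : r ≤ 1) (hU : ediam U ≤ r) :
      sumsetOuterMeasure μ Y U ≤ c * (r : ℝ≥0∞) ^ (finrank ℝ E - t) := by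
    obtain ⟨A, hA, hAY⟩ := hC r hr hr1
    have hr' : (0 : ℝ) < r := hr
    refine (sumsetOuterMeasure_le μ hAY hU).trans ?_
    rw [← ENNReal.ofReal_coe_nnreal, ENNReal.ofReal_rpow_of_pos hr', ← ENNReal.ofReal_natCast,
      mul_right_comm, ← mul_assoc, ← ENNReal.ofReal_mul (by positivity),
      ← ENNReal.ofReal_mul' (by positivity)]
    refine mul_le_mul_left (ENNReal.ofReal_le_ofReal ?_) _
    calc #A * (2 * r : ℝ) ^ finrank ℝ E
        ≤ C * (r : ℝ) ^ (-t) * (2 * r) ^ finrank ℝ E := by gcongr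
      _ = C * 2 ^ finrank ℝ E * (r : ℝ) ^ (finrank ℝ E - t) := by
          rw [sub_eq_add_neg, Real.rpow_add hr', Real.rpow_natCast]
          ring
  refine ⟨c, hc, fun U hU ↦ ?_⟩
  have hcont : Continuous fun x : ℝ≥0∞ ↦ c * x ^ (finrank ℝ E - t) :=
    (ENNReal.continuous_const_mul hc).comp ENNReal.continuous_rpow_const
  have : (nhdsWithin (ediam U) (Set.Ioi (ediam U))).NeBot := nhdsGT_neBot_of_exists_gt ⟨1, hU⟩
  refine ge_of_tendsto (x := nhdsWithin (ediam U) (Set.Ioi (ediam U)))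
    hcont.continuousWithinAt.tendsto ?_
  filter_upwards [Ioc_mem_nhdsGT hU] with x hx
  lift x to ℝ≥0 using ne_top_of_le_ne_top ENNReal.one_ne_top hx.2
  exact hle U x (ENNReal.coe_pos.1 (bot_le.trans_lt hx.1)) (by exact_mod_cast hx.2) hx.1.le

theorem HasMinkowskiBound.le_dimH_of_measure_add_ne_zero {t : ℝ} (hY : HasMinkowskiBound Y t)
    (hXY : μ (X + Y) ≠ 0) : ENNReal.ofReal (finrank ℝ E - t) ≤ dimH X := by
  rcases le_or_gt (finrank ℝ E : ℝ) t with ht | ht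
  · simp [ENNReal.ofReal_of_nonpos (sub_nonpos.2 ht)]
  obtain ⟨c, hc, hν⟩ := hY.exists_sumsetOuterMeasure_le μ
  have hmkMetric : sumsetOuterMeasure μ Y ≤
      OuterMeasure.mkMetric ((c + 1) • fun x ↦ x ^ (finrank ℝ E - t)) :=
    OuterMeasure.le_mkMetric _ _ (1 / 2) (by simp) fun U hU ↦
      (hν U (hU.trans_lt (by simp))).trans (by simp only [Pi.smul_apply, smul_eq_mul]; gcongr; simp)
  rw [OuterMeasure.mkMetric_smul _ (by simp [hc]) (by simp)] at hmkMetric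
  refine le_dimH_of_hausdorffMeasure_ne_zero (d := (finrank ℝ E - t).toNNReal) fun hzero ↦ hXY ?_
  rw [Real.coe_toNNReal _ (sub_pos.2 ht).le, Measure.hausdorffMeasure,
    ← OuterMeasure.coe_mkMetric] at hzero
  exact le_bot_iff.1 ((hmkMetric X).trans_eq (by simp [hzero]))

end Dimension

section DigitSet

open Metric
open scoped Pointwise

/-- The numbers that have a binary expansion `0.b₀b₁b₂…` whose digits vanish outside `D`. -/
def digitSet (D : Set ℕ) : Set ℝ :=
  Real.ofDigits '' {b : ℕ → Fin 2 | ∀ n ∉ D, b n = 0}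

variable {D : Set ℕ}

lemma isCompact_digitSet (D : Set ℕ) : IsCompact (digitSet D) := by
  have hclosed : IsClosed {b : ℕ → Fin 2 | ∀ n ∉ D, b n = 0} :=
    isClosed_set_pi (i := Dᶜ) fun _ _ ↦ isClosed_singleton
  exact hclosed.isCompact.image Real.continuous_ofDigits

lemma zero_mem_digitSet (D : Set ℕ) : 0 ∈ digitSet D :=
  ⟨0, fun _ _ ↦ rfl, by simp [Real.ofDigits, Real.ofDigitsTerm]⟩

lemma Icc_subset_digitSet_add_digitSet_compl (D : Set ℕ) :
    Set.Icc 0 1 ⊆ digitSet D + digitSet Dᶜ := by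
  classical
  intro x hx
  obtain ⟨b, -, rfl⟩ := Real.ofDigits_SurjOn one_lt_two hx
  refine ⟨_, ⟨D.piecewise b 0, fun n hn ↦ D.piecewise_eq_of_notMem _ _ hn, rfl⟩,
    _, ⟨D.piecewise 0 b, fun n hn ↦ D.piecewise_eq_of_mem _ _ (not_not.1 hn), rfl⟩, ?_⟩
  simp only [Real.ofDigits]
  rw [← Real.summable_ofDigitsTerm.tsum_add Real.summable_ofDigitsTerm]
  refine tsum_congr fun n ↦ ?_
  by_cases hn : n ∈ D <;> simp [Real.ofDigitsTerm, hn]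

lemma exists_isCover_digitSet (D : Set ℕ) (n : ℕ) :
    ∃ A : Finset ℝ, #A ≤ 2 ^ (D ∩ Set.Iio n).ncard ∧
      IsCover (2 ^ n)⁻¹ (digitSet D) (A : Set ℝ) := by
  classical
  let point (S : Finset ℕ) : ℝ := Real.ofDigits fun i ↦ if i ∈ S then (1 : Fin 2) else 0
  refine ⟨(D ∩ Set.Iio n).toFinset.powerset.image point, card_image_le.trans_eq ?_, ?_⟩
  · rw [card_powerset, Set.ncard_eq_toFinset_card']
  rintro _ ⟨b, hb, rfl⟩
  refine ⟨point {i ∈ range n | b i = 1}, mem_coe.2 (mem_image_of_mem _ (mem_powerset.2 ?_)), ?_⟩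
  · intro i hi
    rw [mem_filter, mem_range] at hi
    refine Set.mem_toFinset.2 ⟨?_, hi.1⟩
    by_contra hiD
    simp [hb i hiD] at hi
  · change edist _ _ ≤ _
    rw [edist_le_coe, ← NNReal.coe_le_coe, coe_nndist, Real.dist_eq]
    push_cast
    refine Real.abs_ofDigits_sub_ofDigits_le fun i hi ↦ ?_
    rcases Fin.exists_fin_two.1 ⟨b i, rfl⟩ with h | h <;> simp [h, hi]

lemma exists_int_abs_two_pow_mul_sub_le {n B : ℕ} (hD : ∀ i ∈ Set.Ico n (n + B), i ∉ D) {x : ℝ}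
    (hx : x ∈ digitSet D) : ∃ m : ℤ, |2 ^ n * x - m| ≤ (2 ^ B)⁻¹ := by
  obtain ⟨b, hb, rfl⟩ := hx
  have htail : |Real.ofDigits (fun i ↦ b (i + n))| ≤ ((2 : ℝ) ^ B)⁻¹ := by
    have hzero : Real.ofDigits (fun _ ↦ (0 : Fin 2)) = 0 := by
      simp [Real.ofDigits, Real.ofDigitsTerm]
    simpa only [hzero, sub_zero, Nat.cast_ofNat] using
      Real.abs_ofDigits_sub_ofDigits_le (y := fun _ ↦ 0) fun i hi ↦
        hb (i + n) (hD _ ⟨by lia, by lia⟩)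
  refine ⟨∑ i ∈ range n, (b i).val * 2 ^ (n - (i + 1)), ?_⟩
  have hhead : (2 : ℝ) ^ n * ∑ i ∈ range n, Real.ofDigitsTerm b i =
      ∑ i ∈ range n, ((b i).val : ℝ) * 2 ^ (n - (i + 1)) := by
    rw [mul_sum]
    refine sum_congr rfl fun i hi ↦ ?_
    rw [Real.ofDigitsTerm, pow_sub₀ _ two_ne_zero (by have := mem_range.1 hi; lia)]
    push_cast
    ring
  rw [Real.ofDigits_eq_sum_add_ofDigits b n, mul_add, hhead]
  push_cast
  rwa [add_sub_cancel_left, mul_inv_cancel_left₀ (by positivity)]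

end DigitSet

section Density

open Filter Topology

/-- `D` has natural density `γ`. -/
def HasDensity (D : Set ℕ) (γ : ℝ) : Prop :=
  Tendsto (fun n : ℕ ↦ ((D ∩ Set.Iio n).ncard : ℝ) / n) atTop (𝓝 γ)

variable {D G : Set ℕ} {γ : ℝ}

lemma HasDensity.nonneg (hD : HasDensity D γ) : 0 ≤ γ :=
  ge_of_tendsto' hD fun _ ↦ by positivity

lemma HasDensity.compl (hD : HasDensity D γ) : HasDensity Dᶜ (1 - γ) := by
  refine (tendsto_const_nhds.sub hD).congr' ?_
  filter_upwards [eventually_ne_atTop 0] with n hn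
  have hcard : ((D ∩ Set.Iio n).ncard : ℝ) + (Dᶜ ∩ Set.Iio n).ncard = n := by
    rw [Set.inter_comm D, Set.inter_comm Dᶜ, ← Set.sdiff_eq]
    exact_mod_cast (Set.ncard_inter_add_ncard_sdiff_eq_ncard _ _).trans (by simp)
  rw [eq_div_iff (by positivity), sub_mul, div_mul_cancel₀ _ (by positivity)]
  linarith

lemma HasDensity.diff (hD : HasDensity D γ) (hG : HasDensity G 0) : HasDensity (D \ G) γ := by
  refine tendsto_of_tendsto_of_tendsto_of_le_of_le (by simpa using Tendsto.sub hD hG) hD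
    (fun n ↦ ?_) fun n ↦ ?_
  · have hcard : (D ∩ Set.Iio n).ncard ≤ ((D \ G) ∩ Set.Iio n).ncard + (G ∩ Set.Iio n).ncard := by
      refine (Set.ncard_le_ncard ?_ ((Set.finite_Iio n).inter_of_right _ |>.union
        ((Set.finite_Iio n).inter_of_right _))).trans (Set.ncard_union_le _ _)
      rw [← Set.union_inter_distrib_right, Set.sdiff_union_self]
      exact Set.inter_subset_inter_left _ Set.subset_union_left
    have hsub : ((D ∩ Set.Iio n).ncard : ℝ) - (G ∩ Set.Iio n).ncard ≤
        ((D \ G) ∩ Set.Iio n).ncard := by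
      rw [sub_le_iff_le_add]
      exact_mod_cast hcard
    rw [← sub_div]
    exact div_le_div_of_nonneg_right hsub n.cast_nonneg
  · gcongr
    exacts [(Set.finite_Iio n).inter_of_right _, Set.sdiff_subset]

lemma ncard_inter_Iio [DecidablePred (· ∈ D)] (n : ℕ) :
    (D ∩ Set.Iio n).ncard = Nat.count (· ∈ D) n := by
  rw [Nat.count_eq_card_filter_range, ← Set.ncard_coe_finset]
  congr 1
  ext
  simp [and_comm]

lemma floor_mul_succ_le (hγ : γ ∈ Set.Icc 0 1) (n : ℕ) :
    ⌊γ * (n + 1 : ℕ)⌋₊ ≤ ⌊γ * n⌋₊ + 1 := by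
  rw [← Nat.floor_add_one (mul_nonneg hγ.1 n.cast_nonneg), Nat.cast_succ, mul_add_one]
  exact Nat.floor_le_floor (by gcongr; exact hγ.2)

lemma exists_hasDensity (hγ : γ ∈ Set.Icc 0 1) : ∃ D, HasDensity D γ := by
  classical
  let beatty : Set ℕ := {n | ⌊γ * n⌋₊ < ⌊γ * (n + 1 : ℕ)⌋₊}
  have hcount (n : ℕ) : Nat.count (· ∈ beatty) n = ⌊γ * n⌋₊ := by
    induction n with
    | zero => simp
    | succ n ih =>
      have hmono : ⌊γ * n⌋₊ ≤ ⌊γ * (n + 1 : ℕ)⌋₊ :=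
        Nat.floor_le_floor (mul_le_mul_of_nonneg_left (by simp) hγ.1)
      have hstep := floor_mul_succ_le hγ n
      rw [Nat.count_succ, ih]
      split_ifs with h
      · exact le_antisymm (Nat.succ_le_of_lt h) hstep
      · exact hmono.antisymm (not_lt.1 h)
  refine ⟨beatty, ?_⟩
  simp only [HasDensity, ncard_inter_Iio, hcount]
  exact (tendsto_nat_floor_mul_div_atTop hγ.1).comp tendsto_natCast_atTop_atTop

/-- A set of natural density zero that contains arbitrarily long intervals. -/
def sparseIntervals : Set ℕ := ⋃ B, Set.Ico (2 ^ B) (2 ^ B + B)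

lemma ncard_sparseIntervals_inter_Iio_le (n : ℕ) :
    (sparseIntervals ∩ Set.Iio n).ncard ≤ (Nat.log 2 n + 1) ^ 2 := by
  set L := Nat.log 2 n + 1
  have hsub : sparseIntervals ∩ Set.Iio n ⊆ image₂ (fun a b ↦ 2 ^ a + b) (range L) (range L) := by
    rintro i ⟨hi, hin⟩
    obtain ⟨B, hB⟩ := Set.mem_iUnion.1 hi
    have hBL : B < L := Nat.lt_succ_of_le
      (Nat.le_log_of_pow_le one_lt_two (hB.1.trans (le_of_lt hin)))
    exact mem_coe.2 (mem_image₂.2 ⟨B, mem_range.2 hBL, i - 2 ^ B,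
      mem_range.2 (by have := hB.2; lia), Nat.add_sub_of_le hB.1⟩)
  calc (sparseIntervals ∩ Set.Iio n).ncard ≤ #(image₂ (fun a b ↦ 2 ^ a + b) (range L) (range L)) :=
        Set.ncard_coe_finset _ ▸ Set.ncard_le_ncard hsub
    _ ≤ L ^ 2 := (card_image₂_le _ _ _).trans_eq (by rw [card_range, sq])

lemma hasDensity_sparseIntervals : HasDensity sparseIntervals 0 := by
  have hlog : Tendsto (fun n ↦ Nat.log 2 n + 1) atTop atTop :=
    tendsto_atTop_atTop.2 fun B ↦ ⟨2 ^ B, fun n hn ↦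
      (Nat.le_log_of_pow_le one_lt_two hn).trans (Nat.le_succ _)⟩
  have hlim : Tendsto (fun n ↦ 2 * (((Nat.log 2 n + 1 : ℕ) : ℝ) ^ 2 / 2 ^ (Nat.log 2 n + 1)))
      atTop (𝓝 0) := by
    simpa using ((tendsto_pow_const_div_const_pow_of_one_lt 2 one_lt_two).comp hlog).const_mul 2
  refine squeeze_zero' (.of_forall fun n ↦ by positivity) ?_ hlim
  filter_upwards [eventually_ne_atTop 0] with n hn
  have hpow : (2 : ℝ) ^ Nat.log 2 n ≤ n := by exact_mod_cast Nat.pow_log_le_self 2 hn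
  calc ((sparseIntervals ∩ Set.Iio n).ncard : ℝ) / n
      ≤ (Nat.log 2 n + 1 : ℕ) ^ 2 / 2 ^ Nat.log 2 n := by
        gcongr
        exact_mod_cast ncard_sparseIntervals_inter_Iio_le n
    _ = 2 * ((Nat.log 2 n + 1 : ℕ) ^ 2 / 2 ^ (Nat.log 2 n + 1)) := by
        rw [pow_succ 2]; field_simp

lemma exists_hasDensity_with_gaps (hγ : γ ∈ Set.Icc 0 1) :
    ∃ D, HasDensity D γ ∧ ∀ B, ∃ n, ∀ i ∈ Set.Ico n (n + B), i ∉ D := by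
  obtain ⟨D, hD⟩ := exists_hasDensity hγ
  exact ⟨D \ sparseIntervals, hD.diff hasDensity_sparseIntervals,
    fun B ↦ ⟨2 ^ B, fun _ hi h ↦ h.2 (Set.mem_iUnion_of_mem B hi)⟩⟩

end Density

section DigitCube

open Metric Filter Topology Module
open scoped Pointwise

lemma isCover_univ_pi {ι : Type*} [Fintype ι] [DecidableEq ι] {X : Type*} [PseudoEMetricSpace X]
    {r : ℝ≥0} {K : Set X} {A : Finset X} (h : IsCover r K (A : Set X)) :
    IsCover r (Set.univ.pi fun _ : ι ↦ K) (Fintype.piFinset fun _ : ι ↦ A : Set (ι → X)) := by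
  intro x hx
  choose a ha hxa using fun j ↦ h (hx j trivial)
  exact ⟨a, mem_coe.2 (Fintype.mem_piFinset.2 ha), edist_pi_le_iff.2 hxa⟩

variable {ι : Type*} [Fintype ι] {D : Set ℕ} {γ : ℝ}

lemma HasDensity.hasMinkowskiBound_univ_pi_digitSet (hD : HasDensity D γ) {t : ℝ}
    (ht : Fintype.card ι * γ < t) :
    HasMinkowskiBound (Set.univ.pi fun _ : ι ↦ digitSet D) t := by
  classical
  have ht0 : 0 ≤ t := (mul_nonneg (Nat.cast_nonneg _) hD.nonneg).trans ht.le
  obtain ⟨N, hN⟩ := eventually_atTop.1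
    (((hD.const_mul (Fintype.card ι : ℝ)).eventually_lt_const ht).and (eventually_gt_atTop 0))
  have hcount (n : ℕ) : (Fintype.card ι * (D ∩ Set.Iio n).ncard : ℝ) ≤
      Fintype.card ι * N + t * n := by
    rcases le_total N n with hn | hn
    · obtain ⟨hlt, hn0⟩ := hN n hn
      rw [← mul_div_assoc, div_lt_iff₀ (by positivity)] at hlt
      exact hlt.le.trans (le_add_of_nonneg_left (by positivity))
    · have hle : (D ∩ Set.Iio n).ncard ≤ N :=
        (Set.ncard_le_ncard Set.inter_subset_right (Set.finite_Iio n)).trans (by simpa using hn)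
      refine le_add_of_le_of_nonneg ?_ (by positivity)
      gcongr
  refine hasMinkowskiBound_of_dyadic (C := 2 ^ (Fintype.card ι * N : ℝ)) ht0 fun n ↦ ?_
  obtain ⟨A, hA, hAD⟩ := exists_isCover_digitSet D n
  refine ⟨Fintype.piFinset fun _ ↦ A, ?_, isCover_univ_pi hAD⟩
  calc (#(Fintype.piFinset fun _ : ι ↦ A) : ℝ)
      ≤ ((2 : ℝ) ^ (D ∩ Set.Iio n).ncard) ^ Fintype.card ι := by
        rw [Fintype.card_piFinset, prod_const, card_univ, Nat.cast_pow]
        gcongr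
        exact_mod_cast hA
    _ = 2 ^ (Fintype.card ι * (D ∩ Set.Iio n).ncard : ℝ) := by
        rw [← pow_mul, mul_comm]
        exact_mod_cast rfl
    _ ≤ 2 ^ (Fintype.card ι * N : ℝ) * 2 ^ (t * n) := by
        rw [← Real.rpow_add two_pos]
        exact Real.rpow_le_rpow_of_exponent_le one_le_two (hcount n)

lemma Icc_subset_univ_pi_digitSet_add (ι : Type*) (D : Set ℕ) :
    Set.Icc (0 : ι → ℝ) 1 ⊆
      (Set.univ.pi fun _ ↦ digitSet D) + Set.univ.pi fun _ ↦ digitSet Dᶜ := by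
  intro x hx
  choose a ha b hb hab using
    fun j ↦ Icc_subset_digitSet_add_digitSet_compl D ⟨hx.1 j, hx.2 j⟩
  exact ⟨a, fun j _ ↦ ha j, b, fun j _ ↦ hb j, funext hab⟩

lemma HasDensity.dimH_univ_pi_digitSet (hD : HasDensity D γ) :
    dimH (Set.univ.pi fun _ : ι ↦ digitSet D) = ENNReal.ofReal (Fintype.card ι * γ) := by
  have hsum : volume ((Set.univ.pi fun _ : ι ↦ digitSet D) + Set.univ.pi fun _ ↦ digitSet Dᶜ) ≠ 0 :=
    fun h ↦ by simpa [Real.volume_Icc_pi] using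
      measure_mono_null (Icc_subset_univ_pi_digitSet_add ι D) h
  refine le_antisymm ?_ ?_
  · refine ge_of_tendsto (x := 𝓝[>] (Fintype.card ι * γ))
      ENNReal.continuous_ofReal.continuousWithinAt.tendsto ?_
    filter_upwards [self_mem_nhdsWithin] with t ht
    exact (hD.hasMinkowskiBound_univ_pi_digitSet ht).dimH_le
      ((mul_nonneg (Nat.cast_nonneg _) hD.nonneg).trans (le_of_lt ht))
  · have hcont : Continuous fun t : ℝ ↦ ENNReal.ofReal (Fintype.card ι - t) :=
      ENNReal.continuous_ofReal.comp (by fun_prop)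
    have hlim : Tendsto (fun t : ℝ ↦ ENNReal.ofReal (Fintype.card ι - t))
        (𝓝[>] (Fintype.card ι - Fintype.card ι * γ)) (𝓝 (ENNReal.ofReal (Fintype.card ι * γ))) :=
      (hcont.tendsto' _ _ (by rw [sub_sub_cancel])).mono_left nhdsWithin_le_nhds
    refine le_of_tendsto hlim ?_
    filter_upwards [self_mem_nhdsWithin] with t ht
    rw [← finrank_fintype_fun_eq_card ℝ]
    have hcompl := hD.compl.hasMinkowskiBound_univ_pi_digitSet (ι := ι) (t := t)
      (by rwa [mul_one_sub])
    exact hcompl.le_dimH_of_measure_add_ne_zero volume hsum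

end DigitCube

section Construction

open Metric

variable {d : ℕ}

lemma dimH_preimage_ofLp (K : Set (Fin d → ℝ)) :
    dimH ((WithLp.ofLp : EuclideanSpace ℝ (Fin d) → Fin d → ℝ) ⁻¹' K) = dimH K :=
  (EuclideanSpace.equiv (Fin d) ℝ).dimH_preimage K

lemma isCompact_preimage_ofLp {K : Set (Fin d → ℝ)} (hK : IsCompact K) :
    IsCompact ((WithLp.ofLp : EuclideanSpace ℝ (Fin d) → Fin d → ℝ) ⁻¹' K) :=
  (EuclideanSpace.equiv (Fin d) ℝ).toHomeomorph.isCompact_preimage.2 hK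

lemma CubeFamily.isCover_carrier (F : CubeFamily d) :
    IsCover (F.scale : ℝ≥0)⁻¹ F.carrier (Set.range fun i ↦ cubePoint F.scale (F.vertex i) 0) := by
  intro ξ hξ
  obtain ⟨i, u, hu, rfl⟩ := Set.mem_iUnion.1 hξ
  refine ⟨_, ⟨i, rfl⟩, edist_pi_le_iff.2 fun j ↦ ?_⟩
  rw [edist_le_coe, ← NNReal.coe_le_coe, coe_nndist, Real.dist_eq]
  simp only [cubePoint, Pi.zero_apply, ← sub_div, add_zero, add_sub_cancel_left, abs_div,
    Nat.abs_cast, NNReal.coe_inv, NNReal.coe_natCast, abs_of_nonneg (hu.1 j)]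
  rw [← one_div]
  gcongr
  exact hu.2 j

lemma dimH_le_of_cubeFamily {K : Set (Fin d → ℝ)} {β : ℝ} (hβ : 0 ≤ β)
    (hcover : ∀ B : ℕ, ∃ F : CubeFamily d, B ≤ F.scale ∧ (F.count : ℝ) ≤ F.scale ^ β ∧
      K ⊆ F.carrier) : dimH K ≤ ENNReal.ofReal β := by
  classical
  refine dimH_le_of_isCover (C := 1) hβ fun ε hε ↦ ?_
  obtain ⟨B, hB⟩ := exists_nat_gt ε⁻¹
  obtain ⟨F, hBF, hcount, hKF⟩ := hcover B
  have hscale : ε⁻¹ ≤ F.scale := hB.le.trans (by exact_mod_cast hBF)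
  have hpos : (0 : ℝ≥0) < F.scale := Nat.cast_pos.2 (NeZero.pos _)
  refine ⟨(F.scale : ℝ≥0)⁻¹, inv_pos.2 hpos, inv_le_of_inv_le₀ hε hscale,
    univ.image fun i ↦ cubePoint F.scale (F.vertex i) 0, ?_, ?_⟩
  · have hcard : (#(univ.image fun i ↦ cubePoint F.scale (F.vertex i) 0) : ℝ) ≤ F.count := by
      exact_mod_cast card_image_le.trans_eq (card_fin _)
    rw [NNReal.coe_inv, NNReal.coe_natCast, Real.inv_rpow (Nat.cast_nonneg _),
      Real.rpow_neg (Nat.cast_nonneg _), inv_inv, one_mul]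
    exact hcard.trans hcount
  · rw [coe_image, coe_univ, Set.image_univ]
    exact F.isCover_carrier.anti hKF

lemma exists_compact_hasRestrictionBound_of_dim {β : ℝ} (hβ : 0 ≤ β) (hβd : β ≤ d) :
    ∃ E : Set (EuclideanSpace ℝ (Fin d)), IsCompact E ∧ dimH E ≤ ENNReal.ofReal β ∧
      (∀ p, 1 ≤ p → p * (2 - β / d) < 2 → HasRestrictionBound E p) ∧
      ∀ p, 1 ≤ p → p ≤ 2 → β < 2 * d * (1 - p⁻¹) → ¬ HasRestrictionBound E p := by
  rcases hβ.eq_or_lt with rfl | hβ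
  · refine ⟨∅, isCompact_empty, by simp, fun p hp hp2 ↦ ?_,
      fun p _ _ _ ↦ not_hasRestrictionBound_empty⟩
    rw [zero_div, sub_zero] at hp2
    linarith
  obtain ⟨K, μ, hK, hμK, hcover, hμ⟩ := exists_compact_of_cubeFamily hβ hβd
  refine ⟨_, isCompact_preimage_ofLp hK,
    (dimH_preimage_ofLp K).trans_le (dimH_le_of_cubeFamily hβ.le hcover), fun p hp hpβ ↦ ?_,
    fun p hp hp2 hβp ↦ not_hasRestrictionBound_of_cubeFamily hK.measurableSet hp hp2 hβp hcover⟩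
  have hβ1 : β / d ≤ 1 := div_le_one_of_le₀ hβd (Nat.cast_nonneg d)
  set ε := (2 - p * (2 - β / d)) / (2 * p) with hε
  have hε0 : 0 < ε := div_pos (sub_pos.2 hpβ) (by positivity)
  have hpε : p * ε = (2 - p * (2 - β / d)) / 2 := by rw [hε]; field_simp
  obtain ⟨C, hC, hbound⟩ := hμ ε hε0
  exact hasRestrictionBound_of_integral_norm_expSum_sq_le hμK hC (by linarith) hp (by linarith)
    hbound

theorem exists_compact_hasRestrictionBound_lt (hd : 0 < d) {p : ℝ} (hp : p ∈ Set.Icc (1 : ℝ) 2) :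
    ∃ E : Set (EuclideanSpace ℝ (Fin d)), IsCompact E ∧
      dimH E ≤ ENNReal.ofReal (2 * d * (1 - p⁻¹)) ∧
      (∀ y, 1 ≤ y → y < p → HasRestrictionBound E y) ∧
      ∀ y, p < y → y ≤ 2 → ¬ HasRestrictionBound E y := by
  have hp0 : 0 < p := zero_lt_one.trans_le hp.1
  have hpinv : p⁻¹ ≤ 1 := inv_le_one_of_one_le₀ hp.1
  have hpinv' : 2⁻¹ ≤ p⁻¹ := inv_anti₀ hp0 hp.2
  have : (0 : ℝ) < d := Nat.cast_pos.2 hd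
  obtain ⟨E, hE, hdim, hlt, hgt⟩ := exists_compact_hasRestrictionBound_of_dim (d := d)
    (β := 2 * d * (1 - p⁻¹)) (mul_nonneg (by positivity) (sub_nonneg.2 hpinv)) (by nlinarith)
  refine ⟨E, hE, hdim, fun y hy hyp ↦ hlt y hy ?_, fun y hpy hy ↦
    hgt y (hp.1.trans hpy.le) hy ?_⟩
  · calc y * (2 - 2 * d * (1 - p⁻¹) / d) = 2 * (y / p) := by field_simp; ring
      _ < 2 := by linarith [(div_lt_one hp0).2 hyp]
  · have hinv : y⁻¹ < p⁻¹ := inv_strictAnti₀ hp0 hpy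
    gcongr

lemma exists_resonant_finset (j₀ : Fin d) {D : Set ℕ}
    (hgap : ∀ B, ∃ n, ∀ i ∈ Set.Ico n (n + B), i ∉ D) (M : ℕ) :
    ∃ A : Finset (Fin d → ℤ), M ≤ #A ∧ ∀ x ∈ A, ∀ ξ ∈ Set.univ.pi fun _ ↦ digitSet D,
      ∃ n : ℤ, |∑ j, x j * ξ j - n| ≤ 1 / 6 := by
  classical
  obtain ⟨n, hn⟩ := hgap (M + 3)
  have hinj : Function.Injective fun k : ℕ ↦ (Pi.single j₀ ((k : ℤ) * 2 ^ n) : Fin d → ℤ) :=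
    fun k l hkl ↦ by simpa using Pi.single_injective j₀ hkl
  refine ⟨(range M).image fun k : ℕ ↦ Pi.single j₀ ((k : ℤ) * 2 ^ n), ?_, fun x hx ξ hξ ↦ ?_⟩
  · rw [card_image_of_injective _ hinj, card_range]
  obtain ⟨k, hk, rfl⟩ := mem_image.1 hx
  obtain ⟨m, hm⟩ := exists_int_abs_two_pow_mul_sub_le hn (hξ j₀ trivial)
  have hsum : ∑ j, (Pi.single j₀ ((k : ℤ) * 2 ^ n) : Fin d → ℤ) j * ξ j = k * (2 ^ n * ξ j₀) := by
    rw [sum_eq_single j₀ (fun j _ hj ↦ by simp [hj]) (by simp)]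
    push_cast [Pi.single_eq_same]
    ring
  have hkM : (k : ℝ) ≤ 2 ^ M := by
    exact_mod_cast (mem_range.1 hk).le.trans M.lt_two_pow_self.le
  refine ⟨k * m, ?_⟩
  calc |∑ j, (Pi.single j₀ ((k : ℤ) * 2 ^ n) : Fin d → ℤ) j * ξ j - (k * m : ℤ)|
      = k * |2 ^ n * ξ j₀ - m| := by
        rw [hsum, Int.cast_mul, Int.cast_natCast, ← mul_sub, abs_mul, Nat.abs_cast]
    _ ≤ 2 ^ M * (2 ^ (M + 3))⁻¹ := by gcongr
    _ = 1 / 8 := by rw [pow_add]; field_simp; norm_num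
    _ ≤ 1 / 6 := by norm_num

theorem exists_compact_dimH_eq_not_hasRestrictionBound (hd : 0 < d) {α : ℝ}
    (hα : α ∈ Set.Icc (0 : ℝ) d) :
    ∃ E : Set (EuclideanSpace ℝ (Fin d)), IsCompact E ∧ E.Nonempty ∧
      dimH E = ENNReal.ofReal α ∧ ∀ p, 1 < p → ¬ HasRestrictionBound E p := by
  obtain ⟨D, hD, hgap⟩ := exists_hasDensity_with_gaps (γ := α / d)
    ⟨div_nonneg hα.1 d.cast_nonneg, div_le_one_of_le₀ hα.2 d.cast_nonneg⟩
  have hK : IsCompact (Set.univ.pi fun _ : Fin d ↦ digitSet D) :=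
    isCompact_univ_pi fun _ ↦ isCompact_digitSet D
  refine ⟨_, isCompact_preimage_ofLp hK, ⟨0, fun _ _ ↦ zero_mem_digitSet D⟩, ?_, fun p hp ↦
    not_hasRestrictionBound_of_resonant hK hp (exists_resonant_finset ⟨0, hd⟩ hgap)⟩
  rw [dimH_preimage_ofLp, hD.dimH_univ_pi_digitSet, Fintype.card_fin,
    mul_div_cancel₀ α (by positivity)]

lemma pres_eq {E : Set (EuclideanSpace ℝ (Fin d))} (hE : E.Nonempty) {p : ℝ}
    (hp : p ∈ Set.Icc (1 : ℝ) 2) (hlt : ∀ y, 1 ≤ y → y < p → HasRestrictionBound E y)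
    (hgt : ∀ y, p < y → y ≤ 2 → ¬ HasRestrictionBound E y) : pres E = p := by
  have hone := hasRestrictionBound_one hE
  refine csSup_eq_of_forall_le_of_forall_lt_exists_gt ⟨1, ⟨le_rfl, one_le_two⟩, hone⟩
    (fun y hy ↦ not_lt.1 fun hpy ↦ hgt y hpy hy.1.2 hy.2) fun w hw ↦ ?_
  rcases lt_or_ge w 1 with hw1 | hw1
  · exact ⟨1, ⟨⟨le_rfl, one_le_two⟩, hone⟩, hw1⟩
  · obtain ⟨y, hwy, hyp⟩ := exists_between hw
    have hy1 := hw1.trans hwy.le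
    exact ⟨y, ⟨⟨hy1, hyp.le.trans hp.2⟩, hlt y hy1 hyp⟩, hwy⟩

end Construction

end FourierRestriction

/-- For every `α ∈ [0,d]` and `p ∈ [1, 2d/(2d-α)]` there is a compact set `E ⊆ ℝ^d` of
Hausdorff dimension `α` with `p_res(E) = p`. -/
theorem exists_compact_dimH_eq_pres_eq (d : ℕ) (hd : 0 < d)
    (α : ℝ) (hα : α ∈ Set.Icc (0 : ℝ) d)
    (p : ℝ) (hp : p ∈ Set.Icc (1 : ℝ) (2 * d / (2 * d - α))) :
    ∃ E : Set (EuclideanSpace ℝ (Fin d)),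
      IsCompact E ∧ dimH E = ENNReal.ofReal α ∧ pres E = p := by
  have hd0 : (0 : ℝ) < d := Nat.cast_pos.2 hd
  have hp0 : 0 < p := zero_lt_one.trans_le hp.1
  have hpα : p * (2 * d - α) ≤ 2 * d := (le_div_iff₀ (by linarith [hα.2])).1 hp.2
  have hp2 : p ≤ 2 := by nlinarith [hα.2]
  have hβα : 2 * d * (1 - p⁻¹) ≤ α := by
    have hdiv : 2 * d - α ≤ 2 * d / p := (le_div_iff₀' hp0).2 hpα
    rw [mul_one_sub, ← div_eq_mul_inv]
    linarith
  obtain ⟨E₁, hE₁, hdim₁, hlt₁, hgt₁⟩ :=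
    FourierRestriction.exists_compact_hasRestrictionBound_lt hd ⟨hp.1, hp2⟩
  obtain ⟨E₂, hE₂, hne₂, hdim₂, hgt₂⟩ :=
    FourierRestriction.exists_compact_dimH_eq_not_hasRestrictionBound hd hα
  refine ⟨E₁ ∪ E₂, hE₁.union hE₂, ?_, FourierRestriction.pres_eq (hne₂.mono Set.subset_union_right)
    ⟨hp.1, hp2⟩ (fun y hy hyp ↦ (hlt₁ y hy hyp).mono Set.subset_union_left)
    fun y hpy hy hbound ↦ ?_⟩
  · rw [dimH_union, hdim₂]
    exact max_eq_right (hdim₁.trans (ENNReal.ofReal_le_ofReal hβα))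
  · exact hbound.of_union.elim (hgt₁ y hpy hy) (hgt₂ y (hp.1.trans_lt hpy))
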